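/- Let r, d, s be integers with r ≥ 4, r−1 ≤ s ≤ 2r−4, and d ≫ s. Let C ⊂ P^r be an irreducible, reduced, nondegenerate projective curve of degree d with general hyperplane section Γ, and assume C is contained in an integral projective surface S ⊂ P^r of degree s and sectional genus π. Then h_Γ(i) ≥ h_{r,d,s,π}(i) for every i ≥ 1. -/

import Mathlib

/-!
The surface `S` and the curve `C` are studied through their function fields. Dehomogenizing by the
first coordinate sends forms of degree `n` to the power `V ^ n` of the space `V` of linear forms,
inside the function field `F₀` of `S` (resp. `W ^ n` inside the function field `L₀` of `C`). The
Hilbert functions are the dimensions of these powers.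

*Generic section.* Let `k₀ = ℂ(x₀, x₁)` and extend `F₀`, `L₀` by the variables `x₀, x₁`. For general
linear forms `p₀, p₁, q`, the generic form `θᵢ = pᵢ + xᵢ q` generates a field `K = k₀(θᵢ)`, and the
section of `S` by the generic hyperplane of the pencil spanned by the first coordinate and `θᵢ` is
a curve over `K`, with coordinate ring spanned by the powers of `K V`; the section of `C` is finite over
`K`. A monodromy argument (`monodromy`) shows that the projection by `(θ₀, θ₁)` has no proper
intermediate field, so that the generic hyperplane section of the surface section is in uniform
position; a consequence (`algClosedIn_dichotomy`) is that `K` is algebraically closed in the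
extended function field of `S` for at least one `i`.

*Bounds over `K`.* Two inputs replace the classical geometry of points in uniform position: the
inequality `dim X + dim Y ≤ dim (X Y) + 1` for subspaces of a field (`hopf_of_closed`,
`hopf_of_minimal`), and Riemann–Roch for graded modules over `K[x, y]`
(`SectionModule.riemann_roch`). They give Clifford's inequality (`clifford`), which makes the
surface section nonspecial since `s ≤ 2 r - 4`, and Castelnuovo's lower bound for the growth of
its Hilbert function (`castelnuovo_growth`). Applying Clifford to the ideal of the curve section inside
the surface section gives the bound by `hF` (`section_bound`).

*Specialization.* The generic bound provides enough forms, defined over `ℂ`, that are independent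
over the polynomials in `θᵢ` (`generic_bound`). A nonvanishing minor then
shows that these forms stay independent modulo a general linear form
(`exists_generic_no_multiple`), and comparison with saturated ideals gives the bound for
`sect IC ℓ` (`Chart.le_hilbZ_sect`).
-/

open scoped BigOperators

noncomputable section

/-- The homogeneous coordinate ring of `ℙ^{n-1}` over `ℂ`: polynomials in `n` variables. -/
abbrev MPoly (n : ℕ) : Type := MvPolynomial (Fin n) ℂ

/-- An ideal is homogeneous if it contains all homogeneous components of its members. -/
def IsHomogIdeal {n : ℕ} (I : Ideal (MPoly n)) : Prop :=
  ∀ f ∈ I, ∀ k : ℕ, MvPolynomial.homogeneousComponent k f ∈ I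

/-- The degree-`k` graded piece of the homogeneous coordinate ring of the subscheme `V(I)`. -/
def degQ {n : ℕ} (I : Ideal (MPoly n)) (k : ℕ) : Submodule ℂ (MPoly n ⧸ I) :=
  (MvPolynomial.homogeneousSubmodule (Fin n) ℂ k).map (Ideal.Quotient.mkₐ ℂ I).toLinearMap

/-- The graded pieces, indexed by `ℤ` (zero in negative degrees). -/
def degQZ {n : ℕ} (I : Ideal (MPoly n)) (t : ℤ) : Submodule ℂ (MPoly n ⧸ I) :=
  if 0 ≤ t then degQ I t.toNat else ⊥

/-- The Hilbert function of the closed subscheme `V(I) ⊆ ℙ^{n-1}`. -/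
def hilbNat {n : ℕ} (I : Ideal (MPoly n)) (t : ℤ) : ℕ :=
  Module.finrank ℂ (degQZ I t)

/-- The Hilbert function, as an integer-valued function. -/
def hilbZ {n : ℕ} (I : Ideal (MPoly n)) (t : ℤ) : ℤ := (hilbNat I t : ℤ)

/-- The irrelevant maximal ideal `(x_0, …, x_{n-1})`. -/
def mId (n : ℕ) : Ideal (MPoly n) := Ideal.span (Set.range MvPolynomial.X)

/-- The space of degree-`t` graded module homomorphisms `m^k → R/I`. -/
def gradedHomSub {n : ℕ} (I : Ideal (MPoly n)) (k : ℕ) (t : ℤ) :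
    Submodule ℂ ((mId n ^ k : Ideal (MPoly n)) →ₗ[MPoly n] (MPoly n ⧸ I)) where
  carrier := {φ | ∀ (j : ℕ) (f : MPoly n) (hf : f ∈ mId n ^ k),
    f ∈ MvPolynomial.homogeneousSubmodule (Fin n) ℂ j → φ ⟨f, hf⟩ ∈ degQZ I ((j : ℤ) + t)}
  add_mem' := by
    intro a b ha hb j f hf hj
    simpa using Submodule.add_mem _ (ha j f hf hj) (hb j f hf hj)
  zero_mem' := by
    intro j f hf hj
    simpa using Submodule.zero_mem _
  smul_mem' := by
    intro c φ hφ j f hf hj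
    simpa using Submodule.smul_mem _ c (hφ j f hf hj)

/-- `h⁰(X, 𝒪_X(t))` for `X = V(I)`: the stable value of the dimensions of the graded Hom
modules `Hom(m^k, R/I)_t` (the Deligne formula for twisted global sections). -/
def h0Nat {n : ℕ} (I : Ideal (MPoly n)) (t : ℤ) : ℕ :=
  ⨆ k : ℕ, Module.finrank ℂ (gradedHomSub I k t)

/-- `h¹(ℙ^{n-1}, 𝓘_X(t)) = h⁰(X, 𝒪_X(t)) − h_X(t)` (valid for the saturated ideal of `X`). -/
def h1INat {n : ℕ} (I : Ideal (MPoly n)) (t : ℤ) : ℕ := h0Nat I t - hilbNat I t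

/-- The dimension over `ℂ` of the Hartshorne–Rao module `M(X) = ⊕_t H¹(ℙ, 𝓘_X(t))`. -/
def raoDim {n : ℕ} (I : Ideal (MPoly n)) : ℕ := ∑ᶠ t : ℤ, h1INat I t

/-- Arithmetically Cohen–Macaulay (for an integral curve): the Hartshorne–Rao module vanishes. -/
def IsACM {n : ℕ} (I : Ideal (MPoly n)) : Prop := ∀ t : ℤ, h0Nat I t = hilbNat I t

/-- Saturation of an ideal with respect to the irrelevant maximal ideal. -/
def satIdeal {n : ℕ} (I : Ideal (MPoly n)) : Ideal (MPoly n) where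
  carrier := {f | ∃ k : ℕ, ∀ j : Fin n, MvPolynomial.X j ^ k * f ∈ I}
  zero_mem' := ⟨0, fun j => by simpa using I.zero_mem⟩
  add_mem' := by
    rintro f g ⟨k, hk⟩ ⟨l, hl⟩
    refine ⟨k + l, fun j => ?_⟩
    have h1 : MvPolynomial.X (R := ℂ) j ^ (k + l) * (f + g)
        = MvPolynomial.X j ^ l * (MvPolynomial.X j ^ k * f)
          + MvPolynomial.X j ^ k * (MvPolynomial.X j ^ l * g) := by ring
    rw [h1]
    exact I.add_mem (I.mul_mem_left _ (hk j)) (I.mul_mem_left _ (hl j))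
  smul_mem' := by
    rintro c f ⟨k, hk⟩
    refine ⟨k, fun j => ?_⟩
    have h1 : MvPolynomial.X (R := ℂ) j ^ k * (c • f) = c * (MvPolynomial.X j ^ k * f) := by
      rw [smul_eq_mul]; ring
    rw [h1]
    exact I.mul_mem_left _ (hk j)

/-- The hyperplane section of `V(I)` by the hyperplane `{ℓ = 0}`, as a closed subscheme
(its saturated homogeneous ideal). -/
def sect {n : ℕ} (I : Ideal (MPoly n)) (ℓ : MPoly n) : Ideal (MPoly n) :=
  satIdeal (I ⊔ Ideal.span {ℓ})

/-- A property `P` holds for a *general* `k`-tuple of linear forms (hyperplanes): it holds on a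
nonempty Zariski-open subset of the space of coefficients. -/
def GenericForms (n k : ℕ) (P : (Fin k → MPoly n) → Prop) : Prop :=
  ∃ Q : MvPolynomial (Fin k × Fin n) ℂ, Q ≠ 0 ∧
    ∀ c : Fin k → Fin n → ℂ, MvPolynomial.eval (fun p => c p.1 p.2) Q ≠ 0 →
      P fun t => ∑ j : Fin n, MvPolynomial.C (c t j) * MvPolynomial.X j

/-- `V(I) ⊆ ℙ^{n-1}` is nondegenerate: contained in no hyperplane. -/
def Nondeg {n : ℕ} (I : Ideal (MPoly n)) : Prop :=
  ∀ f ∈ MvPolynomial.homogeneousSubmodule (Fin n) ℂ 1, f ∈ I → f = 0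

/-- `V(I)` is an integral curve: `I` homogeneous prime, with cone of Krull dimension 2. -/
def IsCurve {n : ℕ} (I : Ideal (MPoly n)) : Prop :=
  IsHomogIdeal I ∧ I.IsPrime ∧ ringKrullDim (MPoly n ⧸ I) = 2

/-- `V(I)` is an integral surface: `I` homogeneous prime, with cone of Krull dimension 3. -/
def IsSurface {n : ℕ} (I : Ideal (MPoly n)) : Prop :=
  IsHomogIdeal I ∧ I.IsPrime ∧ ringKrullDim (MPoly n ⧸ I) = 3

/-- The curve `V(I)` has degree `d` and arithmetic genus `g`: its Hilbert polynomial is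
`d·t + 1 − g`. -/
def CurveInv {n : ℕ} (I : Ideal (MPoly n)) (d g : ℤ) : Prop :=
  ∃ N : ℤ, ∀ t : ℤ, N ≤ t → hilbZ I t = d * t + 1 - g

/-- The surface `V(I)` has degree `s`, sectional genus `π` and arithmetic genus `pa`:
its Hilbert polynomial is `s·choose(t+1, 2) + (1 − π)·t + 1 + pa`. -/
def SurfInv {n : ℕ} (I : Ideal (MPoly n)) (s π pa : ℤ) : Prop :=
  ∃ N : ℤ, ∀ t : ℤ, N ≤ t → hilbZ I t = s * (t * (t + 1) / 2) + (1 - π) * t + 1 + pa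

/-- `V(IC)` is not contained in any integral surface of degree `< s`. -/
def NotInSurfDegLT {n : ℕ} (IC : Ideal (MPoly n)) (s : ℤ) : Prop :=
  ∀ (T : Ideal (MPoly n)) (s' π' pa' : ℤ), IsSurface T → SurfInv T s' π' pa' → s' < s →
    ¬ T ≤ IC

/-- `V(IC)` is not contained in any integral surface of degree `s` with sectional genus `> π`. -/
def NotInSurfSecGT {n : ℕ} (IC : Ideal (MPoly n)) (s π : ℤ) : Prop :=
  ∀ (T : Ideal (MPoly n)) (π' pa' : ℤ), IsSurface T → SurfInv T s π' pa' → π < π' →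
    ¬ T ≤ IC

/-- `V(IC)` is not contained in any integral surface of degree `s` with arithmetic genus `< p`. -/
def NotInSurfGenLT {n : ℕ} (IC : Ideal (MPoly n)) (s p : ℤ) : Prop :=
  ∀ (T : Ideal (MPoly n)) (π' pa' : ℤ), IsSurface T → SurfInv T s π' pa' → pa' < p →
    ¬ T ≤ IC

/-- `binom2 z = z.choose 2` for integers. -/
def binom2 (z : ℤ) : ℤ := z * (z - 1) / 2

/-- The bound `G*(r,d,s,π,p)` of Di Gennaro–Franco, with `m = (d-1)/s`, `ε = (d-1) % s`. -/
def Gstar (r d s π p : ℤ) : ℤ :=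
  binom2 ((d - 1) / s) * s + ((d - 1) / s) * ((d - 1) % s + π) - p
    + max 0 ((2 * π - (s - 1 - (d - 1) % s)) / 2)

/-- The numerical function `h_{r,d,s,π}`. -/
def hF (r d s π : ℤ) (i : ℤ) : ℤ :=
  if 1 ≤ i ∧ i ≤ (d - 1) / s then
    1 - π + i * s - max 0 ((s - r + 1) - π - i + 1)
  else if i = (d - 1) / s + 1 then
    d - max 0 ((2 * π - (s - 1 - (d - 1) % s)) / 2)
  else if (d - 1) / s + 2 ≤ i then d
  else 0

/-- The threshold `d₀(r)`. -/
def d0 (r : ℤ) : ℤ :=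
  if r ≤ 6 then 16 * (r - 2) * (2 * r - 3)
  else if r ≤ 11 then 8 * (r - 2) ^ 3
  else 2 ^ (r.toNat + 1)

end
noncomputable section

/-- The affine cone of `V(I)`: common zeroes of the elements of `I`. -/
def zeroCone {n : ℕ} (I : Ideal (MPoly n)) : Set (Fin n → ℂ) :=
  {a | ∀ f ∈ I, MvPolynomial.eval a f = 0}

/-- Jacobian-criterion smoothness: at every nonzero point of the affine cone (of dimension `c`)
the gradients of the equations span a subspace of dimension `n - c`. -/
def IsSmooth {n : ℕ} (I : Ideal (MPoly n)) (c : ℕ) : Prop :=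
  ∀ a ∈ zeroCone I, a ≠ 0 →
    Module.finrank ℂ (Submodule.span ℂ
      {g : Fin n → ℂ | ∃ f ∈ I, g = fun j => MvPolynomial.eval a (MvPolynomial.pderiv j f)})
      = n - c

/-- Castelnuovo's bound for the genus of a nondegenerate integral curve of degree `d`
in `ℙ^R`. -/
def castelG (R d : ℤ) : ℤ :=
  binom2 ((d - 1) / (R - 1)) * (R - 1) + ((d - 1) / (R - 1)) * ((d - 1) % (R - 1))

/-- The ideal of the projective cone (from `ℙ^{n-1}` to `ℙ^n`) over `V(I)`. -/
def coneIdeal {n : ℕ} (I : Ideal (MPoly n)) : Ideal (MPoly (n + 1)) :=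
  Ideal.map (MvPolynomial.rename (Fin.castSucc : Fin n → Fin (n + 1))) I

/-- `J` is the (saturated homogeneous) ideal of a line in `ℙ^{n-1}`: it is generated by
`n - 2` linearly independent linear forms. -/
def IsLineIdeal {n : ℕ} (J : Ideal (MPoly n)) : Prop :=
  ∃ V : Submodule ℂ (MPoly n), V ≤ MvPolynomial.homogeneousSubmodule (Fin n) ℂ 1 ∧
    Module.finrank ℂ V = n - 2 ∧ J = Ideal.span (V : Set (MPoly n))

/-- `V(T) ⊆ ℙ^{n-1}` is a smooth rational normal scroll surface: a smooth nondegenerate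
integral surface of minimal degree `n - 2` (with sectional and arithmetic genus `0`)
containing a line (which rules out the Veronese surface). -/
def IsSmoothRNScroll {n : ℕ} (T : Ideal (MPoly n)) : Prop :=
  IsSurface T ∧ Nondeg T ∧ IsSmooth T 3 ∧ SurfInv T ((n : ℤ) - 2) 0 0 ∧
    ∃ J : Ideal (MPoly n), IsLineIdeal J ∧ T ≤ J

/-- The linear projection on points determined by the matrix `L`. -/
def projPt {nb ns : ℕ} (L : Fin ns → Fin nb → ℂ) (a : Fin nb → ℂ) : Fin ns → ℂ :=
  fun t => ∑ j, L t j * a j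

/-- The substitution algebra homomorphism determined by the matrix `L` (pullback of the
linear projection `ℙ^{nb-1} ⇢ ℙ^{ns-1}`). -/
def substHom {nb ns : ℕ} (L : Fin ns → Fin nb → ℂ) : MPoly ns →ₐ[ℂ] MPoly nb :=
  MvPolynomial.aeval fun t => ∑ j, MvPolynomial.C (L t j) * MvPolynomial.X j

/-- The linear projection given by `L` maps `V(I')` isomorphically onto `V(I)`: the center of
projection misses `V(I')`, `V(I)` is the image, and the projection is (projectively) bijective
from `V(I')` onto `V(I)`. -/
def IsIsoProjection {nb ns : ℕ} (L : Fin ns → Fin nb → ℂ)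
    (I' : Ideal (MPoly nb)) (I : Ideal (MPoly ns)) : Prop :=
  I = I'.comap (substHom L) ∧
  (∀ a ∈ zeroCone I', a ≠ 0 → projPt L a ≠ 0) ∧
  (∀ a ∈ zeroCone I', ∀ b ∈ zeroCone I', a ≠ 0 → b ≠ 0 →
    (∃ c : ℂ, c ≠ 0 ∧ projPt L a = c • projPt L b) → ∃ c : ℂ, c ≠ 0 ∧ a = c • b) ∧
  (∀ y ∈ zeroCone I, y ≠ 0 → ∃ a ∈ zeroCone I', a ≠ 0 ∧ ∃ c : ℂ, c ≠ 0 ∧ y = c • projPt L a)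

/-- `t` bounds the Castelnuovo–Mumford regularity of the surface `V(I) ⊆ ℙ^{n-1}`:
for every `t' ≥ t`, `H^i(ℙ, 𝓘(t'-i)) = 0` for all `i ≥ 1`, expressed through the standard
inductive characterization by successive general hyperplane sections. -/
def IsRegBound {n : ℕ} (I : Ideal (MPoly n)) (t : ℤ) : Prop :=
  GenericForms n 2 fun L => ∀ t' : ℤ, t ≤ t' →
    h1INat I (t' - 1) = 0 ∧ h1INat (sect I (L 0)) (t' - 1) = 0 ∧
      h1INat (sect (sect I (L 0)) (L 1)) (t' - 1) = 0

end

/-! ### Linear algebra of finite-dimensional subspaces -/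

section

open Module

section Util
variable {k E F : Type*} [Field k] [AddCommGroup E] [Module k E] [AddCommGroup F] [Module k F]

theorem finrank_map_inj (f : E →ₗ[k] F) (hf : Function.Injective f) (p : Submodule k E) :
    finrank k (p.map f) = finrank k p :=
  (LinearEquiv.finrank_eq (Submodule.equivMapOfInjective f hf p)).symm

theorem finrank_map_add_inf_ker (f : E →ₗ[k] F) (p : Submodule k E) [FiniteDimensional k p] :
    finrank k (p.map f) + finrank k ↥(p ⊓ LinearMap.ker f) = finrank k p := by
  have h := LinearMap.finrank_range_add_finrank_ker (f.domRestrict p)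
  rw [LinearMap.range_domRestrict] at h
  rw [← h, LinearMap.ker_domRestrict]
  congr 1
  rw [← finrank_map_inj p.subtype p.injective_subtype, Submodule.map_comap_subtype]

theorem map_eq_bot_inj (f : E →ₗ[k] F) (hf : Function.Injective f) {p : Submodule k E}
    (h : p.map f = ⊥) : p = ⊥ := by
  rw [Submodule.eq_bot_iff]
  intro x hx
  apply hf
  have : f x ∈ p.map f := ⟨x, hx, rfl⟩
  rw [h] at this
  simpa using this

end Util

section Util2
variable {k F : Type*} [Field k] [CommRing F] [Algebra k F]

instance finite_mul_submodule (A B : Submodule k F) [FiniteDimensional k A]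
    [FiniteDimensional k B] : FiniteDimensional k ↥(A * B) :=
  Module.Finite.iff_fg.2 ((Module.Finite.iff_fg.1 ‹_›).mul (Module.Finite.iff_fg.1 ‹_›))

instance finite_pow_submodule (A : Submodule k F) [FiniteDimensional k A] (n : ℕ) :
    FiniteDimensional k ↥(A ^ n) :=
  Module.Finite.iff_fg.2 ((Module.Finite.iff_fg.1 ‹_›).pow n)

end Util2

end

/-! ### Dimension of products of subspaces of a field -/

section

open Module

/-- Either `dim X + dim Y ≤ dim (X Y) + 1`, or `X Y` contains a nonzero subspace stable under a
nontrivial subalgebra. The proof is the Dyson transform: `(X, Y)` is replaced by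
`(X ∩ e⁻¹ Y, Y + e X)`. -/
theorem hopf_dichotomy {k F : Type*} [Field k] [Field F] [Algebra k F] :
    ∀ (n : ℕ) (X Y : Submodule k F) [FiniteDimensional k X] [FiniteDimensional k Y],
      finrank k X = n → X ≠ ⊥ → Y ≠ ⊥ →
      finrank k X + finrank k Y ≤ finrank k ↥(X * Y) + 1 ∨
      ∃ H : Subalgebra k F, H ≠ ⊥ ∧ ∃ Y' : Submodule k F, Y' ≠ ⊥ ∧ Y' ≤ X * Y ∧
        ∀ h ∈ H, ∀ y ∈ Y', h * y ∈ Y' := by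
  intro n
  induction n using Nat.strong_induction_on with
  | _ n ih =>
  intro X Y _ _ hn hX hY
  by_cases hcase : ∃ x0 ∈ X, x0 ≠ 0 ∧ ∃ y0 ∈ Y, ∃ x' ∈ X, x' * (x0⁻¹ * y0) ∉ Y
  · obtain ⟨x0, hx0, hx0', y0, hy0, x', hx', hne⟩ := hcase
    set e := x0⁻¹ * y0 with he
    have he0 : e ≠ 0 := by
      rintro h; apply hne; rw [h]; simp
    let f : F →ₗ[k] F := LinearMap.mulLeft k e
    have hf : Function.Injective f := fun a b h => mul_left_cancel₀ he0 h
    let X1 := X ⊓ Y.comap f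
    let Y1 := Y ⊔ X.map f
    have hX1 : x0 ∈ X1 := ⟨hx0, by
      change e * x0 ∈ Y
      rw [he]; convert hy0 using 1; field_simp⟩
    have hX1b : X1 ≠ ⊥ := fun h => hx0' (by rw [h] at hX1; simpa using hX1)
    have hlt : X1 < X := lt_of_le_of_ne inf_le_left (fun h => hne (by
      have : x' ∈ X1 := h ▸ hx'
      have := this.2
      rwa [mul_comm]))
    have hmap : X1.map f = Y ⊓ X.map f := by
      ext z; constructor
      · rintro ⟨w, ⟨hw1, hw2⟩, rfl⟩
        exact ⟨hw2, w, hw1, rfl⟩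
      · rintro ⟨hz, w, hw, rfl⟩
        exact ⟨w, ⟨hw, hz⟩, rfl⟩
    have d1 : finrank k ↥(X1.map f) = finrank k X1 := finrank_map_inj _ hf X1
    have d2 : finrank k ↥(X.map f) = finrank k X := finrank_map_inj _ hf X
    have d3 := Submodule.finrank_sup_add_finrank_inf_eq Y (X.map f)
    rw [← hmap, d1, d2] at d3
    have hle : X1 * Y1 ≤ X * Y := by
      rw [Submodule.mul_le]
      rintro a ⟨ha1, ha2⟩ b hb
      obtain ⟨y, hy, _, ⟨w, hw, rfl⟩, rfl⟩ := Submodule.mem_sup.1 hb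
      rw [mul_add]
      refine add_mem (Submodule.mul_mem_mul ha1 hy) ?_
      have : a * f w = w * f a := by simp [f]; ring
      rw [this]
      exact Submodule.mul_mem_mul hw ha2
    have hY1b : Y1 ≠ ⊥ := fun h => hY (le_bot_iff.1 (h ▸ le_sup_left))
    have hfin : finrank k X1 < n := hn ▸ Submodule.finrank_lt_finrank_of_lt hlt
    have hmono := Submodule.finrank_mono hle
    have : FiniteDimensional k X1 := Submodule.finiteDimensional_of_le hlt.le
    rcases ih _ hfin X1 Y1 rfl hX1b hY1b with h | ⟨H, hH, Y', h1, h2, h3⟩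
    · left
      have : finrank k ↥(Y ⊔ X.map f) = finrank k Y1 := rfl
      omega
    · exact Or.inr ⟨H, hH, Y', h1, h2.trans hle, h3⟩
  · push Not at hcase
    obtain ⟨x0, hx0, hx0'⟩ := Submodule.exists_mem_ne_zero_of_ne_bot hX
    let Y' := Y.map (LinearMap.mulLeft k x0)
    have hinj : Function.Injective (LinearMap.mulLeft k x0) := fun a b h => mul_left_cancel₀ hx0' h
    have hY'le : Y' ≤ X * Y := by
      rintro _ ⟨y, hy, rfl⟩; exact Submodule.mul_mem_mul hx0 hy
    have dY : finrank k Y' = finrank k Y := finrank_map_inj _ hinj Y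
    have hmono := Submodule.finrank_mono hY'le
    by_cases h1 : finrank k X ≤ 1
    · left; omega
    · right
      let H : Subalgebra k F :=
        { carrier := {h | ∀ y ∈ Y, h * y ∈ Y}
          mul_mem' := fun {a b} ha hb y hy => by rw [mul_assoc]; exact ha _ (hb _ hy)
          add_mem' := fun {a b} ha hb y hy => by rw [add_mul]; exact add_mem (ha _ hy) (hb _ hy)
          algebraMap_mem' := fun c y hy => by
            rw [← Algebra.smul_def]; exact Y.smul_mem _ hy }
      refine ⟨H, ?_, Y', ?_, hY'le, ?_⟩
      · intro hbot
        apply h1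
        have : X ≤ Submodule.span k {x0} := by
          intro x hx
          have hm : x * x0⁻¹ ∈ H := fun y hy => by
            have := hcase x0 hx0 hx0' y hy x hx
            rwa [mul_assoc]
          rw [hbot, Algebra.mem_bot] at hm
          obtain ⟨c, hc⟩ := hm
          rw [Submodule.mem_span_singleton]
          refine ⟨c, ?_⟩
          rw [Algebra.smul_def, hc]; field_simp
        exact (Submodule.finrank_mono this).trans (finrank_span_singleton hx0').le
      · intro hb
        exact hY (map_eq_bot_inj _ hinj hb)
      · rintro h hh _ ⟨y, hy, rfl⟩
        exact ⟨h * y, hh y hy, by simp; ring⟩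

/-- The hypothesis `hcl` says that `k` has no nontrivial finite-dimensional extension inside `F`. -/
theorem hopf_of_closed {k F : Type*} [Field k] [Field F] [Algebra k F]
    (hcl : ∀ H : Subalgebra k F, FiniteDimensional k H → H = ⊥)
    (X Y : Submodule k F) [FiniteDimensional k X] [FiniteDimensional k Y]
    (hX : X ≠ ⊥) (hY : Y ≠ ⊥) :
    finrank k X + finrank k Y ≤ finrank k ↥(X * Y) + 1 := by
  rcases hopf_dichotomy _ X Y rfl hX hY with h | ⟨H, hH, Y', hY', hle, hst⟩
  · exact h
  · exfalso
    apply hH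
    apply hcl
    obtain ⟨y, hy, hy0⟩ := Submodule.exists_mem_ne_zero_of_ne_bot hY'
    have : FiniteDimensional k Y' := Submodule.finiteDimensional_of_le hle
    let f : H →ₗ[k] Y' :=
      { toFun := fun h => ⟨h.1 * y, hst _ h.2 _ hy⟩
        map_add' := fun a b => by ext; simp [add_mul]
        map_smul' := fun a b => by ext; simp }
    refine FiniteDimensional.of_injective f fun a b hab => ?_
    have := congrArg Subtype.val hab
    exact Subtype.ext (mul_right_cancel₀ hy0 this)

theorem hopf_of_minimal {k F : Type*} [Field k] [Field F] [Algebra k F] [FiniteDimensional k F]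
    (hmin : ∀ E : IntermediateField k F, E = ⊥ ∨ E = ⊤)
    (X Y : Submodule k F) (hX : X ≠ ⊥) (hY : Y ≠ ⊥) :
    finrank k X + finrank k Y ≤ finrank k ↥(X * Y) + 1 ∨ X * Y = ⊤ := by
  rcases hopf_dichotomy _ X Y rfl hX hY with h | ⟨H, hH, Y', hY', hle, hst⟩
  · exact Or.inl h
  · right
    obtain ⟨h, hh, hne⟩ : ∃ h ∈ H, h ∉ (⊥ : Subalgebra k F) := by
      by_contra hcon
      push Not at hcon
      exact hH (le_bot_iff.1 hcon)
    obtain ⟨y, hy, hy0⟩ := Submodule.exists_mem_ne_zero_of_ne_bot hY'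
    have htop : IntermediateField.adjoin k {h} = ⊤ := by
      refine (hmin _).resolve_left fun hb => hne ?_
      have : h ∈ IntermediateField.adjoin k {h} := IntermediateField.mem_adjoin_simple_self k h
      rw [hb] at this
      exact this
    have hHtop : ∀ x : F, x ∈ H := by
      intro x
      have hx : x ∈ IntermediateField.adjoin k {h} := htop ▸ IntermediateField.mem_top
      rw [← IntermediateField.mem_toSubalgebra,
        IntermediateField.adjoin_simple_toSubalgebra_of_isAlgebraic
          (Algebra.IsAlgebraic.isAlgebraic h)] at hx
      exact Algebra.adjoin_le (Set.singleton_subset_iff.2 hh) hx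
    rw [eq_top_iff]
    intro x _
    have := hst (x * y⁻¹) (hHtop _) y hy
    rw [mul_assoc, inv_mul_cancel₀ hy0, mul_one] at this
    exact hle this

end

/-! ### Graded modules over a pencil and Riemann–Roch -/

section

open Module Polynomial

theorem exists_complement_family {K F : Type*} [Field K] [AddCommGroup F] [Module K F]
    (N P : Submodule K F) [FiniteDimensional K P] :
    ∃ (q : ℕ) (c : Fin q → F), (∀ k, c k ∈ P) ∧ (∀ x ∈ P, ∃ γ : Fin q → K, x - ∑ k, γ k • c k ∈ N) ∧
      (∀ γ : Fin q → K, ∑ k, γ k • c k ∈ N → γ = 0) ∧ (P ≤ N → q = 0) := by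
  let B := finBasis K (P.map N.mkQ)
  have hB : ∀ k, ∃ x ∈ P, N.mkQ x = B k := fun k => (B k).2
  choose c hcP hc using hB
  have hsum : ∀ γ : Fin _ → K, N.mkQ (∑ k, γ k • c k) = ((∑ k, γ k • B k : P.map N.mkQ) : F ⧸ N) := by
    intro γ; simp only [map_sum, map_smul, hc]; simp
  refine ⟨_, c, hcP, ?_, ?_, ?_⟩
  · intro x hx
    refine ⟨fun k => B.repr ⟨N.mkQ x, x, hx, rfl⟩ k, ?_⟩
    rw [← Submodule.Quotient.mk_eq_zero, ← Submodule.mkQ_apply, map_sub, hsum, B.sum_repr]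
    simp
  · intro γ hγ
    rw [← Submodule.Quotient.mk_eq_zero, ← Submodule.mkQ_apply, hsum] at hγ
    have h0 : ∑ k, γ k • B k = 0 := Subtype.ext hγ
    exact funext fun k => Fintype.linearIndependent_iff.1 B.linearIndependent γ h0 k
  · intro hPN
    have : P.map N.mkQ = ⊥ := by
      rw [Submodule.eq_bot_iff]
      rintro _ ⟨x, hx, rfl⟩
      simpa using hPN hx
    rw [this]; simp

section Lattice

set_option linter.unusedSectionVars false

variable {K KT F : Type*} [Field K] [Field KT] [Field F] [Algebra K KT] [Algebra KT F]
  [Algebra K F] [IsScalarTower K KT F]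

/-- A graded `K[x, y]`-module of sections: `M n` is the piece of degree `n - 1`, `x` acts as the
inclusion `M n ≤ M (n + 1)` and `y` as multiplication by `t`.  The field `sat` says that
`x, y` is a regular sequence on it. -/
structure SectionModule (t : KT) (M : ℕ → Submodule K F) : Prop where
  zero : M 0 = ⊥
  fd : ∀ n, FiniteDimensional K (M n)
  mono : ∀ n, M n ≤ M (n + 1)
  smul : ∀ n, ∀ x ∈ M n, t • x ∈ M (n + 1)
  sat : ∀ n, ∀ x ∈ M (n + 1), t • x ∈ M (n + 1) → x ∈ M n
  gen : ∃ n₁, ∀ n ≥ n₁, ∀ x ∈ M (n + 1), ∃ u ∈ M n, ∃ w ∈ M n, x = u + t • w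
  span : Submodule.span KT (⋃ n, (M n : Set F)) = ⊤

/-- Polynomials in `t` of degree `< k`. -/
noncomputable def polyLT (t : KT) (k : ℕ) : Submodule K KT :=
  (degreeLT K k).map (aeval t).toLinearMap

theorem mem_polyLT {t : KT} {k : ℕ} {x : KT} :
    x ∈ polyLT (K := K) t k ↔ ∃ p ∈ degreeLT K k, aeval t p = x := Iff.rfl

theorem SectionModule.mono' {t : KT} {M : ℕ → Submodule K F} (h : SectionModule t M) {a b : ℕ}
    (hab : a ≤ b) : M a ≤ M b := monotone_nat_of_le_succ h.mono hab

theorem X_mul_mem_degreeLT {p : K[X]} {k : ℕ} (hp : p ∈ degreeLT K k) :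
    X * p ∈ degreeLT K (k + 1) := by
  rw [mem_degreeLT] at *
  by_cases h : p = 0
  · rw [h, mul_zero, degree_zero]; exact WithBot.bot_lt_coe _
  · rw [degree_eq_natDegree h] at hp
    rw [degree_mul, degree_X, degree_eq_natDegree h]
    norm_cast at hp ⊢; omega

theorem divX_mem_degreeLT {p : K[X]} {k : ℕ} (hp : p ∈ degreeLT K (k + 1)) :
    p.divX ∈ degreeLT K k := by
  rw [degreeLT, Submodule.mem_iInf] at hp ⊢
  intro i
  rw [Submodule.mem_iInf]
  intro hi
  rw [LinearMap.mem_ker, lcoeff_apply, coeff_divX]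
  have := hp (i + 1)
  rw [Submodule.mem_iInf] at this
  exact this (by omega)

theorem degreeLT_sub_eq_zero {p : K[X]} {a b : ℕ} (hab : a ≤ b) (hp : p ∈ degreeLT K (a - b)) :
    p = 0 := by
  rw [Nat.sub_eq_zero_of_le hab, mem_degreeLT] at hp
  simpa [degree_eq_bot] using hp

/-- `t`-polynomial combinations of elements of the section module. -/
theorem SectionModule.aeval_smul_mem {t : KT} {M : ℕ → Submodule K F} (h : SectionModule t M)
    {b : ℕ} {e : F} (he : e ∈ M (b + 1)) :
    ∀ (k : ℕ) (p : K[X]), p ∈ degreeLT K k → aeval t p • e ∈ M (b + k) := by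
  intro k
  induction k with
  | zero =>
    intro p hp
    have : p = 0 := degreeLT_sub_eq_zero (a := 0) (b := 0) le_rfl hp
    simp [this]
  | succ k ih =>
    intro p hp
    rw [← divX_mul_X_add p, map_add, add_smul, map_mul, aeval_X, mul_comm, mul_smul, aeval_C]
    refine add_mem (h.smul _ _ (ih _ (divX_mem_degreeLT hp))) ?_
    rw [algebraMap_smul]
    exact Submodule.smul_mem _ _ (h.mono' (by omega) he)

/-- A section module is free over `K[x, y]`, with generators `e i` in `M (b i + 1)`. -/
theorem SectionModule.structure_aux {t : KT} {M : ℕ → Submodule K F} (h : SectionModule t M) :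
    ∃ (ι : Type) (_ : Fintype ι) (e : ι → F) (b : ι → ℕ),
      (∀ i, e i ∈ M (b i + 1)) ∧
      (∀ n, ∀ x ∈ M n, ∃ p : ι → K[X], (∀ i, p i ∈ degreeLT K (n - b i)) ∧
        x = ∑ i, aeval t (p i) • e i) ∧
      (∀ n, ∀ p : ι → K[X], (∀ i, p i ∈ degreeLT K (n - b i)) →
        ∑ i, aeval t (p i) • e i = 0 → p = 0) := by
  classical
  obtain ⟨n₁, hn₁⟩ := h.gen
  have _ := h.fd
  let T : F →ₗ[K] F := (LinearMap.lsmul KT F t).restrictScalars K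
  have hT : ∀ x, T x = t • x := fun x => rfl
  choose q c hcM hcgen hcind hc0 using fun n =>
    exists_complement_family (M n ⊔ (M n).map T) (M (n + 1))
  have hq : ∀ n ≥ n₁, q n = 0 := fun n hn => hc0 n fun x hx => by
    obtain ⟨u, hu, w, hw, rfl⟩ := hn₁ n hn x hx
    exact add_mem (Submodule.mem_sup_left hu) (Submodule.mem_sup_right ⟨w, hw, rfl⟩)
  let ι := Σ n : Fin n₁, Fin (q n)
  let e : ι → F := fun i => c i.1 i.2
  let b : ι → ℕ := fun i => i.1
  have he : ∀ i, e i ∈ M (b i + 1) := fun i => hcM _ _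
  -- the members of the family with `b i = n` span a complement of `M n + t M n` in `M (n + 1)`
  have hgen' : ∀ n, ∀ x ∈ M (n + 1), ∃ γ : ι → K, (∀ i, b i ≠ n → γ i = 0) ∧
      x - ∑ i, γ i • e i ∈ M n ⊔ (M n).map T := by
    intro n x hx
    obtain ⟨γ, hγ⟩ := hcgen n x hx
    by_cases hn : n < n₁
    · refine ⟨fun i => if hi : i.1 = ⟨n, hn⟩ then γ (Fin.cast (by rw [hi]) i.2) else 0,
        fun i hi => dif_neg fun h' => hi (congrArg Fin.val h'), ?_⟩
      convert hγ using 2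
      rw [Fintype.sum_sigma, Finset.sum_eq_single ⟨n, hn⟩]
      · simp [e]
      · intro j _ hj
        simp [hj]
      · simp
    · refine ⟨0, fun _ _ => rfl, ?_⟩
      have := hq n (by omega)
      convert hγ using 2
      rw [Finset.sum_eq_zero (fun i _ => by simp), eq_comm]
      exact Finset.sum_eq_zero fun k _ => (Fin.cast this k).elim0
  have hind' : ∀ n, ∀ γ : ι → K, (∀ i, b i ≠ n → γ i = 0) →
      ∑ i, γ i • e i ∈ M n ⊔ (M n).map T → γ = 0 := by
    intro n γ hγ hsum
    funext i
    by_cases hi : b i = n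
    · subst hi
      have := hcind i.1 (fun k => γ ⟨i.1, k⟩) (by
        convert hsum using 1
        rw [Fintype.sum_sigma, Finset.sum_eq_single i.1]
        · intro j _ hj
          refine Finset.sum_eq_zero fun k _ => ?_
          rw [hγ ⟨j, k⟩ (fun h' => hj (Fin.ext h')), zero_smul]
        · simp)
      exact congrFun this i.2
    · exact hγ i hi
  have hGen : ∀ n, ∀ x ∈ M n, ∃ p : ι → K[X], (∀ i, p i ∈ degreeLT K (n - b i)) ∧
        x = ∑ i, aeval t (p i) • e i := by
    intro n
    induction n with
    | zero =>
      intro x hx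
      rw [h.zero, Submodule.mem_bot] at hx
      exact ⟨0, fun i => zero_mem _, by simp [hx]⟩
    | succ n ih =>
      intro x hx
      obtain ⟨γ, hγ, hx'⟩ := hgen' n x hx
      obtain ⟨u, hu, _, ⟨w, hw, rfl⟩, huw⟩ := Submodule.mem_sup.1 hx'
      obtain ⟨p, hp, hup⟩ := ih u hu
      obtain ⟨p', hp', hwp⟩ := ih w hw
      refine ⟨fun i => p i + X * p' i + C (γ i), fun i => ?_, ?_⟩
      · refine add_mem (add_mem (degreeLT_mono (by omega) (hp i)) ?_) ?_
        · by_cases hi : b i ≤ n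
          · rw [Nat.sub_add_comm hi]; exact X_mul_mem_degreeLT (hp' i)
          · rw [degreeLT_sub_eq_zero (by omega) (hp' i), mul_zero]; exact zero_mem _
        · by_cases hi : b i = n
          · rw [hi, mem_degreeLT]
            exact lt_of_le_of_lt degree_C_le (by norm_cast; omega)
          · rw [hγ i hi, map_zero]; exact zero_mem _
      · rw [eq_sub_iff_add_eq] at huw
        rw [← huw, hT, hup, hwp, Finset.smul_sum, ← Finset.sum_add_distrib,
          ← Finset.sum_add_distrib]
        refine Finset.sum_congr rfl fun i _ => ?_
        rw [map_add, map_add, map_mul, aeval_X, aeval_C, add_smul, add_smul, mul_smul,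
          algebraMap_smul]
  refine ⟨ι, inferInstance, e, b, he, hGen, ?_⟩
  · intro n
    induction n with
    | zero =>
      intro p hp _
      funext i
      exact degreeLT_sub_eq_zero (Nat.zero_le _) (hp i)
    | succ n ih =>
      intro p hp hsum
      let γ : ι → K := fun i => if b i = n then (p i).coeff 0 else 0
      let u : F := ∑ i, (if b i = n then 0 else (p i).coeff 0) • e i
      let w : F := ∑ i, aeval t (p i).divX • e i
      have hu : u ∈ M n := by
        refine Submodule.sum_mem _ fun i _ => ?_
        split_ifs with hi
        · rw [zero_smul]; exact zero_mem _
        · by_cases hi' : b i < n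
          · exact Submodule.smul_mem _ _ (h.mono' (by omega) (he i))
          · rw [degreeLT_sub_eq_zero (by omega) (hp i), coeff_zero, zero_smul]; exact zero_mem _
      have hdivX : ∀ i, (p i).divX ∈ degreeLT K (n - b i) := fun i => by
        by_cases hi : b i ≤ n
        · have := hp i
          rw [Nat.sub_add_comm hi] at this
          exact divX_mem_degreeLT this
        · rw [degreeLT_sub_eq_zero (by omega) (hp i), divX_zero]; exact zero_mem _
      have hw : w ∈ M n := by
        refine Submodule.sum_mem _ fun i _ => ?_
        by_cases hi : b i ≤ n
        · have := h.aeval_smul_mem (he i) (n - b i) _ (hdivX i)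
          rwa [Nat.add_sub_cancel' hi] at this
        · rw [degreeLT_sub_eq_zero (by omega) (hp i), divX_zero, map_zero, zero_smul]
          exact zero_mem _
      have hdec : ∑ i, aeval t (p i) • e i = u + t • w + ∑ i, γ i • e i := by
        simp only [u, w, γ, Finset.smul_sum, ← Finset.sum_add_distrib]
        refine Finset.sum_congr rfl fun i _ => ?_
        conv_lhs => rw [← divX_mul_X_add (p i)]
        rw [map_add, add_smul, map_mul, aeval_X, mul_comm, mul_smul, aeval_C, algebraMap_smul]
        split_ifs <;> simp [add_comm]
      have hγ : γ = 0 := by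
        refine hind' n γ (fun i hi => if_neg hi) ?_
        have : ∑ i, γ i • e i = -u + -(T w) := by
          rw [hsum] at hdec
          rw [hT]
          linear_combination -hdec
        rw [this]
        exact add_mem (Submodule.mem_sup_left (neg_mem hu))
          (Submodule.mem_sup_right (neg_mem ⟨w, hw, rfl⟩))
      have hγ' : ∀ i, b i = n → (p i).coeff 0 = 0 := fun i hi => by
        have := congrFun hγ i
        simpa [γ, hi] using this
      have htw : t • w ∈ M n := by
        have : t • w = -u := by
          rw [hsum, hγ] at hdec
          simp only [Pi.zero_apply, zero_smul, Finset.sum_const_zero, add_zero] at hdec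
          linear_combination -hdec
        rw [this]; exact neg_mem hu
      have hdX : ∀ i, (p i).divX ∈ degreeLT K (n - 1 - b i) := by
        cases n with
        | zero =>
          intro i
          have := hdivX i
          rw [Nat.zero_sub] at this
          simpa using this
        | succ k =>
          obtain ⟨p', hp', hwp⟩ := hGen k w (h.sat k w hw htw)
          have : (fun i => (p i).divX - p' i) = 0 := by
            refine ih _ (fun i => sub_mem (hdivX i) (degreeLT_mono (by omega) (hp' i))) ?_
            simp only [map_sub, sub_smul, Finset.sum_sub_distrib]
            rw [← hwp, sub_self]
          intro i
          have := congrFun this i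
          rw [Pi.zero_apply, sub_eq_zero] at this
          rw [this]; exact hp' i
      refine ih p (fun i => ?_) hsum
      rw [← divX_mul_X_add (p i), mul_comm]
      by_cases hi : b i < n
      · refine add_mem ?_ ?_
        · have := X_mul_mem_degreeLT (hdX i)
          rwa [show n - 1 - b i + 1 = n - b i by omega] at this
        · rw [mem_degreeLT]
          exact lt_of_le_of_lt degree_C_le (by norm_cast; omega)
      · rw [degreeLT_sub_eq_zero (by omega) (hdX i), mul_zero, zero_add]
        by_cases hi' : b i = n
        · rw [hγ' i hi', map_zero]; exact zero_mem _
        · rw [degreeLT_sub_eq_zero (by omega) (hp i), coeff_zero, map_zero]; exact zero_mem _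

/-- `KT = K(t)` is a rational function field in `t`. -/
structure RatGen (K : Type*) {KT : Type*} [Field K] [Field KT] [Algebra K KT] (t : KT) : Prop where
  trans : Transcendental K t
  frac : ∀ x : KT, ∃ p q : K[X], q ≠ 0 ∧ x * aeval t q = aeval t p

theorem RatGen.common {t : KT} (ht : RatGen K t) {ι : Type*} [Fintype ι] (g : ι → KT) :
    ∃ (Q : K[X]) (P : ι → K[X]), Q ≠ 0 ∧ ∀ i, g i * aeval t Q = aeval t (P i) := by
  classical
  choose p q hq hpq using ht.frac
  refine ⟨∏ i, q (g i), fun i => p (g i) * ∏ j ∈ Finset.univ.erase i, q (g j),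
    Finset.prod_ne_zero_iff.2 fun i _ => hq _, fun i => ?_⟩
  rw [← Finset.mul_prod_erase Finset.univ _ (Finset.mem_univ i), map_mul, map_mul, ← mul_assoc, hpq]

theorem RatGen.aeval_inj {t : KT} (ht : RatGen K t) : Function.Injective (aeval (R := K) t) :=
  transcendental_iff_injective.1 ht.trans

/-- Splitting of a section module: in a suitable basis of `F` over `KT` its pieces are given by
degree bounds on the coordinates. -/
theorem SectionModule.exists_basis {t : KT} (ht : RatGen K t) {M : ℕ → Submodule K F}
    (h : SectionModule t M) :
    ∃ (ι : Type) (_ : Fintype ι) (B : Basis ι KT F) (b : ι → ℕ),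
      ∀ n x, x ∈ M n ↔ ∀ i, B.repr x i ∈ polyLT (K := K) t (n - b i) := by
  classical
  obtain ⟨ι, _, e, b, he, hgen, hind⟩ := h.structure_aux
  have hli : LinearIndependent KT e := by
    rw [Fintype.linearIndependent_iff]
    intro g hg
    obtain ⟨Q, P, hQ, hP⟩ := ht.common g
    have hP0 : P = 0 := by
      refine hind (∑ i, ((P i).natDegree + 1 + b i)) P (fun i => ?_) ?_
      · rw [mem_degreeLT]
        refine lt_of_le_of_lt degree_le_natDegree ?_
        have := Finset.single_le_sum (f := fun i => (P i).natDegree + 1 + b i)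
          (fun _ _ => Nat.zero_le _) (Finset.mem_univ i)
        norm_cast
        omega
      · simp only [← hP, mul_comm (g _), mul_smul, ← Finset.smul_sum, hg, smul_zero]
    intro i
    have := hP i
    rw [hP0, Pi.zero_apply, map_zero] at this
    exact (mul_eq_zero.1 this).resolve_right fun h0 =>
      hQ (ht.aeval_inj (by rw [h0, map_zero]))
  have hsp : ⊤ ≤ Submodule.span KT (Set.range e) := by
    rw [← h.span, Submodule.span_le]
    intro x hx
    obtain ⟨n, hx⟩ := Set.mem_iUnion.1 hx
    obtain ⟨p, -, rfl⟩ := hgen n x hx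
    exact Submodule.sum_mem _ fun i _ => Submodule.smul_mem _ _ (Submodule.subset_span ⟨i, rfl⟩)
  let B := Basis.mk hli hsp
  have hB : ∀ i, B i = e i := fun i => Basis.mk_apply hli hsp i
  refine ⟨ι, inferInstance, B, b, fun n x => ⟨fun hx i => ?_, fun hx => ?_⟩⟩
  · obtain ⟨p, hp, rfl⟩ := hgen n x hx
    simp only [← hB]
    rw [B.repr_sum_self]
    exact ⟨p i, hp i, rfl⟩
  · rw [← B.sum_repr x]
    refine Submodule.sum_mem _ fun i _ => ?_
    obtain ⟨p, hp, hpx⟩ := hx i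
    rw [← hpx, hB]
    by_cases hi : b i ≤ n
    · have := h.aeval_smul_mem (he i) (n - b i) p hp
      rwa [Nat.add_sub_cancel' hi] at this
    · rw [degreeLT_sub_eq_zero (by omega) hp]; simp

theorem finrank_of_coords {t : KT} (ht : RatGen K t) {ι : Type} [Fintype ι]
    (T : F →ₗ[KT] (ι → KT)) (hT : Function.Bijective T) (k : ι → ℕ) (S : Submodule K F)
    (hS : ∀ x, x ∈ S ↔ ∀ i, T x i ∈ polyLT (K := K) t (k i)) :
    FiniteDimensional K S ∧ finrank K S = ∑ i, k i := by
  let e : F ≃ₗ[KT] (ι → KT) := LinearEquiv.ofBijective T hT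
  let g : (∀ i, degreeLT K (k i)) →ₗ[K] F :=
    { toFun := fun p => e.symm fun i => aeval t (p i : K[X])
      map_add' := fun p q => by
        rw [← map_add]; congr 1; funext i; simp
      map_smul' := fun c p => by
        rw [RingHom.id_apply, ← algebraMap_smul KT c (e.symm _), ← map_smul]; congr 1; funext i
        simp [Algebra.smul_def] }
  have hg : Function.Injective g := by
    intro p q hpq
    have := e.symm.injective hpq
    funext i
    exact Subtype.ext (ht.aeval_inj (congrFun this i))
  have hr : LinearMap.range g = S := by
    ext x
    rw [hS]
    constructor
    · rintro ⟨p, rfl⟩ i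
      have : T (g p) = fun i => aeval t (p i : K[X]) := e.apply_symm_apply _
      rw [this]
      exact ⟨p i, (p i).2, rfl⟩
    · intro hx
      choose p hp hpx using hx
      refine ⟨fun i => ⟨p i, hp i⟩, ?_⟩
      apply e.injective
      rw [show e x = T x from rfl]
      refine (e.apply_symm_apply _).trans ?_
      funext i
      exact hpx i
  have hfd : ∀ n, FiniteDimensional K (degreeLT K n) := fun n =>
    Module.Finite.equiv (degreeLTEquiv K n).symm
  refine ⟨hr ▸ inferInstance, ?_⟩
  rw [← hr, LinearMap.finrank_range_of_inj hg, Module.finrank_pi_fintype]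
  refine Finset.sum_congr rfl fun i _ => ?_
  rw [(degreeLTEquiv K (k i)).finrank_eq, Module.finrank_fin_fun]

/-- The dual of the section module in degree `n` with respect to a functional `lam : F → KT`;
it plays the role of `H¹` in degree `n`. -/
def dualPiece (t : KT) (lam : F →ₗ[KT] KT) (M : ℕ → Submodule K F) (n : ℕ) : Submodule K F where
  carrier := {y | ∀ j, ∀ x ∈ M j, lam (y * x) ∈ polyLT (K := K) t (j - 2 - n)}
  add_mem' := fun {a b} ha hb j x hx => by
    rw [add_mul, map_add]; exact add_mem (ha j x hx) (hb j x hx)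
  zero_mem' := fun j x hx => by rw [zero_mul, map_zero]; exact zero_mem _
  smul_mem' := fun c y hy j x hx => by
    rw [smul_mul_assoc, ← algebraMap_smul KT c, map_smul, algebraMap_smul]
    exact Submodule.smul_mem _ _ (hy j x hx)

theorem mul_mem_polyLT {t : KT} {a b c : ℕ} (h : a + b ≤ c + 1) {x y : KT}
    (hx : x ∈ polyLT (K := K) t a) (hy : y ∈ polyLT (K := K) t b) :
    x * y ∈ polyLT (K := K) t c := by
  obtain ⟨p, hp, rfl⟩ := hx
  obtain ⟨q, hq, rfl⟩ := hy
  refine ⟨p * q, ?_, by simp⟩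
  simp only [SetLike.mem_coe, mem_degreeLT] at *
  by_cases h0 : p = 0
  · rw [h0, zero_mul, degree_zero]; exact WithBot.bot_lt_coe _
  by_cases h1 : q = 0
  · rw [h1, mul_zero, degree_zero]; exact WithBot.bot_lt_coe _
  rw [degree_mul, degree_eq_natDegree h0, degree_eq_natDegree h1] at *
  norm_cast at *
  omega

/-- Riemann–Roch for a section module: there are a constant `β` and dimensions of the graded
pieces and of their duals with `h⁰ - h¹ = s (n + 1) - β` in every degree `n ≥ 0`, and the
dual vanishes above the first degree in which it vanishes. -/
theorem SectionModule.riemann_roch {t : KT} (ht : RatGen K t) {M : ℕ → Submodule K F}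
    (h : SectionModule t M) (lam : F →ₗ[KT] KT) (hlam : lam ≠ 0) :
    FiniteDimensional KT F ∧ (∀ n, FiniteDimensional K (dualPiece (K := K) t lam M n)) ∧
    ∃ β : ℕ, (∀ n, (finrank K (M (n + 1)) : ℤ) - finrank K (dualPiece (K := K) t lam M n) =
      finrank KT F * (n + 1) - β) ∧
      (∃ n, finrank K (dualPiece (K := K) t lam M n) = 0) ∧
      (∀ n, finrank K (dualPiece (K := K) t lam M n) = 0 → ∀ m ≥ n,
        finrank K (dualPiece (K := K) t lam M m) = 0 ∧
        ∀ x ∈ M (m + 3), ∃ u ∈ M (m + 2), ∃ w ∈ M (m + 2), x = u + t • w) := by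
  classical
  obtain ⟨ι, _, B, b, hB⟩ := h.exists_basis ht
  have hfd : FiniteDimensional KT F := Module.Finite.of_basis B
  let T : F →ₗ[KT] (ι → KT) := LinearMap.pi fun i => lam ∘ₗ LinearMap.mulRight KT (B i)
  have hTa : ∀ y i, T y i = lam (y * B i) := fun y i => rfl
  have hTinj : Function.Injective T := by
    rw [injective_iff_map_eq_zero]
    intro y hy
    by_contra hy0
    apply hlam
    have : lam ∘ₗ LinearMap.mulLeft KT y = 0 := B.ext fun i => congrFun hy i
    ext x
    have := LinearMap.congr_fun this (y⁻¹ * x)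
    simpa [mul_inv_cancel_left₀ hy0] using this
  have hTbij : Function.Bijective T :=
    ⟨hTinj, (LinearMap.injective_iff_surjective_of_finrank_eq_finrank (by
      rw [Module.finrank_eq_card_basis B, Module.finrank_fintype_fun_eq_card])).1 hTinj⟩
  have hsplit : ∀ y x, lam (y * x) = ∑ i, B.repr x i * T y i := by
    intro y x
    conv_lhs => rw [← B.sum_repr x]
    rw [Finset.mul_sum, map_sum]
    refine Finset.sum_congr rfl fun i _ => ?_
    rw [mul_smul_comm, map_smul, hTa, smul_eq_mul]
  have hΦ : ∀ n y, y ∈ dualPiece (K := K) t lam M n ↔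
      ∀ i, T y i ∈ polyLT (K := K) t (b i - 1 - n) := by
    intro n y
    constructor
    · intro hy i
      have hm : B i ∈ M (b i + 1) := by
        rw [hB]
        intro j
        rw [B.repr_self, Finsupp.single_apply]
        split_ifs with hij
        · refine ⟨1, ?_, by simp⟩
          rw [hij]
          simp only [SetLike.mem_coe, mem_degreeLT]
          refine lt_of_le_of_lt degree_one_le ?_
          norm_cast; omega
        · exact zero_mem _
      have := hy _ _ hm
      rwa [show b i + 1 - 2 - n = b i - 1 - n by omega] at this
    · intro hy j x hx
      rw [hsplit]
      refine Submodule.sum_mem _ fun i _ => ?_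
      have h1 := (hB j x).1 hx i
      by_cases hc : b i < j
      · by_cases hc' : 1 + n < b i
        · exact mul_mem_polyLT (by omega) h1 (hy i)
        · obtain ⟨p, hp, hpe⟩ := hy i
          rw [← hpe, degreeLT_sub_eq_zero (a := b i - 1) (b := n) (by omega) hp]
          simp
      · obtain ⟨p, hp, hpe⟩ := h1
        rw [← hpe, degreeLT_sub_eq_zero (by omega) hp]
        simp
  have hdΦ := fun n => finrank_of_coords ht T hTbij (fun i => b i - 1 - n) _ (hΦ n)
  have hdM := fun n => finrank_of_coords ht B.equivFun.toLinearMap B.equivFun.bijective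
    (fun i => n - b i) (M n) (hB n)
  refine ⟨hfd, fun n => (hdΦ n).1, ∑ i, b i, fun n => ?_, ⟨∑ i, b i, ?_⟩,
    fun n hn m hm => ?_⟩
  · rw [(hdΦ n).2, (hdM (n + 1)).2, Module.finrank_eq_card_basis B]
    push_cast
    rw [← Finset.sum_sub_distrib]
    have : ((Fintype.card ι : ℤ)) * (n + 1) = ∑ i : ι, ((n : ℤ) + 1) := by simp
    rw [this, ← Finset.sum_sub_distrib]
    refine Finset.sum_congr rfl fun i _ => ?_
    omega
  · rw [(hdΦ _).2]
    refine Finset.sum_eq_zero fun i hi => ?_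
    have := Finset.single_le_sum (f := b) (fun _ _ => Nat.zero_le _) hi
    omega
  · rw [(hdΦ n).2, Finset.sum_eq_zero_iff] at hn
    refine ⟨?_, fun x hx => ?_⟩
    · rw [(hdΦ m).2]
      refine Finset.sum_eq_zero fun i hi => ?_
      have := hn i hi
      omega
    · have hx' := (hB _ x).1 hx
      choose p hp hpx using hx'
      refine ⟨∑ i, aeval t (C ((p i).coeff 0)) • B i, ?_, ∑ i, aeval t (p i).divX • B i, ?_, ?_⟩
      · rw [hB]
        intro i
        rw [B.repr_sum_self]
        refine ⟨_, ?_, rfl⟩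
        have := hn i (Finset.mem_univ i)
        simp only [SetLike.mem_coe, mem_degreeLT]
        exact lt_of_le_of_lt degree_C_le (by norm_cast; omega)
      · rw [hB]
        intro i
        rw [B.repr_sum_self]
        refine ⟨_, divX_mem_degreeLT ?_, rfl⟩
        have := hn i (Finset.mem_univ i)
        have h2 := hp i
        rwa [show m + 3 - b i = m + 2 - b i + 1 by omega] at h2
      · rw [← B.sum_repr x, Finset.smul_sum, ← Finset.sum_add_distrib]
        refine Finset.sum_congr rfl fun i _ => ?_
        rw [← mul_smul, ← add_smul, ← hpx]
        congr 1
        conv_lhs => rw [← divX_mul_X_add (p i)]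
        simp; ring
end Lattice

end

/-! ### Saturation of graded ideals -/

section

open Module Polynomial

section Tilde

set_option linter.unusedSectionVars false

variable {K KT F : Type*} [Field K] [Field KT] [Field F] [Algebra K KT] [Algebra KT F]
  [Algebra K F] [IsScalarTower K KT F]

/-- The saturation of a family `J` of subspaces with respect to the powers of `V`
(sections of the sheaf attached to `⨁ J n`). -/
def tilde (V : Submodule K F) (J : ℕ → Submodule K F) (n : ℕ) : Submodule K F where
  carrier := {b | ∃ m₀, ∀ m ≥ m₀, ∀ x ∈ V ^ m, b * x ∈ J (n + m)}
  add_mem' := by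
    rintro a b ⟨m, hm⟩ ⟨l, hl⟩
    refine ⟨max m l, fun k hk x hx => ?_⟩
    rw [add_mul]
    exact add_mem (hm k (le_trans (le_max_left _ _) hk) x hx)
      (hl k (le_trans (le_max_right _ _) hk) x hx)
  zero_mem' := ⟨0, fun m _ x _ => by rw [zero_mul]; exact zero_mem _⟩
  smul_mem' := by
    rintro c a ⟨m, hm⟩
    refine ⟨m, fun k hk x hx => ?_⟩
    rw [smul_mul_assoc]
    exact Submodule.smul_mem _ _ (hm k hk x hx)

theorem mem_tilde {V : Submodule K F} {J : ℕ → Submodule K F} {n : ℕ} {b : F} :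
    b ∈ tilde V J n ↔ ∃ m₀, ∀ m ≥ m₀, ∀ x ∈ V ^ m, b * x ∈ J (n + m) := Iff.rfl

/-- The saturation, shifted by one so as to start with `⊥`. -/
def shiftTilde (V : Submodule K F) (J : ℕ → Submodule K F) : ℕ → Submodule K F
  | 0 => ⊥
  | n + 1 => tilde V J n

/-- The standing hypotheses on `V`: multiplication by `1` and `t` generates the high powers. -/
structure PowGen (t : KT) (V : Submodule K F) : Prop where
  fd : FiniteDimensional K V
  one : (1 : F) ∈ V
  t_mem : algebraMap KT F t ∈ V
  gen : ∃ N, ∀ n ≥ N, ∀ x ∈ V ^ (n + 1), ∃ u ∈ V ^ n, ∃ w ∈ V ^ n, x = u + t • w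
  span : Submodule.span KT (⋃ n, ((V ^ n : Submodule K F) : Set F)) = ⊤

/-- A graded ideal in the graded ring of powers of `V`, satisfying in large degrees
the regularity properties of a one-dimensional coordinate ring. -/
structure IdealFam (t : KT) (V : Submodule K F) (J : ℕ → Submodule K F) : Prop where
  mul : ∀ n, ∀ x ∈ V, ∀ y ∈ J n, x * y ∈ J (n + 1)
  le : ∀ n, J n ≤ V ^ n
  sat : ∃ n₀, ∀ n ≥ n₀, ∀ b ∈ J (n + 1), t • b ∈ J (n + 1) → b ∈ J n
  gen : ∃ n₀, ∀ n ≥ n₀, ∀ x ∈ J (n + 1), ∃ u ∈ J n, ∃ w ∈ J n, x = u + t • w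
  ne : ∃ n, J n ≠ ⊥

variable {t : KT} {V : Submodule K F} {J : ℕ → Submodule K F}

theorem PowGen.pow_mono (hV : PowGen t V) {a b : ℕ} (hab : a ≤ b) : V ^ a ≤ V ^ b :=
  pow_le_pow_right₀ (Submodule.one_le.2 hV.one) hab

theorem t_smul_eq (t : KT) (x : F) : t • x = algebraMap KT F t * x := Algebra.smul_def t x

theorem IdealFam.mono (hV : PowGen t V) (hJ : IdealFam t V J) (n : ℕ) : J n ≤ J (n + 1) :=
  fun x hx => by simpa using hJ.mul n 1 hV.one x hx

theorem IdealFam.mono' (hV : PowGen t V) (hJ : IdealFam t V J) {a b : ℕ} (hab : a ≤ b) :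
    J a ≤ J b := monotone_nat_of_le_succ (hJ.mono hV) hab

theorem IdealFam.smul (hV : PowGen t V) (hJ : IdealFam t V J) (n : ℕ) {x : F} (hx : x ∈ J n) :
    t • x ∈ J (n + 1) := by
  rw [t_smul_eq]; exact hJ.mul n _ hV.t_mem x hx

theorem IdealFam.pow_mul (hJ : IdealFam t V J) (m n : ℕ) :
    V ^ m * J n ≤ J (n + m) := by
  induction m with
  | zero => simp
  | succ m ih =>
    rw [pow_succ', mul_assoc, Submodule.mul_le]
    intro x hx y hy
    exact hJ.mul (n + m) x hx y (ih hy)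

theorem IdealFam.le_tilde (hJ : IdealFam t V J) (n : ℕ) : J n ≤ tilde V J n :=
  fun b hb => ⟨0, fun m _ x hx => by
    rw [mul_comm]; exact hJ.pow_mul m n (Submodule.mul_mem_mul hx hb)⟩

theorem IdealFam.tilde_eq (hV : PowGen t V) (hJ : IdealFam t V J) :
    ∃ n₀, ∀ n ≥ n₀, tilde V J n = J n := by
  obtain ⟨n₀, hn₀⟩ := hJ.sat
  refine ⟨n₀, fun n hn => le_antisymm ?_ (hJ.le_tilde n)⟩
  rintro b ⟨m₀, hm₀⟩
  have key : ∀ m, (∀ x ∈ V ^ m, b * x ∈ J (n + m)) → b ∈ J n := by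
    intro m
    induction m with
    | zero => intro h; simpa using h 1 (by simp)
    | succ m ih =>
      intro h
      refine ih fun x hx => hn₀ (n + m) (by omega) _ (h x (hV.pow_mono (Nat.le_succ m) hx)) ?_
      have := h (algebraMap KT F t * x) (by
        rw [pow_succ']; exact Submodule.mul_mem_mul hV.t_mem hx)
      rwa [t_smul_eq, mul_left_comm]
  exact key m₀ (hm₀ m₀ le_rfl)

theorem IdealFam.tilde_mono (hV : PowGen t V) (hJ : IdealFam t V J) (n : ℕ) :
    tilde V J n ≤ tilde V J (n + 1) := by
  rintro b ⟨m₀, hm₀⟩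
  exact ⟨m₀, fun m hm x hx => hJ.mono' hV (by omega) (hm₀ m hm x hx)⟩

theorem IdealFam.tilde_mono' (hV : PowGen t V) (hJ : IdealFam t V J) {a b : ℕ} (hab : a ≤ b) :
    tilde V J a ≤ tilde V J b := monotone_nat_of_le_succ (hJ.tilde_mono hV) hab

theorem IdealFam.tilde_fd (hV : PowGen t V) (hJ : IdealFam t V J) (n : ℕ) :
    FiniteDimensional K (tilde V J n) := by
  obtain ⟨n₀, hn₀⟩ := hJ.tilde_eq hV
  have := hV.fd
  exact Submodule.finiteDimensional_of_le (S₂ := V ^ (max n n₀))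
    ((hJ.tilde_mono' hV (le_max_left n n₀)).trans
      ((hn₀ _ (le_max_right n n₀)).le.trans (hJ.le _)))

theorem powFam (hV : PowGen t V)
    (hsat : ∃ n₀, ∀ n ≥ n₀, ∀ b ∈ V ^ (n + 1), t • b ∈ V ^ (n + 1) → b ∈ V ^ n) :
    IdealFam t V (fun n => V ^ n) where
  mul := fun n x hx y hy => by rw [pow_succ']; exact Submodule.mul_mem_mul hx hy
  le := fun n => le_rfl
  sat := hsat
  gen := hV.gen
  ne := ⟨0, fun h => one_ne_zero (α := F) (by
    have : (1 : F) ∈ V ^ 0 := by simp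
    rw [h] at this
    simp at this)⟩

theorem IdealFam.tilde_le (hJ : IdealFam t V J) (n : ℕ) :
    tilde V J n ≤ tilde V (fun n => V ^ n) n := by
  rintro b ⟨m₀, hm₀⟩
  exact ⟨m₀, fun m hm x hx => hJ.le _ (hm₀ m hm x hx)⟩

theorem tilde_mul {a b : ℕ} {x y : F} (hx : x ∈ tilde V J a)
    (hy : y ∈ tilde V (fun n => V ^ n) b) : x * y ∈ tilde V J (a + b) := by
  obtain ⟨m₀, hm₀⟩ := hx
  obtain ⟨l₀, hl₀⟩ := hy
  refine ⟨max m₀ l₀, fun m hm z hz => ?_⟩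
  rw [mul_assoc, add_assoc]
  exact hm₀ (b + m) (by omega) _ (hl₀ m (by omega) z hz)

theorem tilde_zero_eq (hcl : ∀ H : Subalgebra K F, FiniteDimensional K H → H = ⊥)
    (hV : PowGen t V) (hA : IdealFam t V (fun n => V ^ n)) :
    tilde V (fun n => V ^ n) 0 = 1 := by
  let H : Subalgebra K F :=
    { carrier := tilde V (fun n => V ^ n) 0
      mul_mem' := fun {a b} ha hb => by simpa using tilde_mul ha hb
      add_mem' := fun {a b} ha hb => add_mem ha hb
      algebraMap_mem' := fun c => ⟨0, fun m _ x hx => by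
        rw [← Algebra.smul_def, zero_add]; exact Submodule.smul_mem _ _ hx⟩ }
  have hH : H = ⊥ := hcl H (hA.tilde_fd hV 0)
  ext x
  have h1 : x ∈ tilde V (fun n => V ^ n) 0 ↔ x ∈ H := Iff.rfl
  rw [h1, hH, Submodule.one_eq_range, Algebra.mem_bot]
  rfl

theorem sectionModule_tilde (hcl : ∀ H : Subalgebra K F, FiniteDimensional K H → H = ⊥)
    (ht : Transcendental K t)
    (hV : PowGen t V) (hA : IdealFam t V (fun n => V ^ n)) (hJ : IdealFam t V J) :
    SectionModule t (shiftTilde V J) where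
  zero := rfl
  fd := by
    rintro (_ | n)
    · change FiniteDimensional K (⊥ : Submodule K F); infer_instance
    · exact hJ.tilde_fd hV n
  mono := by
    rintro (_ | n)
    · exact bot_le
    · exact hJ.tilde_mono hV n
  smul := by
    rintro (_ | n) x hx
    · rw [(Submodule.mem_bot K).1 hx, smul_zero]; exact zero_mem _
    · obtain ⟨m₀, hm₀⟩ := hx
      refine ⟨m₀, fun m hm y hy => ?_⟩
      rw [smul_mul_assoc]
      have := hJ.smul hV _ (hm₀ m hm y hy)
      rwa [show n + 1 + m = n + m + 1 by omega]
  sat := by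
    rintro (_ | n) x hx htx
    · have h0 := tilde_zero_eq hcl hV hA
      have hx := hJ.tilde_le 0 hx
      have htx := hJ.tilde_le 0 htx
      rw [h0, Submodule.mem_one] at hx htx
      obtain ⟨c, rfl⟩ := hx
      obtain ⟨c', hc'⟩ := htx
      by_contra hne
      have hc : c ≠ 0 := by
        rintro rfl; apply hne; simp [shiftTilde]
      apply ht
      refine ⟨X * C c - C c', ?_, ?_⟩
      · intro h0
        have := congrArg (fun p => coeff p 1) h0
        simp [coeff_C] at this
        exact hc this
      · apply (algebraMap KT F).injective
        rw [t_smul_eq, IsScalarTower.algebraMap_apply K KT F,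
          IsScalarTower.algebraMap_apply K KT F] at hc'
        rw [map_sub, map_sub, map_mul, map_mul, aeval_X, aeval_C, aeval_C, hc', sub_self, map_zero]
    · obtain ⟨m₀, hm₀⟩ := hx
      obtain ⟨l₀, hl₀⟩ := htx
      obtain ⟨N, hN⟩ := hV.gen
      refine ⟨max (max m₀ l₀) N + 1, fun m hm y hy => ?_⟩
      obtain ⟨k, rfl⟩ : ∃ k, m = k + 1 := ⟨m - 1, by omega⟩
      obtain ⟨u, hu, w, hw, rfl⟩ := hN k (by omega) y hy
      have h1 := hm₀ k (by omega) u hu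
      have h2 := hl₀ k (by omega) w hw
      rw [mul_add, mul_smul_comm, ← smul_mul_assoc, show n + (k + 1) = n + 1 + k by omega]
      exact add_mem h1 h2
  gen := by
    obtain ⟨n₀, hn₀⟩ := hJ.tilde_eq hV
    obtain ⟨n₁, hn₁⟩ := hJ.gen
    refine ⟨max n₀ n₁ + 1, fun n hn x hx => ?_⟩
    obtain ⟨k, rfl⟩ : ∃ k, n = k + 1 := ⟨n - 1, by omega⟩
    simp only [shiftTilde] at hx ⊢
    rw [hn₀ _ (by omega)] at hx ⊢
    exact hn₁ k (by omega) x hx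
  span := by
    obtain ⟨n, hn⟩ := hJ.ne
    obtain ⟨f, hf, hf0⟩ := Submodule.exists_mem_ne_zero_of_ne_bot hn
    rw [eq_top_iff]
    intro x _
    have hx : f⁻¹ * x ∈ Submodule.span KT (⋃ n, ((V ^ n : Submodule K F) : Set F)) := by
      rw [hV.span]; trivial
    have : f * (f⁻¹ * x) ∈ Submodule.span KT (⋃ n, (shiftTilde V J n : Set F)) := by
      generalize f⁻¹ * x = z at hx
      induction hx using Submodule.span_induction with
      | mem y hy =>
        obtain ⟨k, hk⟩ := Set.mem_iUnion.1 hy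
        refine Submodule.subset_span (Set.mem_iUnion.2 ⟨n + k + 1, hJ.le_tilde _ ?_⟩)
        rw [mul_comm]
        exact hJ.pow_mul k n (Submodule.mul_mem_mul hk hf)
      | zero => simp
      | add a b _ _ ha hb => rw [mul_add]; exact add_mem ha hb
      | smul c a _ ha => rw [mul_smul_comm]; exact Submodule.smul_mem _ _ ha
    rwa [mul_inv_cancel_left₀ hf0] at this

end Tilde

end

/-! ### Clifford's inequality -/

section

open Module Polynomial

section Clifford

set_option linter.unusedSectionVars false

variable {K KT F : Type*} [Field K] [Field KT] [Field F] [Algebra K KT] [Algebra KT F]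
  [Algebra K F] [IsScalarTower K KT F]
  {t : KT} {V : Submodule K F} {J : ℕ → Submodule K F}

/-- Clifford's inequality `h⁰ + h¹ ≤ p + 1`, from the multiplication
`H⁰(J(n)) ⊗ H¹(J(n))^* → H¹(A(0))^*` and the Hopf-type lemma `hopf_of_closed`. -/
theorem clifford (hcl : ∀ H : Subalgebra K F, FiniteDimensional K H → H = ⊥) (ht : RatGen K t)
    (hV : PowGen t V) (hA : IdealFam t V (fun n => V ^ n)) (hJ : IdealFam t V J)
    (lam : F →ₗ[KT] KT) (hlam : lam ≠ 0) (n : ℕ)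
    (h0 : finrank K (tilde V J n) ≠ 0)
    (h1 : finrank K (dualPiece (K := K) t lam (shiftTilde V J) n) ≠ 0) :
    finrank K (tilde V J n) + finrank K (dualPiece (K := K) t lam (shiftTilde V J) n) ≤
      finrank K (dualPiece (K := K) t lam (shiftTilde V fun n => V ^ n) 0) + 1 := by
  have _ := hJ.tilde_fd hV n
  have _ := ((sectionModule_tilde hcl ht.trans hV hA hJ).riemann_roch ht lam hlam).2.1 n
  have _ := ((sectionModule_tilde hcl ht.trans hV hA hA).riemann_roch ht lam hlam).2.1 0
  refine (hopf_of_closed hcl (tilde V J n) (dualPiece (K := K) t lam (shiftTilde V J) n)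
    (fun h => h0 (by rw [h]; simp)) (fun h => h1 (by rw [h]; simp))).trans ?_
  refine Nat.add_le_add_right (Submodule.finrank_mono ?_) 1
  rw [Submodule.mul_le]
  rintro v hv y hy (_ | j) x hx
  · rw [(Submodule.mem_bot K).1 hx, mul_zero, map_zero]; exact zero_mem _
  · have := hy (n + j + 1) (v * x) (tilde_mul hv hx)
    rw [show n + j + 1 - 2 - n = j + 1 - 2 - 0 by omega] at this
    convert this using 2
    rw [mul_comm v y, mul_assoc]

/-- Cohomological consequences of Riemann–Roch and Clifford: each piece of a saturated ideal is
nonspecial, zero, or bounded by Clifford; if the degree-one piece exceeds Clifford's bound, the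
saturated ring is nonspecial in positive degrees and generated by `1, t` above degree two. -/
theorem coh_main (hcl : ∀ H : Subalgebra K F, FiniteDimensional K H → H = ⊥) (ht : RatGen K t)
    (hV : PowGen t V) (hA : IdealFam t V (fun n => V ^ n)) (s π : ℤ)
    (hdim : ∃ n₀ : ℕ, ∀ n : ℕ, n ≥ n₀ → (finrank K ↥(V ^ n) : ℤ) = s * n + 1 - π) :
    FiniteDimensional KT F ∧ (finrank KT F : ℤ) = s ∧ 0 ≤ π ∧
    (∀ (J : ℕ → Submodule K F) (δ : ℤ), IdealFam t V J →
      (∃ n₀ : ℕ, ∀ n : ℕ, n ≥ n₀ → (finrank K (J n) : ℤ) = s * n + 1 - π - δ) → ∀ n : ℕ,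
      (finrank K (tilde V J n) : ℤ) = s * n + 1 - π - δ ∨ finrank K (tilde V J n) = 0 ∨
        2 * (finrank K (tilde V J n) : ℤ) ≤ s * n + 2 - δ) ∧
    (s + 2 < 2 * (finrank K (tilde V (fun n => V ^ n) 1) : ℤ) →
      (∀ n : ℕ, 1 ≤ n → (finrank K (tilde V (fun n => V ^ n) n) : ℤ) = s * n + 1 - π) ∧
      (∀ n : ℕ, 2 ≤ n → ∀ x ∈ tilde V (fun n => V ^ n) (n + 1),
        ∃ u ∈ tilde V (fun n => V ^ n) n, ∃ w ∈ tilde V (fun n => V ^ n) n, x = u + t • w)) := by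
  have hSA := sectionModule_tilde hcl ht.trans hV hA hA
  obtain ⟨lam, hlam⟩ : ∃ lam : F →ₗ[KT] KT, lam ≠ 0 := by
    obtain ⟨f, hf⟩ := Module.Projective.exists_dual_ne_zero KT (one_ne_zero : (1 : F) ≠ 0)
    exact ⟨f, fun h => hf (by rw [h]; rfl)⟩
  obtain ⟨hfd, hΦfd, βA, hRRA, ⟨nA, hnA⟩, hvanA⟩ := hSA.riemann_roch ht lam hlam
  obtain ⟨n₀, hn₀⟩ := hdim
  obtain ⟨nt, hnt⟩ := hA.tilde_eq hV
  -- comparing the two linear functions in large degrees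
  have hcmp : ∀ n : ℕ, n ≥ max n₀ (max nt nA) →
      s * n + 1 - π = finrank KT F * (n + 1) - βA := by
    intro n hn
    have h1 := hRRA n
    rw [(hvanA nA hnA n (by omega)).1] at h1
    rw [← hn₀ n (by omega), ← h1, shiftTilde, hnt n (by omega)]
    simp
  have hs : (finrank KT F : ℤ) = s := by
    have h1 := hcmp _ le_rfl
    have h2 := hcmp (max n₀ (max nt nA) + 1) (by omega)
    push_cast at h1 h2
    linarith
  have hβA : s - (βA : ℤ) = 1 - π := by
    have h1 := hcmp _ le_rfl
    rw [hs] at h1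
    linarith
  have hp : (finrank K (dualPiece (K := K) t lam (shiftTilde V fun n => V ^ n) 0) : ℤ) = π := by
    have h1 := hRRA 0
    have h2 : finrank K (shiftTilde V (fun n => V ^ n) (0 + 1)) = 1 := by
      rw [shiftTilde, tilde_zero_eq hcl hV hA, Submodule.one_eq_span]
      exact finrank_span_singleton one_ne_zero
    rw [h2, hs] at h1
    push_cast at h1
    linarith
  refine ⟨hfd, hs, by rw [← hp]; positivity, ?_, ?_⟩
  · intro J δ hJ ⟨m₀, hm₀⟩ n
    obtain ⟨-, hΦfdJ, βJ, hRRJ, ⟨nJ, hnJ⟩, hvanJ⟩ :=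
      (sectionModule_tilde hcl ht.trans hV hA hJ).riemann_roch ht lam hlam
    obtain ⟨mt, hmt⟩ := hJ.tilde_eq hV
    have hβJ : s - (βJ : ℤ) = 1 - π - δ := by
      have h1 := hRRJ (max m₀ (max mt nJ))
      rw [(hvanJ nJ hnJ _ (by omega)).1, shiftTilde, hmt _ (by omega), hm₀ _ (by omega), hs] at h1
      push_cast at h1
      linarith
    have hRR := hRRJ n
    rw [hs, shiftTilde] at hRR
    by_cases h1 : finrank K (dualPiece (K := K) t lam (shiftTilde V J) n) = 0
    · left
      rw [h1] at hRR
      push_cast at hRR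
      linarith
    · right
      by_cases h0 : finrank K (tilde V J n) = 0
      · exact Or.inl h0
      · right
        have hC := clifford hcl ht hV hA hJ lam hlam n h0 h1
        zify at hC
        rw [hp] at hC
        linarith
  · intro hlt
    have h1 : finrank K (dualPiece (K := K) t lam (shiftTilde V fun n => V ^ n) 1) = 0 := by
      by_contra h1
      have hRR := hRRA 1
      rw [hs, shiftTilde] at hRR
      push_cast at hRR
      by_cases h0 : finrank K (tilde V (fun n => V ^ n) 1) = 0
      · have hs0 : (0 : ℤ) ≤ s := by rw [← hs]; positivity
        rw [h0] at hlt
        push_cast at hlt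
        linarith
      · have hC := clifford hcl ht hV hA hA lam hlam 1 h0 h1
        zify at hC
        rw [hp] at hC
        linarith
    refine ⟨fun n hn => ?_, fun n hn x hx => ?_⟩
    · have hRR := hRRA n
      rw [hs, (hvanA 1 h1 n hn).1, shiftTilde] at hRR
      push_cast at hRR
      linarith
    · obtain ⟨k, rfl⟩ : ∃ k, n = k + 1 := ⟨n - 1, by omega⟩
      exact (hvanA 1 h1 k (by omega)).2 x hx

end Clifford

end

/-! ### General members of a pencil -/

section

open Module Polynomial

section GenSpec

set_option linter.unusedSectionVars false

variable {K KT F : Type*} [Field K] [Field KT] [Field F] [Algebra K KT] [Algebra KT F]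
  [Algebra K F] [IsScalarTower K KT F]
  {t : KT} {V : Submodule K F} {M : ℕ → Submodule K F}

/-- The linear form `t - c`, viewed in `F`. -/
def lin (F : Type*) [Field F] [Algebra KT F] [Algebra K F] (t : KT) (c : K) : F :=
  algebraMap KT F t - algebraMap K F c

theorem lin_mul (t : KT) (c : K) (x : F) : lin F t c * x = t • x - c • x := by
  rw [lin, sub_mul, Algebra.smul_def, Algebra.smul_def]

theorem lin_smul (t : KT) (c : K) (x : F) : (t - algebraMap K KT c) • x = lin F t c * x := by
  rw [lin_mul, sub_smul, algebraMap_smul]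

theorem lin_ne_zero (ht : RatGen K t) (c : K) : lin F t c ≠ 0 := by
  intro h
  apply ht.trans
  refine ⟨X - C c, X_sub_C_ne_zero c, ?_⟩
  apply (algebraMap KT F).injective
  rw [map_sub, aeval_X, aeval_C, map_zero, map_sub, ← IsScalarTower.algebraMap_apply]
  exact h

theorem lin_mul_injective (ht : RatGen K t) (c : K) :
    Function.Injective (LinearMap.mulLeft K (lin F t c)) :=
  mul_right_injective₀ (lin_ne_zero ht c)

theorem span_fd (Y : Submodule K F) [FiniteDimensional K Y] :
    FiniteDimensional KT (Submodule.span KT (Y : Set F)) := by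
  obtain ⟨b, hb⟩ := Module.Finite.iff_fg.1 (inferInstance : Module.Finite K Y)
  rw [← hb, Submodule.span_span_of_tower]
  exact FiniteDimensional.span_of_finite KT b.finite_toSet

/-- For general `c`, sections of `Y` vanishing along `t = c` have codimension at least the
dimension of the `KT`-span of `Y`. -/
theorem general_section [Infinite K] (ht : RatGen K t)
    (A Y : Submodule K F) [FiniteDimensional K A] [FiniteDimensional K Y] :
    ∃ c : K, finrank KT (Submodule.span KT (Y : Set F)) +
      finrank K ↥(Y ⊓ A.map (LinearMap.mulLeft K (lin F t c))) ≤ finrank K Y := by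
  classical
  obtain ⟨b, hbY, hbs, hli⟩ := exists_linearIndependent KT (Y : Set F)
  have _ := span_fd (KT := KT) Y
  have hfin : Finite b := by
    have h1 : LinearIndependent KT fun i : b =>
        (⟨i, Submodule.subset_span (hbY i.2)⟩ : Submodule.span KT (Y : Set F)) :=
      LinearIndependent.of_comp (Submodule.span KT (Y : Set F)).subtype hli
    exact h1.finite
  have _ := Fintype.ofFinite b
  let B : Basis b KT (Submodule.span KT (Set.range ((↑) : b → F))) := Basis.span hli
  obtain ⟨g, hg⟩ := LinearMap.exists_leftInverse_of_injective
    (Submodule.span KT (Set.range ((↑) : b → F))).subtype (Submodule.ker_subtype _)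
  let f : b → F →ₗ[KT] KT := fun i => (B.coord i).comp g
  have hf : ∀ i j : b, f i j = if j = i then 1 else 0 := by
    intro i j
    have h1 : g (j : F) = B j := by
      have := LinearMap.congr_fun hg (B j)
      simp only [LinearMap.comp_apply, Submodule.subtype_apply, LinearMap.id_apply] at this
      rw [← this, Basis.span_apply]
    simp only [f, LinearMap.comp_apply, h1, Basis.coord_apply, Basis.repr_self, Finsupp.single_apply]
  let a := finBasis K A
  obtain ⟨Q, P, hQ, hP⟩ := ht.common fun p : b × Fin (finrank K A) => f p.1 (a p.2 : F)
  obtain ⟨c, hc⟩ : ∃ c, Q.eval c ≠ 0 := by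
    by_contra hcon
    push Not at hcon
    exact hQ (Polynomial.funext fun x => by simpa using hcon x)
  have hden : ∀ i, ∀ w ∈ A, ∃ p : K[X], f i w * aeval t Q = aeval t p := by
    intro i w hw
    refine ⟨∑ k, C (a.repr ⟨w, hw⟩ k) * P (i, k), ?_⟩
    have h1 : w = ∑ k, (a.repr ⟨w, hw⟩ k) • (a k : F) := by
      have h2 := congrArg (Subtype.val) (a.sum_repr ⟨w, hw⟩)
      refine h2.symm.trans ?_
      rw [Submodule.coe_sum]
      rfl
    conv_lhs => rw [h1]
    rw [map_sum, map_sum, Finset.sum_mul]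
    refine Finset.sum_congr rfl fun k _ => ?_
    rw [map_mul, aeval_C, ← hP (i, k), ← algebraMap_smul KT (a.repr ⟨w, hw⟩ k), map_smul,
      smul_eq_mul, mul_assoc]
  refine ⟨c, ?_⟩
  have hliK : LinearIndependent K ((↑) : b → F) := hli.restrict_scalars (by
    intro x y h
    apply (algebraMap K KT).injective
    simpa [Algebra.smul_def] using h)
  have h1 : finrank K (Submodule.span K (Set.range ((↑) : b → F))) =
      finrank KT (Submodule.span KT (Y : Set F)) := by
    rw [finrank_span_eq_card hliK, ← hbs]
    conv_rhs => rw [← Subtype.range_coe (s := b)]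
    rw [finrank_span_eq_card hli]
  rw [← h1]
  have hle : Submodule.span K (Set.range ((↑) : b → F)) ≤ Y := by
    rw [Submodule.span_le, Subtype.range_coe]; exact hbY
  have _ := Submodule.finiteDimensional_of_le hle
  have h2 : Submodule.span K (Set.range ((↑) : b → F)) ⊓
      (Y ⊓ A.map (LinearMap.mulLeft K (lin F t c))) = ⊥ := by
    rw [Submodule.eq_bot_iff]
    rintro x ⟨hx, -, w, hw, hwx⟩
    obtain ⟨l, rfl⟩ := (Submodule.mem_span_range_iff_exists_fun K).1 hx
    have hl : ∀ i, l i = 0 := by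
      intro i
      have h3 := congrArg (f i) hwx
      rw [LinearMap.mulLeft_apply, ← lin_smul, map_smul, map_sum] at h3
      have h4 : ∑ j, f i (l j • (j : F)) = algebraMap K KT (l i) := by
        rw [Finset.sum_eq_single i]
        · rw [← algebraMap_smul KT (l i), map_smul, hf]; simp
        · intro j _ hj
          rw [← algebraMap_smul KT (l j), map_smul, hf, if_neg hj, smul_zero]
        · simp
      rw [h4] at h3
      obtain ⟨p, hp⟩ := hden i w hw
      have h5 : aeval t ((X - C c) * p) = aeval t (C (l i) * Q) := by
        rw [map_mul, map_mul, map_sub, aeval_X, aeval_C, aeval_C, ← h3, ← hp, smul_eq_mul]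
        ring
      have h6 := congrArg (eval c) (ht.aeval_inj h5)
      simpa [hc] using h6
    simp [hl]
  have h3 := Submodule.finrank_sup_add_finrank_inf_eq (Submodule.span K (Set.range ((↑) : b → F)))
    (Y ⊓ A.map (LinearMap.mulLeft K (lin F t c)))
  rw [h2, finrank_bot, add_zero] at h3
  rw [← h3]
  exact Submodule.finrank_mono (sup_le hle inf_le_left)

/-- The part of `SectionModule` that makes sense in any dimension: a filtration saturated with
respect to `t`. -/
structure PreSection (t : KT) (M : ℕ → Submodule K F) : Prop where
  fd : ∀ n, FiniteDimensional K (M n)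
  mono : ∀ n, M n ≤ M (n + 1)
  smul : ∀ n, ∀ x ∈ M n, t • x ∈ M (n + 1)
  sat : ∀ n, ∀ x ∈ M (n + 1), t • x ∈ M (n + 1) → x ∈ M n

theorem SectionModule.pre (h : SectionModule t M) : PreSection t M :=
  ⟨h.fd, h.mono, h.smul, h.sat⟩

theorem PreSection.mono' (h : PreSection t M) {a b : ℕ} (hab : a ≤ b) : M a ≤ M b :=
  monotone_nat_of_le_succ h.mono hab

theorem PreSection.aeval_smul_mem (h : PreSection t M) (p : K[X]) :
    ∀ (n : ℕ), ∀ x ∈ M n, ∃ B, ∀ m ≥ B, aeval t p • x ∈ M m := by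
  induction p using Polynomial.induction_on' with
  | add p q hp hq =>
    intro n x hx
    obtain ⟨B, hB⟩ := hp n x hx
    obtain ⟨D, hD⟩ := hq n x hx
    refine ⟨max B D, fun m hm => ?_⟩
    rw [map_add, add_smul]
    exact add_mem (hB m (by omega)) (hD m (by omega))
  | monomial k a =>
    intro n x hx
    refine ⟨n + k, fun m hm => h.mono' hm ?_⟩
    rw [aeval_monomial, mul_smul, algebraMap_smul]
    refine Submodule.smul_mem _ _ ?_
    clear hm
    induction k with
    | zero => simpa using hx
    | succ k ih => rw [pow_succ', mul_smul]; exact h.smul _ _ ih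

/-- Sections of `M (n + 1)` that are `K`-independent modulo `t M n` are `KT`-independent. -/
theorem PreSection.span_bound (ht : RatGen K t) (h : PreSection t M) (n : ℕ)
    (Y : Submodule K F) (hY : Y ≤ M (n + 1)) :
    finrank K Y ≤ finrank KT (Submodule.span KT (Y : Set F)) + finrank K (M n) := by
  have _ := h.fd n
  have _ := h.fd (n + 1)
  have _ := Submodule.finiteDimensional_of_le hY
  have _ := span_fd (KT := KT) Y
  let T : Submodule K F := (M n).map (LinearMap.mulLeft K (algebraMap KT F t))
  obtain ⟨Cc, hdis, hsup⟩ := IsModularLattice.exists_disjoint_and_sup_eq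
    (inf_le_left : Y ⊓ T ≤ Y)
  have hCY : Cc ≤ Y := hsup ▸ le_sup_right
  have _ := Submodule.finiteDimensional_of_le hCY
  have hdim := Submodule.finrank_sup_add_finrank_inf_eq (Y ⊓ T) Cc
  rw [hsup, hdis.eq_bot, finrank_bot, add_zero] at hdim
  have hT : finrank K ↥(Y ⊓ T) ≤ finrank K (M n) :=
    (Submodule.finrank_mono inf_le_right).trans (Submodule.finrank_map_le _ _)
  let y := finBasis K Cc
  have hyt : ∀ l : Fin (finrank K Cc) → K, (∑ i, l i • (y i : F)) ∈ T → ∀ i, l i = 0 := by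
    intro l hl
    have hC : (∑ i, l i • (y i : F)) = ((∑ i, l i • y i : Cc) : F) := by simp
    have h0 : (∑ i, l i • (y i : F)) ∈ (Y ⊓ T) ⊓ Cc := by
      have h2 : (∑ i, l i • (y i : F)) ∈ Cc := hC ▸ Subtype.coe_prop _
      exact ⟨⟨hCY h2, hl⟩, h2⟩
    rw [hdis.eq_bot, Submodule.mem_bot, hC] at h0
    exact Fintype.linearIndependent_iff.1 y.linearIndependent l (Subtype.ext h0)
  have key : ∀ (D : ℕ) (P : Fin (finrank K Cc) → K[X]), (∀ i, P i ∈ degreeLT K D) →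
      ∑ i, aeval t (P i) • (y i : F) = 0 → ∀ i, P i = 0 := by
    intro D
    induction D with
    | zero =>
      intro P hP _ i
      exact degreeLT_sub_eq_zero (a := 0) (b := 0) le_rfl (hP i)
    | succ D ih =>
      intro P hP hsum
      set w : F := ∑ i, aeval t (P i).divX • (y i : F) with hw
      have hsplit : (∑ i, (P i).coeff 0 • (y i : F)) + t • w = 0 := by
        rw [← hsum, hw, Finset.smul_sum, ← Finset.sum_add_distrib]
        refine Finset.sum_congr rfl fun i _ => ?_
        conv_rhs => rw [← divX_mul_X_add (P i)]
        rw [map_add, map_mul, aeval_X, aeval_C, add_smul, algebraMap_smul, mul_comm, mul_smul,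
          add_comm]
      have hyM : ∀ i, (y i : F) ∈ M (n + 1) := fun i => hY (hCY (y i).2)
      obtain ⟨B, hwM⟩ : ∃ B, w ∈ M (n + B) := by
        choose B hB using fun i => h.aeval_smul_mem (P i).divX (n + 1) _ (hyM i)
        refine ⟨∑ i, B i, Submodule.sum_mem _ fun i _ => hB i _ ?_⟩
        exact (Finset.single_le_sum (fun _ _ => Nat.zero_le _) (Finset.mem_univ i)).trans
          (Nat.le_add_left _ _)
      have htw : t • w ∈ M (n + 1) := by
        rw [eq_neg_of_add_eq_zero_right hsplit]
        exact neg_mem (Submodule.sum_mem _ fun i _ => Submodule.smul_mem _ _ (hyM i))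
      have hdesc : ∀ k, w ∈ M (n + k) → w ∈ M n := by
        intro k
        induction k with
        | zero => exact id
        | succ k ih' => exact fun hn => ih' (h.sat _ w hn (h.mono' (by omega) htw))
      have hw1 := hdesc B hwM
      have h0 : ∀ i, (P i).coeff 0 = 0 := by
        apply hyt
        rw [eq_neg_of_add_eq_zero_left hsplit, Algebra.smul_def]
        exact neg_mem ⟨w, hw1, rfl⟩
      have hw0 : w = 0 := by
        simp only [h0, zero_smul, Finset.sum_const_zero, zero_add] at hsplit
        rcases smul_eq_zero.1 hsplit with h2 | h2
        · exact absurd (h2 ▸ isAlgebraic_zero) ht.trans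
        · exact h2
      intro i
      rw [← divX_mul_X_add (P i), h0 i, ih _ (fun i => divX_mem_degreeLT (hP i)) (hw.symm.trans hw0) i]
      simp
  have hli : LinearIndependent KT fun i =>
      (⟨(y i : F), Submodule.subset_span (hCY (y i).2)⟩ : Submodule.span KT (Y : Set F)) := by
    apply LinearIndependent.of_comp (Submodule.span KT (Y : Set F)).subtype
    rw [Fintype.linearIndependent_iff]
    intro g hg
    obtain ⟨Q, P, hQ, hP⟩ := ht.common g
    have hP0 : ∀ i, P i = 0 := by
      refine key (∑ i, ((P i).natDegree + 1)) P (fun i => ?_) ?_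
      · rw [mem_degreeLT]
        refine lt_of_le_of_lt degree_le_natDegree ?_
        have := Finset.single_le_sum (f := fun i => (P i).natDegree + 1)
          (fun _ _ => Nat.zero_le _) (Finset.mem_univ i)
        exact_mod_cast (Nat.lt_of_succ_le this)
      · have h2 := congrArg (fun x => aeval t Q • x) hg
        simp only [smul_zero, Finset.smul_sum, Function.comp_apply, Submodule.subtype_apply] at h2
        rw [← h2]
        refine Finset.sum_congr rfl fun i _ => ?_
        rw [← hP, mul_comm, mul_smul]
    intro i
    have h2 := hP i
    rw [hP0 i, map_zero] at h2
    rcases mul_eq_zero.1 h2 with h3 | h3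
    · exact h3
    · exact absurd (ht.aeval_inj (h3.trans (map_zero _).symm)) hQ
  have hcard := hli.fintype_card_le_finrank
  rw [Fintype.card_fin] at hcard
  omega

/-- Sections of degree one (`M 2`) that are `K`-independent modulo `t` are `KT`-independent. -/
theorem span_section (ht : RatGen K t) (h : SectionModule t M)
    (h1 : M 1 = 1) (Y : Submodule K F) (hY : Y ≤ M 2) :
    finrank K Y ≤ finrank KT (Submodule.span KT (Y : Set F)) + 1 := by
  have e := h.pre.span_bound ht 1 Y hY
  rwa [h1, Submodule.one_eq_span, finrank_span_singleton one_ne_zero] at e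

end GenSpec

end

/-! ### Growth of powers -/

section

open Module Polynomial

section Growth

set_option linter.unusedSectionVars false

variable {K F : Type*} [Field K] [Field F] [Algebra K F]

/-- The multiples `h X` of a space of functions `X`. -/
def hm (h : F) (X : Submodule K F) : Submodule K F := X.map (LinearMap.mulLeft K h)

theorem mem_hm {h : F} {X : Submodule K F} {x : F} : x ∈ hm h X ↔ ∃ w ∈ X, h * w = x := Iff.rfl

theorem mul_mem_hm {h : F} {X : Submodule K F} {x : F} (hx : x ∈ X) : h * x ∈ hm h X :=
  ⟨x, hx, rfl⟩

theorem finrank_hm {h : F} (hh : h ≠ 0) (X : Submodule K F) : finrank K (hm h X) = finrank K X :=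
  finrank_map_inj _ (mul_right_injective₀ hh) X

instance (h : F) (X : Submodule K F) [FiniteDimensional K X] : FiniteDimensional K (hm h X) := by
  unfold hm; infer_instance

theorem hm_mono (h : F) {X Y : Submodule K F} (hXY : X ≤ Y) : hm h X ≤ hm h Y :=
  Submodule.map_mono hXY

theorem mul_hm (h : F) (X Y : Submodule K F) : X * hm h Y = hm h (X * Y) := by
  have hY : ∀ Y : Submodule K F, hm h Y = Submodule.span K {h} * Y := by
    intro Y
    ext x
    rw [Submodule.mem_span_singleton_mul]
    rfl
  rw [hY, hY, ← mul_assoc, ← mul_assoc, mul_comm X]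

theorem finrank_sup_hm {h : F} (hh : h ≠ 0) (X : Submodule K F) [FiniteDimensional K X] :
    finrank K ↥(X ⊔ hm h X) + finrank K ↥(X ⊓ X.comap (LinearMap.mulLeft K h)) =
      2 * finrank K X := by
  have h1 := Submodule.finrank_sup_add_finrank_inf_eq X (hm h X)
  rw [finrank_hm hh] at h1
  have h2 : X ⊓ hm h X = hm h (X ⊓ X.comap (LinearMap.mulLeft K h)) := by
    ext x
    constructor
    · rintro ⟨hx, w, hw, rfl⟩
      exact ⟨w, ⟨hw, hx⟩, rfl⟩
    · rintro ⟨w, ⟨hw, hw'⟩, rfl⟩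
      exact ⟨hw', w, hw, rfl⟩
  rw [h2, finrank_hm hh] at h1
  omega

/-- If `J₂ = J₁ + h J₁` and the dimensions grow linearly, then `J₁ ∩ h⁻¹ J₁` is no larger
than `J₀`. -/
theorem sat_of_dim {h : F} (hh : h ≠ 0) {J₀ J₁ J₂ : Submodule K F} [FiniteDimensional K J₁]
    (h01 : J₀ ≤ J₁) (h01' : hm h J₀ ≤ J₁) (hgen : J₂ = J₁ ⊔ hm h J₁)
    (hd : finrank K J₂ + finrank K J₀ = 2 * finrank K J₁) :
    ∀ b ∈ J₁, h * b ∈ J₁ → b ∈ J₀ := by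
  have h1 := finrank_sup_hm hh J₁
  rw [← hgen] at h1
  have h2 : J₀ = J₁ ⊓ J₁.comap (LinearMap.mulLeft K h) := by
    have : FiniteDimensional K ↥(J₁ ⊓ J₁.comap (LinearMap.mulLeft K h)) :=
      Submodule.finiteDimensional_of_le inf_le_left
    refine Submodule.eq_of_le_of_finrank_eq ?_ (by omega)
    exact fun x hx => ⟨h01 hx, h01' (mul_mem_hm hx)⟩
  intro b hb hb'
  rw [h2]
  exact ⟨hb, hb'⟩

/-- Converse of `sat_of_dim`. -/
theorem gen_of_dim {h : F} (hh : h ≠ 0) {J₀ J₁ J₂ : Submodule K F} [FiniteDimensional K J₁]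
    [FiniteDimensional K J₂]
    (h01 : J₀ ≤ J₁) (h01' : hm h J₀ ≤ J₁) (h12 : J₁ ≤ J₂) (h12' : hm h J₁ ≤ J₂)
    (hsat : ∀ b ∈ J₁, h * b ∈ J₁ → b ∈ J₀)
    (hd : finrank K J₂ + finrank K J₀ = 2 * finrank K J₁) :
    J₂ = J₁ ⊔ hm h J₁ := by
  have h1 := finrank_sup_hm hh J₁
  have h2 : J₀ = J₁ ⊓ J₁.comap (LinearMap.mulLeft K h) :=
    le_antisymm (fun x hx => ⟨h01 hx, h01' (mul_mem_hm hx)⟩) fun b hb => hsat b hb.1 hb.2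
  rw [← h2] at h1
  exact (Submodule.eq_of_le_of_finrank_eq (sup_le h12 h12') (by omega)).symm

/-- Growth of the powers of `V` inside a saturated graded ring `A`: outside the trivial range
each step gains at least `s`, and the first step (past degree one) that gains exactly `s`
forces `V ^ n = A n` from there on. -/
theorem growth_aux {V : Submodule K F} [FiniteDimensional K V] (h1V : (1 : F) ∈ V)
    {A : ℕ → Submodule K F} [∀ n, FiniteDimensional K (A n)] {h : F} (hh : h ≠ 0) (hhV : h ∈ V)
    (hVA : ∀ n, V ^ n ≤ A n) (hmono : ∀ n, A n ≤ A (n + 1)) (hmul : ∀ n, hm h (A n) ≤ A (n + 1))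
    (hsat : ∀ n, ∀ x ∈ A (n + 1), h * x ∈ A (n + 1) → x ∈ A n)
    (hgen : ∀ n, 2 ≤ n → A (n + 1) ≤ A n ⊔ hm h (A n))
    (s : ℕ) (hdim : ∀ n, 1 ≤ n → finrank K (A (n + 1)) = finrank K (A n) + s)
    (h2 : A 2 ≤ V ^ 2 ⊔ hm h (A 1)) (N : ℕ) (hN : ∀ n, N ≤ n → V ^ n = A n) :
    (∀ n, 1 ≤ n → finrank K ↥(V ^ n) + s ≤ finrank K ↥(V ^ (n + 1))) ∧
    ∀ n, 1 ≤ n → finrank K ↥(V ^ (n + 1)) = finrank K ↥(V ^ n) + s →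
      (n = 1 → V ^ 3 ≤ V ^ 2 ⊔ hm h (V ^ 2)) → V ^ n = A n := by
  have hVmono : ∀ {a b : ℕ}, a ≤ b → V ^ a ≤ V ^ b := fun hab =>
    pow_le_pow_right₀ (Submodule.one_le.2 h1V) hab
  have hVh : ∀ n, hm h (V ^ n) ≤ V ^ (n + 1) := by
    rintro n _ ⟨w, hw, rfl⟩
    rw [pow_succ']
    exact Submodule.mul_mem_mul hhV hw
  have hS : ∀ n, 1 ≤ n → A (n + 1) ≤ V ^ (n + 1) ⊔ hm h (A n) := by
    intro n hn
    induction n, hn using Nat.le_induction with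
    | base => exact h2
    | succ n hn ih =>
      refine (hgen (n + 1) (by omega)).trans (sup_le (ih.trans (sup_le_sup ?_ ?_)) le_sup_right)
      · exact hVmono (by omega)
      · exact hm_mono h (hmono n)
  have hS' : ∀ n, 2 ≤ n → A (n + 1) ≤ V ^ n ⊔ hm h (A n) := by
    intro n hn
    obtain ⟨k, rfl⟩ : ∃ k, n = k + 1 := ⟨n - 1, by omega⟩
    exact (hgen _ hn).trans (sup_le ((hS k (by omega)).trans
      (sup_le_sup le_rfl (hm_mono h (hmono k)))) le_sup_right)
  have hcount : ∀ n, 1 ≤ n → finrank K ↥(V ^ (n + 1)) = s + finrank K ↥(V ^ (n + 1) ⊓ hm h (A n)) := by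
    intro n hn
    have e1 := Submodule.finrank_sup_add_finrank_inf_eq (V ^ (n + 1)) (hm h (A n))
    rw [finrank_hm hh, ← le_antisymm (hS n hn) (sup_le (hVA _) (hmul n)), hdim n hn] at e1
    omega
  have hle : ∀ n, hm h (V ^ n) ≤ V ^ (n + 1) ⊓ hm h (A n) := fun n =>
    le_inf (hVh n) (hm_mono h (hVA n))
  refine ⟨fun n hn => ?_, ?_⟩
  · rw [hcount n hn, ← finrank_hm hh (V ^ n), add_comm]
    exact Nat.add_le_add_left (Submodule.finrank_mono (hle n)) s
  · intro n hn heq hG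
    have hI : V ^ (n + 1) ⊓ hm h (A n) = hm h (V ^ n) := by
      refine (Submodule.eq_of_le_of_finrank_eq (hle n) ?_).symm
      rw [finrank_hm hh]
      have := hcount n hn
      omega
    have hstep : V ^ (n + 2) ≤ V ^ (n + 1) ⊔ hm h (V ^ (n + 1)) := by
      rcases Nat.lt_or_ge 1 n with h1 | h1
      · have h3 : V ^ (n + 1) ≤ V ^ n ⊔ hm h (V ^ n) := by
          intro x hx
          obtain ⟨u, hu, y, hy, rfl⟩ := Submodule.mem_sup.1 (hS' n h1 (hVA _ hx))
          refine Submodule.add_mem_sup hu ?_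
          rw [← hI]
          refine ⟨?_, hy⟩
          have := sub_mem hx (hVmono (Nat.le_succ n) hu)
          rwa [add_sub_cancel_left] at this
        calc V ^ (n + 2) = V * V ^ (n + 1) := pow_succ' _ _
          _ ≤ V * (V ^ n ⊔ hm h (V ^ n)) := mul_le_mul_right h3 V
          _ = V ^ (n + 1) ⊔ hm h (V ^ (n + 1)) := by
            rw [Submodule.mul_sup, mul_hm, ← pow_succ']
      · obtain rfl : n = 1 := by omega
        exact hG rfl
    have hall : ∀ j, n ≤ j → V ^ (j + 1) ⊓ hm h (A j) = hm h (V ^ j) ∧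
        V ^ (j + 2) ≤ V ^ (j + 1) ⊔ hm h (V ^ (j + 1)) := by
      intro j hj
      induction j, hj using Nat.le_induction with
      | base => exact ⟨hI, hstep⟩
      | succ j hj ih =>
        obtain ⟨ih1, ih2⟩ := ih
        refine ⟨le_antisymm ?_ (hle _), ?_⟩
        · rintro _ ⟨hx, w, hw, rfl⟩
          obtain ⟨u, hu, _, ⟨u', hu', rfl⟩, huu⟩ := Submodule.mem_sup.1 (ih2 hx)
          simp only [LinearMap.mulLeft_apply] at huu hx
          have e1 : h * (w - u') = u := by rw [mul_sub, ← huu]; ring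
          have e2 : w - u' ∈ A j := by
            refine hsat j _ (sub_mem hw (hVA _ hu')) ?_
            rw [e1]; exact hVA _ hu
          have e3 : h * (w - u') ∈ hm h (V ^ j) := by
            rw [← ih1]
            exact ⟨by rw [e1]; exact hu, _, e2, rfl⟩
          obtain ⟨w', hw', hww⟩ := e3
          have e4 : w' = w - u' := mul_left_cancel₀ hh hww
          refine mul_mem_hm ?_
          rw [show w = w' + u' by rw [e4]; ring]
          exact add_mem (hVmono (Nat.le_succ j) hw') hu'
        · calc V ^ (j + 1 + 2) = V * V ^ (j + 2) := pow_succ' _ _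
            _ ≤ V * (V ^ (j + 1) ⊔ hm h (V ^ (j + 1))) := mul_le_mul_right ih2 V
            _ = V ^ (j + 1 + 1) ⊔ hm h (V ^ (j + 1 + 1)) := by
              rw [Submodule.mul_sup, mul_hm, ← pow_succ']
    have hv : ∀ k, finrank K ↥(V ^ (n + k)) = finrank K ↥(V ^ n) + k * s := by
      intro k
      induction k with
      | zero => simp
      | succ k ih =>
        rw [← add_assoc, hcount _ (by omega), (hall _ (by omega)).1, finrank_hm hh, ih]
        ring
    have ha : ∀ k, finrank K ↥(A (n + k)) = finrank K ↥(A n) + k * s := by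
      intro k
      induction k with
      | zero => simp
      | succ k ih =>
        rw [← add_assoc, hdim _ (by omega), ih]
        ring
    have e1 := hv N
    have e2 := ha N
    rw [hN (n + N) (by omega)] at e1
    exact Submodule.eq_of_le_of_finrank_eq (hVA n) (by omega)

end Growth

end

/-! ### Castelnuovo's bound -/

section

open Module Polynomial

section Castelnuovo

set_option linter.unusedSectionVars false

variable {K KT F : Type*} [Field K] [Field KT] [Field F] [Algebra K KT] [Algebra KT F]
  [Algebra K F] [IsScalarTower K KT F]
  {t : KT} {V : Submodule K F}

theorem span_mul_eq (X Y : Submodule K F) :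
    Submodule.span KT ((X * Y : Submodule K F) : Set F) =
      Submodule.span KT (X : Set F) * Submodule.span KT (Y : Set F) := by
  apply le_antisymm
  · rw [Submodule.span_le]
    intro z hz
    refine Submodule.mul_induction_on hz (fun x hx y hy => ?_) fun a b ha hb => add_mem ha hb
    exact Submodule.mul_mem_mul (Submodule.subset_span hx) (Submodule.subset_span hy)
  · rw [Submodule.span_mul_span]
    apply Submodule.span_mono
    rintro _ ⟨x, hx, y, hy, rfl⟩
    exact Submodule.mul_mem_mul hx hy

/-- If `V ^ 2` is as small as possible, then `V ^ 3` is generated in degree two.  A functional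
`ψ` violating this would cut out a subspace `N` of `V` for which `N V` is too small for the
Hopf-type lemma over `KT`. -/
theorem cubic_step [Infinite K] [FiniteDimensional KT F] [FiniteDimensional K V] (ht : RatGen K t)
    (hmin : ∀ E : IntermediateField KT F, E = ⊥ ∨ E = ⊤)
    {M : ℕ → Submodule K F} (hM : SectionModule t M) (hM1 : M 1 = 1) (hVM : V ≤ M 2)
    (h1V : (1 : F) ∈ V) (htV : algebraMap KT F t ∈ V) (c : K)
    (hρ : finrank KT F + 4 ≤ 2 * finrank K V)
    (heq : finrank K ↥(V ^ 2) = finrank K V + finrank KT F) :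
    V ^ 3 ≤ V ^ 2 ⊔ hm (lin F t c) (V ^ 2) := by
  classical
  by_contra hnot
  obtain ⟨x₀, hx₀, hx₀U⟩ := Set.not_subset.1 hnot
  obtain ⟨ψ, hψx, hψU⟩ := Submodule.exists_le_ker_of_notMem hx₀U
  let Φ : V →ₗ[K] Dual K ↥(V ^ 2) := ((LinearMap.mul K F).compr₂ ψ).domRestrict₁₂ V (V ^ 2)
  have hΦ : ∀ (x : V) (y : ↥(V ^ 2)), Φ x y = ψ ((x : F) * y) := fun x y => rfl
  let N : Submodule K F := (LinearMap.ker Φ).map V.subtype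
  have hNV : N ≤ V := by rintro _ ⟨x, -, rfl⟩; exact x.2
  have hN : ∀ x ∈ N, ∀ y ∈ V ^ 2, ψ (x * y) = 0 := by
    rintro _ ⟨x, hx, rfl⟩ y hy
    exact LinearMap.congr_fun (LinearMap.mem_ker.1 hx) ⟨y, hy⟩
  have memN : ∀ x ∈ V, (∀ y ∈ V ^ 2, ψ (x * y) = 0) → x ∈ N := by
    intro x hx h
    exact ⟨⟨x, hx⟩, LinearMap.mem_ker.2 (LinearMap.ext fun y => h y y.2), rfl⟩
  have _ := Submodule.finiteDimensional_of_le hNV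
  have h1N : (1 : F) ∈ N := memN 1 h1V fun y hy => by
    rw [one_mul]; exact hψU (Submodule.mem_sup_left hy)
  have hcV : ∀ c' : K, lin F t c' ∈ V := fun c' => by
    refine sub_mem htV ?_
    rw [Algebra.algebraMap_eq_smul_one]
    exact Submodule.smul_mem _ _ h1V
  have hlN : ∀ c' : K, lin F t c' ∈ N := by
    have h0 : lin F t c ∈ N := memN _ (hcV c) fun y hy =>
      hψU (Submodule.mem_sup_right (mul_mem_hm hy))
    intro c'
    have : lin F t c' = lin F t c + (c - c') • (1 : F) := by
      simp only [lin, Algebra.smul_def, mul_one, map_sub]; ring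
    rw [this]
    exact add_mem h0 (Submodule.smul_mem _ _ h1N)
  have hNker : finrank K N = finrank K (LinearMap.ker Φ) :=
    finrank_map_inj _ V.injective_subtype _
  have hrn := LinearMap.finrank_range_add_finrank_ker Φ
  have ha : 1 ≤ finrank K (LinearMap.range Φ) := by
    rw [Nat.one_le_iff_ne_zero]
    intro h0
    have hz := LinearMap.range_eq_bot.1 (Submodule.finrank_eq_zero.1 h0)
    apply hψx
    have : V ^ 3 ≤ LinearMap.ker ψ := by
      rw [pow_succ', Submodule.mul_le]
      intro x hx y hy
      have := hΦ ⟨x, hx⟩ ⟨y, hy⟩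
      rw [hz] at this
      exact this.symm
    exact this hx₀
  have hco := Subspace.finrank_add_finrank_dualCoannihilator_eq (LinearMap.range Φ)
  have hNV2 : N * V ≤ V ^ 2 := by rw [pow_two]; exact mul_le_mul_left hNV V
  have hupper : finrank K ↥(N * V) ≤ finrank K (LinearMap.range Φ).dualCoannihilator := by
    rw [← finrank_map_inj (V ^ 2).subtype (V ^ 2).injective_subtype]
    have : FiniteDimensional K ↥((LinearMap.range Φ).dualCoannihilator.map (V ^ 2).subtype) :=
      inferInstance
    apply Submodule.finrank_mono
    intro z hz
    refine ⟨⟨z, hNV2 hz⟩, ?_, rfl⟩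
    rw [SetLike.mem_coe, Submodule.mem_dualCoannihilator]
    rintro _ ⟨x, rfl⟩
    rw [hΦ]
    have : N * V ≤ (LinearMap.ker (ψ ∘ₗ LinearMap.mulLeft K (x : F))) := by
      rw [Submodule.mul_le]
      intro n hn v hv
      rw [LinearMap.mem_ker, LinearMap.comp_apply, LinearMap.mulLeft_apply, mul_left_comm]
      exact hN n hn _ (by rw [pow_two]; exact Submodule.mul_mem_mul x.2 hv)
    exact this hz
  have _ := hM.fd 2
  obtain ⟨c', hc'⟩ := general_section ht (M 2) (N * V)
  have hlow : finrank K V ≤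
      finrank K ↥(N * V ⊓ (M 2).map (LinearMap.mulLeft K (lin F t c'))) := by
    rw [← finrank_hm (lin_ne_zero ht c') V]
    refine Submodule.finrank_mono (le_inf ?_ (hm_mono _ hVM))
    rintro _ ⟨w, hw, rfl⟩
    exact Submodule.mul_mem_mul (hlN c') hw
  have hs1 := span_section ht hM hM1 N (hNV.trans hVM)
  have hs2 := span_section ht hM hM1 V hVM
  have hne : ∀ X : Submodule K F, (1 : F) ∈ X → Submodule.span KT (X : Set F) ≠ ⊥ := by
    intro X hX h0
    have h2 : (1 : F) ∈ Submodule.span KT (X : Set F) := Submodule.subset_span hX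
    rw [h0] at h2
    exact one_ne_zero ((Submodule.mem_bot KT).1 h2)
  rw [span_mul_eq] at hc'
  rcases hopf_of_minimal hmin _ _ (hne N h1N) (hne V h1V) with h3 | h3
  · omega
  · rw [h3, finrank_top] at hc'
    omega

/-- Castelnuovo-type lower bound for the dimensions of the powers of `V`, together with the
dimensions of the saturated pieces. -/
theorem castelnuovo_growth [Infinite K]
    (hcl : ∀ H : Subalgebra K F, FiniteDimensional K H → H = ⊥)
    (hmin : ∀ E : IntermediateField KT F, E = ⊥ ∨ E = ⊤) (ht : RatGen K t)
    (hV : PowGen t V) (hA : IdealFam t V (fun n => V ^ n)) (s π : ℤ)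
    (hdim : ∃ n₀ : ℕ, ∀ n : ℕ, n ≥ n₀ → (finrank K ↥(V ^ n) : ℤ) = s * n + 1 - π)
    (hρ : s + 4 ≤ 2 * (finrank K V : ℤ)) :
    (∀ n : ℕ, 1 ≤ n → (finrank K (tilde V (fun n => V ^ n) n) : ℤ) = s * n + 1 - π) ∧
    ∀ n : ℕ, 1 ≤ n → s * n + 1 - π - max 0 (s + 1 - π - finrank K V - n + 1) ≤
      (finrank K ↥(V ^ n) : ℤ) := by
  obtain ⟨hfd, hs, hπ, -, hcoh⟩ := coh_main hcl ht hV hA s π hdim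
  have _ := hV.fd
  have hVA : ∀ n, V ^ n ≤ tilde V (fun n => V ^ n) n := hA.le_tilde
  have _ := fun n => hA.tilde_fd hV n
  have h1 : finrank K V ≤ finrank K (tilde V (fun n => V ^ n) 1) := by
    have := Submodule.finrank_mono (hVA 1)
    rwa [pow_one] at this
  obtain ⟨hdA, hgenA⟩ := hcoh (by zify at h1; linarith)
  have hM := sectionModule_tilde hcl ht.trans hV hA hA
  have hM1 : shiftTilde V (fun n => V ^ n) 1 = 1 := tilde_zero_eq hcl hV hA
  have hVM : V ≤ shiftTilde V (fun n => V ^ n) 2 := by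
    have := hVA 1
    rwa [pow_one] at this
  refine ⟨hdA, ?_⟩
  obtain ⟨nt, hnt⟩ := hA.tilde_eq hV
  -- a general member of the pencil
  obtain ⟨c, hc⟩ := general_section ht (tilde V (fun n => V ^ n) 1) (V ^ 2)
  have hspan : Submodule.span KT ((V ^ 2 : Submodule K F) : Set F) = ⊤ := by
    have hs2 := span_section ht hM hM1 V hVM
    have hne : Submodule.span KT (V : Set F) ≠ ⊥ := by
      intro h0
      have h2 : (1 : F) ∈ Submodule.span KT (V : Set F) := Submodule.subset_span hV.one
      rw [h0] at h2
      exact one_ne_zero ((Submodule.mem_bot KT).1 h2)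
    rw [pow_two, span_mul_eq]
    rcases hopf_of_minimal hmin _ _ hne hne with h3 | h3
    · have h4 := Submodule.finrank_le (Submodule.span KT (V : Set F) * Submodule.span KT (V : Set F))
      omega
    · exact h3
  rw [hspan, finrank_top] at hc
  have hh := lin_ne_zero (F := F) ht c
  have hmulA : ∀ n, hm (lin F t c) (tilde V (fun n => V ^ n) n) ≤ tilde V (fun n => V ^ n) (n + 1) := by
    rintro n _ ⟨w, hw, rfl⟩
    rw [LinearMap.mulLeft_apply, lin_mul]
    exact sub_mem (hM.smul (n + 1) w hw) (Submodule.smul_mem _ _ (hM.mono (n + 1) hw))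
  obtain ⟨hg1, hg2⟩ := growth_aux (V := V) hV.one (A := tilde V (fun n => V ^ n)) hh
    (by
      refine sub_mem hV.t_mem ?_
      rw [Algebra.algebraMap_eq_smul_one]
      exact Submodule.smul_mem _ _ hV.one) hVA (hA.tilde_mono hV) hmulA
    (by
      intro n x hx hhx
      refine hM.sat (n + 1) x hx ?_
      rw [lin_mul] at hhx
      have := add_mem hhx (Submodule.smul_mem _ c hx)
      rwa [sub_add_cancel] at this)
    (by
      intro n hn x hx
      obtain ⟨u, hu, w, hw, rfl⟩ := hgenA n hn x hx
      refine Submodule.mem_sup.2 ⟨u + c • w, add_mem hu (Submodule.smul_mem _ _ hw),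
        lin F t c * w, mul_mem_hm hw, ?_⟩
      rw [lin_mul]; abel)
    (finrank KT F)
    (by
      intro n hn
      have e1 := hdA n hn
      have e2 := hdA (n + 1) (by omega)
      rw [← hs] at e1 e2
      push_cast at e2
      zify
      linarith)
    (by
      have e1 := hdA 1 le_rfl
      have e2 := hdA 2 (by omega)
      have e3 := Submodule.finrank_sup_add_finrank_inf_eq (V ^ 2)
        (hm (lin F t c) (tilde V (fun n => V ^ n) 1))
      rw [finrank_hm hh] at e3
      refine (Submodule.eq_of_le_of_finrank_le (sup_le (hVA 2) (hmulA 1)) ?_).ge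
      unfold hm at e3 ⊢
      rw [← hs] at e1 e2
      zify at e3 hc ⊢
      push_cast at e1 e2
      linarith)
    nt (fun n hn => (hnt n hn).symm)
  intro n hn
  have hρV : finrank K ↥(V ^ 1) = finrank K V := by rw [pow_one]
  induction n, hn using Nat.le_induction with
  | base =>
    rw [hρV]
    have e1 := hdA 1 le_rfl
    zify at h1
    push_cast
    rw [max_eq_right (by push_cast at e1; linarith)]
    linarith
  | succ n hn ih =>
    have h3 := hg1 n hn
    by_cases h4 : finrank K ↥(V ^ (n + 1)) = finrank K ↥(V ^ n) + finrank KT F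
    · have h5 := hg2 n hn h4 (by
        rintro rfl
        refine cubic_step ht hmin hM hM1 hVM hV.one hV.t_mem c (by zify; rw [hs]; linarith) ?_
        rw [h4, hρV])
      have e1 := hdA n hn
      rw [← h5] at e1
      rw [h4]
      push_cast
      have := le_max_left 0 (s + 1 - π - finrank K V - (n + 1 : ℤ) + 1)
      linarith
    · have h5 : finrank K ↥(V ^ n) + finrank KT F + 1 ≤ finrank K ↥(V ^ (n + 1)) := by omega
      have h6 := Submodule.finrank_mono (hVA (n + 1))
      have e1 := hdA (n + 1) (by omega)
      zify at h5 h6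
      rw [hs] at h5
      push_cast at e1 ⊢
      have hm0 := le_max_left 0 (s + 1 - π - finrank K V - (n + 1 : ℤ) + 1)
      have hm1 := le_max_right 0 (s + 1 - π - finrank K V - (n + 1 : ℤ) + 1)
      rcases max_cases 0 (s + 1 - π - finrank K V - (n : ℤ) + 1) with ⟨h7, -⟩ | ⟨h7, -⟩ <;>
        rw [h7] at ih <;> linarith

end Castelnuovo

end

/-! ### The bound for a section in terms of function fields -/

section

open Module Polynomial

section TheoremA

set_option linter.unusedSectionVars false

/-- The numerical part of the estimate: `v`, `x` and `w` stand for the dimensions of the pieces of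
degree `i` of the coordinate ring of the section of the surface, of the ideal of the section of
the curve in it, and of the coordinate ring of the section of the curve. -/
theorem hF_le_aux {r d s π ρ i v x w : ℤ} (hr : 4 ≤ r) (hs1 : r - 1 ≤ s)
    (hs2 : s ≤ 2 * r - 4) (hd : s * (s - 1) ≤ d) (hρ : r ≤ ρ) (hπ : 0 ≤ π) (ha : ρ ≤ s + 1 - π)
    (hi : 1 ≤ i) (hw : w = v - x)
    (hv : s * i + 1 - π - max 0 (s + 1 - π - ρ - i + 1) ≤ v)
    (hx0 : s * i < d → x = 0)
    (htri : x ≤ s * i + 1 - π - d ∨ x = 0 ∨ 2 * x ≤ s * i + 2 - d) :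
    hF r d s π i ≤ w := by
  have hs : 0 < s := by linarith
  have hdm := Int.emod_add_mul_ediv (d - 1) s
  have he0 := Int.emod_nonneg (d - 1) hs.ne'
  have he1 := Int.emod_lt_of_pos (d - 1) hs
  have hm : s - 2 ≤ (d - 1) / s := by
    rw [Int.le_ediv_iff_mul_le hs]
    nlinarith
  unfold hF
  set m := (d - 1) / s
  set ε := (d - 1) % s
  split_ifs with h1 h2 h3
  · have : s * i ≤ s * m := mul_le_mul_of_nonneg_left h1.2 hs.le
    rw [hx0 (by linarith)] at hw
    have hmax : max 0 (s + 1 - π - ρ - i + 1) ≤ max 0 (s - r + 1 - π - i + 1) :=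
      max_le_max le_rfl (by linarith)
    linarith [mul_comm i s]
  · have hsi : s * i = d - 1 - ε + s := by rw [h2, mul_add]; linarith
    rw [max_eq_left (by linarith)] at hv
    rw [hsi] at hv htri
    omega
  · have hsi : s * (m + 2) ≤ s * i := mul_le_mul_of_nonneg_left h3 hs.le
    rw [mul_add] at hsi
    rw [max_eq_left (by linarith)] at hv
    generalize s * i = y at *
    omega
  · exfalso
    omega

variable {K KT F L : Type*} [Field K] [Field KT] [Field F] [Algebra K KT] [Algebra KT F]
  [Algebra K F] [IsScalarTower K KT F] [CommRing L] [Algebra K L]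
  {t : KT}

/-- The functions in `Z ^ n` on the surface section that vanish on the curve section. -/
def idealPart (Z : Submodule K (F × L)) (n : ℕ) : Submodule K F :=
  (Z ^ n).comap (LinearMap.inl K F L)

theorem mem_idealPart {Z : Submodule K (F × L)} {n : ℕ} {b : F} :
    b ∈ idealPart Z n ↔ (b, (0 : L)) ∈ Z ^ n := Iff.rfl

theorem map_fst_pow (Z : Submodule K (F × L)) (n : ℕ) :
    (Z.map (AlgHom.fst K F L).toLinearMap) ^ n = (Z ^ n).map (AlgHom.fst K F L).toLinearMap :=
  (Submodule.map_pow Z (AlgHom.fst K F L) n).symm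

theorem map_snd_pow (Z : Submodule K (F × L)) (n : ℕ) :
    (Z.map (AlgHom.snd K F L).toLinearMap) ^ n = (Z ^ n).map (AlgHom.snd K F L).toLinearMap :=
  (Submodule.map_pow Z (AlgHom.snd K F L) n).symm

/-- The lower bound for the Hilbert function of the curve section, in terms of function fields:
`Z` is the space of linear forms, mapping to functions on the surface section (the field `F`) and
on the curve section (the ring `L`). -/
theorem section_bound [Infinite K]
    (hcl : ∀ H : Subalgebra K F, FiniteDimensional K H → H = ⊥)
    (hmin : ∀ E : IntermediateField KT F, E = ⊥ ∨ E = ⊤) (ht : RatGen K t)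
    (Z : Submodule K (F × L)) [FiniteDimensional K Z] (h1Z : (1 : F × L) ∈ Z)
    (hV : PowGen t (Z.map (AlgHom.fst K F L).toLinearMap))
    (hinj : ∀ n, ∀ z ∈ Z ^ n, z.1 = 0 → z.2 = 0)
    {r d s π : ℤ} (hr : 4 ≤ r) (hs1 : r - 1 ≤ s) (hs2 : s ≤ 2 * r - 4) (hd : s * (s - 1) ≤ d)
    (hdimV : ∃ n₀ : ℕ, ∀ n : ℕ, n ≥ n₀ →
      (finrank K ↥((Z.map (AlgHom.fst K F L).toLinearMap) ^ n) : ℤ) = s * n + 1 - π)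
    (hdimW : ∃ n₀ : ℕ, ∀ n : ℕ, n ≥ n₀ →
      (finrank K ↥((Z.map (AlgHom.snd K F L).toLinearMap) ^ n) : ℤ) = d)
    (hW : r ≤ finrank K (Z.map (AlgHom.snd K F L).toLinearMap)) (i : ℕ) (hi : 1 ≤ i) :
    hF r d s π i ≤ finrank K ↥((Z.map (AlgHom.snd K F L).toLinearMap) ^ i) := by
  have hs : 0 < s := by linarith
  set V := Z.map (AlgHom.fst K F L).toLinearMap with hVdef
  set W := Z.map (AlgHom.snd K F L).toLinearMap with hWdef
  obtain ⟨nV, hnV⟩ := hdimV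
  obtain ⟨nW, hnW⟩ := hdimW
  have _ := hV.fd
  have htne : algebraMap KT F t ≠ 0 := by
    have := lin_ne_zero (F := F) ht (0 : K)
    rwa [lin, map_zero, sub_zero] at this
  have hVmono : ∀ n, V ^ n ≤ V ^ (n + 1) := fun n => hV.pow_mono (Nat.le_succ n)
  have hVhm : ∀ n, hm (algebraMap KT F t) (V ^ n) ≤ V ^ (n + 1) := by
    rintro n _ ⟨w, hw, rfl⟩
    rw [pow_succ']
    exact Submodule.mul_mem_mul hV.t_mem hw
  have hVsat : ∃ n₀, ∀ n ≥ n₀, ∀ b ∈ V ^ (n + 1), t • b ∈ V ^ (n + 1) → b ∈ V ^ n := by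
    obtain ⟨N, hN⟩ := hV.gen
    refine ⟨max N nV, fun n hn b hb htb => ?_⟩
    rw [t_smul_eq] at htb
    refine sat_of_dim htne (hVmono n) (hVhm n) (J₂ := V ^ (n + 2)) ?_ ?_ b hb htb
    · refine le_antisymm (fun x hx => ?_) (sup_le (hVmono _) (hVhm _))
      obtain ⟨u, hu, w, hw, rfl⟩ := hN (n + 1) (by omega) x hx
      rw [t_smul_eq]
      exact Submodule.add_mem_sup hu (mul_mem_hm hw)
    · have e0 := hnV n (by omega)
      have e1 := hnV (n + 1) (by omega)
      have e2 := hnV (n + 2) (by omega)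
      push_cast at e1 e2
      zify
      linarith
  have hA := powFam hV hVsat
  have hZmono : ∀ n, Z ^ n ≤ Z ^ (n + 1) := fun n =>
    pow_le_pow_right₀ (Submodule.one_le.2 h1Z) (Nat.le_succ n)
  have hVmem : ∀ n, ∀ x ∈ V ^ n, ∃ y, (x, y) ∈ Z ^ n := by
    intro n x hx
    rw [hVdef, map_fst_pow] at hx
    obtain ⟨⟨a, b⟩, hz, rfl⟩ := hx
    exact ⟨b, hz⟩
  have hIV : ∀ n, idealPart Z n ≤ V ^ n := by
    intro n x hx
    rw [hVdef, map_fst_pow]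
    exact ⟨_, mem_idealPart.1 hx, rfl⟩
  have hImul : ∀ n, ∀ x ∈ V, ∀ y ∈ idealPart Z n, x * y ∈ idealPart Z (n + 1) := by
    intro n x hx y hy
    obtain ⟨x', hx'⟩ := hVmem 1 x (by rwa [pow_one])
    rw [pow_one] at hx'
    rw [mem_idealPart, pow_succ']
    have := Submodule.mul_mem_mul hx' (mem_idealPart.1 hy)
    rwa [Prod.mk_mul_mk, mul_zero] at this
  have hdimI : ∀ n, finrank K ↥(W ^ n) + finrank K (idealPart Z n) = finrank K ↥(V ^ n) := by
    intro n
    have e1 := finrank_map_add_inf_ker (AlgHom.snd K F L).toLinearMap (Z ^ n)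
    have e2 : Z ^ n ⊓ LinearMap.ker (AlgHom.snd K F L).toLinearMap =
        (idealPart Z n).map (LinearMap.inl K F L) := by
      ext ⟨a, b⟩
      constructor
      · rintro ⟨h1, h2⟩
        obtain rfl : b = 0 := h2
        exact ⟨a, h1, rfl⟩
      · rintro ⟨a', h1, h2⟩
        obtain ⟨rfl, rfl⟩ := Prod.mk.inj h2
        exact ⟨h1, rfl⟩
    have e3 := finrank_map_add_inf_ker (AlgHom.fst K F L).toLinearMap (Z ^ n)
    have e4 : Z ^ n ⊓ LinearMap.ker (AlgHom.fst K F L).toLinearMap = ⊥ := by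
      rw [Submodule.eq_bot_iff]
      rintro ⟨a, b⟩ ⟨h1, h2⟩
      obtain rfl : a = 0 := h2
      have : b = 0 := hinj n _ h1 rfl
      rw [this]; rfl
    rw [e2, finrank_map_inj (LinearMap.inl K F L) LinearMap.inl_injective, ← map_snd_pow] at e1
    rw [e4, finrank_bot, add_zero, ← map_fst_pow] at e3
    rw [← hVdef] at e3
    rw [← hWdef] at e1
    omega
  have hIdim : ∀ n : ℕ, n ≥ max nV nW → (finrank K (idealPart Z n) : ℤ) = s * n + 1 - π - d := by
    intro n hn
    have e1 := hdimI n
    have e2 := hnV n (by omega)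
    have e3 := hnW n (by omega)
    zify at e1
    linarith
  have hIfd : ∀ n, FiniteDimensional K (idealPart Z n) := fun n =>
    Submodule.finiteDimensional_of_le (hIV n)
  have hIsat : ∃ n₀, ∀ n ≥ n₀, ∀ b ∈ idealPart Z (n + 1), t • b ∈ idealPart Z (n + 1) →
      b ∈ idealPart Z n := by
    obtain ⟨n₀, hn₀⟩ := hVsat
    refine ⟨n₀, fun n hn b hb htb => ?_⟩
    obtain ⟨b', hb'⟩ := hVmem n b (hn₀ n hn b (hIV _ hb) (hIV _ htb))
    have h1 := sub_mem (hZmono n hb') (mem_idealPart.1 hb)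
    have h2 := hinj _ _ h1 (by simp)
    obtain rfl : b' = 0 := by simpa using h2
    exact hb'
  have hImono : ∀ n, idealPart Z n ≤ idealPart Z (n + 1) := fun n x hx => hZmono n hx
  have hIhm : ∀ n, hm (algebraMap KT F t) (idealPart Z n) ≤ idealPart Z (n + 1) := by
    rintro n _ ⟨w, hw, rfl⟩
    exact hImul n _ hV.t_mem w hw
  have hI : IdealFam t V (idealPart Z) := by
    refine ⟨hImul, hIV, hIsat, ?_, ?_⟩
    · obtain ⟨n₀, hn₀⟩ := hIsat
      refine ⟨max n₀ (max nV nW) + 1, fun n hn x hx => ?_⟩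
      obtain ⟨k, rfl⟩ : ∃ k, n = k + 1 := ⟨n - 1, by omega⟩
      have e := gen_of_dim htne (hImono k) (hIhm k) (hImono (k + 1)) (hIhm (k + 1))
        (fun b hb hb' => hn₀ k (by omega) b hb (by rwa [t_smul_eq])) (by
          have e0 := hIdim k (by omega)
          have e1 := hIdim (k + 1) (by omega)
          have e2 := hIdim (k + 1 + 1) (by omega)
          push_cast at e1 e2
          zify
          linarith)
      rw [e] at hx
      obtain ⟨u, hu, _, ⟨w, hw, rfl⟩, rfl⟩ := Submodule.mem_sup.1 hx
      exact ⟨u, hu, w, hw, by rw [t_smul_eq]; rfl⟩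
    · refine ⟨max nV nW + (d + π).toNat, fun h0 => ?_⟩
      have e := hIdim (max nV nW + (d + π).toNat) (by omega)
      rw [h0, finrank_bot] at e
      have h1 : d + π ≤ ((max nV nW + (d + π).toNat : ℕ) : ℤ) := by
        push_cast
        have := Int.self_le_toNat (d + π)
        have h2 : (0 : ℤ) ≤ max (nV : ℤ) nW := le_max_of_le_left (Int.natCast_nonneg _)
        linarith
      have h3 : (0 : ℤ) ≤ ((max nV nW + (d + π).toNat : ℕ) : ℤ) := Int.natCast_nonneg _
      generalize ((max nV nW + (d + π).toNat : ℕ) : ℤ) = y at *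
      push_cast at e
      nlinarith
  have hWV : finrank K W ≤ finrank K V := by
    have := hdimI 1
    rw [pow_one, pow_one] at this
    omega
  obtain ⟨-, -, hπ, htri, -⟩ := coh_main hcl ht hV hA s π ⟨nV, hnV⟩
  obtain ⟨hA1, hgrow⟩ := castelnuovo_growth hcl hmin ht hV hA s π ⟨nV, hnV⟩ (by
    zify at hWV; linarith)
  have _ := hI.tilde_fd hV i
  have _ := hA.tilde_fd hV 1
  have hle := Submodule.finrank_mono (hI.le_tilde i)
  have htri' := htri (idealPart Z) d hI ⟨_, hIdim⟩ i
  have hρA := Submodule.finrank_mono (hA.le_tilde 1)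
  have hA1' := hA1 1 le_rfl
  have hdi := hdimI i
  rw [pow_one] at hρA
  push_cast at hA1'
  zify at hWV hle hρA hdi
  refine hF_le_aux (ρ := finrank K V) (v := finrank K ↥(V ^ i)) (x := finrank K (idealPart Z i))
    hr hs1 hs2 hd (by linarith) hπ (by linarith) (by exact_mod_cast hi)
    (by linarith) (hgrow i hi) ?_ ?_
  · intro hlt
    by_contra hne
    have hbot : idealPart Z i ≠ ⊥ := fun h0 => hne (by rw [h0, finrank_bot]; rfl)
    obtain ⟨f, hf, hf0⟩ := Submodule.exists_mem_ne_zero_of_ne_bot hbot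
    have h1 : hm f (V ^ (max nV nW)) ≤ idealPart Z (i + max nV nW) := by
      rintro _ ⟨w, hw, rfl⟩
      rw [LinearMap.mulLeft_apply, mul_comm]
      exact hI.pow_mul _ _ (Submodule.mul_mem_mul hw hf)
    have h2 := Submodule.finrank_mono h1
    rw [finrank_hm hf0] at h2
    have h3 := hnV (max nV nW) (by omega)
    have h4 := hIdim (i + max nV nW) (by omega)
    zify at h2
    push_cast at h3 h4 h2
    linarith
  · rcases htri' with h | h | h
    · left; linarith
    · right; left; rw [h] at hle; push_cast at hle; exact le_antisymm hle (Int.natCast_nonneg _)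
    · right; right; linarith

end TheoremA

end

/-! ### Rational function fields and relative algebraic closedness -/

section

open Module Polynomial

section RatExt

/-- `N` is the field of rational functions over `k` in the independent variables `x`. -/
structure RatExt (k : Type*) {N σ : Type*} [Field k] [Field N] [Algebra k N] (x : σ → N) : Prop where
  ind : AlgebraicIndependent k x
  frac : ∀ y : N, ∃ p q : MvPolynomial σ k, q ≠ 0 ∧
    y * MvPolynomial.aeval x q = MvPolynomial.aeval x p

/-- `k` is algebraically closed in `Q`. -/
def AlgClosedIn (k Q : Type*) [Field k] [Field Q] [Algebra k Q] : Prop :=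
  ∀ a : Q, IsAlgebraic k a → a ∈ (algebraMap k Q).range

theorem algClosedIn_of_isAlgClosed (k Q : Type*) [Field k] [Field Q] [Algebra k Q] [IsAlgClosed k] :
    AlgClosedIn k Q := fun a ha => by
  have _ := (IntermediateField.isAlgebraic_adjoin_simple (K := k) (x := a) ha.isIntegral)
  have h := IsAlgClosed.algebraMap_bijective_of_isIntegral (k := k)
    (K := IntermediateField.adjoin k {a})
  obtain ⟨c, hc⟩ := h.2 ⟨a, IntermediateField.mem_adjoin_simple_self k a⟩
  exact ⟨c, congrArg Subtype.val hc⟩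

theorem RatExt.aeval_ne_zero {k N σ : Type*} [Field k] [Field N] [Algebra k N] {x : σ → N}
    (h : RatExt k x) {q : MvPolynomial σ k} (hq : q ≠ 0) : MvPolynomial.aeval x q ≠ 0 :=
  fun h0 => hq (h.ind (by rw [h0, map_zero]))

attribute [local instance] MvPolynomial.algebraMvPolynomial in
/-- Adjoining independent variables preserves relative algebraic closedness. -/
theorem AlgClosedIn.ratExt {k k₀ Q N σ : Type*} [Field k] [Field k₀] [Field Q] [Field N]
    [Algebra k k₀] [Algebra k Q] [Algebra k N] [Algebra k₀ N] [Algebra Q N]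
    [IsScalarTower k k₀ N] [IsScalarTower k Q N] {x : σ → k₀} (hx : RatExt k x)
    (hN : RatExt Q (fun i => algebraMap k₀ N (x i))) (hcl : AlgClosedIn k Q) :
    AlgClosedIn k₀ N := by
  intro b hb
  set x' : σ → N := fun i => algebraMap k₀ N (x i) with hx'
  let _ : Algebra (MvPolynomial σ Q) N := (MvPolynomial.aeval x').toAlgebra
  let _ : Algebra (MvPolynomial σ k) k₀ := (MvPolynomial.aeval x).toAlgebra
  let _ : Algebra (MvPolynomial σ k) N := ((algebraMap k₀ N).comp (algebraMap _ k₀)).toAlgebra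
  have hmap : ∀ p : MvPolynomial σ k, algebraMap k₀ N (MvPolynomial.aeval x p) =
      MvPolynomial.aeval x' (MvPolynomial.map (algebraMap k Q) p) := by
    intro p
    rw [MvPolynomial.aeval_map_algebraMap]
    have := MvPolynomial.map_aeval (R := k) x (algebraMap k₀ N) p
    rw [this, ← IsScalarTower.algebraMap_eq, MvPolynomial.aeval_def]
    rfl
  have _ : IsScalarTower (MvPolynomial σ k) k₀ N := IsScalarTower.of_algebraMap_eq fun _ => rfl
  have _ : IsScalarTower (MvPolynomial σ k) (MvPolynomial σ Q) N :=
    IsScalarTower.of_algebraMap_eq fun p => hmap p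
  have _ : FaithfulSMul (MvPolynomial σ Q) N := (faithfulSMul_iff_algebraMap_injective _ _).2 hN.ind
  have hfrac : IsFractionRing (MvPolynomial σ Q) N := by
    refine IsFractionRing.of_field _ _ fun y => ?_
    obtain ⟨p, q, hq, h⟩ := hN.frac y
    exact ⟨p, q, eq_div_of_mul_eq (hN.aeval_ne_zero hq) h⟩
  have _ : FaithfulSMul (MvPolynomial σ k) k₀ := (faithfulSMul_iff_algebraMap_injective _ _).2 hx.ind
  have hfrac0 : IsFractionRing (MvPolynomial σ k) k₀ := by
    refine IsFractionRing.of_field _ _ fun y => ?_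
    obtain ⟨p, q, hq, h⟩ := hx.frac y
    exact ⟨p, q, eq_div_of_mul_eq (hx.aeval_ne_zero hq) h⟩
  have hb' : IsAlgebraic (MvPolynomial σ k) b :=
    (IsFractionRing.isAlgebraic_iff (MvPolynomial σ k) k₀ N).2 hb
  obtain ⟨r, hr0, hr⟩ := hb'.exists_integral_multiple
  obtain ⟨P, hP⟩ := (IsIntegrallyClosed.isIntegral_iff (R := MvPolynomial σ Q)).1
    (hr.tower_top (A := MvPolynomial σ Q))
  have hPint : IsIntegral (MvPolynomial σ k) P := by
    rw [← hP] at hr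
    exact (isIntegral_algebraMap_iff (IsFractionRing.injective _ N)).1 hr
  have hco := MvPolynomial.isIntegral_iff_isIntegral_coeff.1 hPint
  obtain ⟨P0, hP0⟩ : ∃ P0, MvPolynomial.map (algebraMap k Q) P0 = P := by
    have : P ∈ Set.range (MvPolynomial.map (σ := σ) (algebraMap k Q)) := by
      rw [MvPolynomial.mem_range_map_iff_coeffs_subset]
      intro c hc
      obtain ⟨n, -, rfl⟩ := MvPolynomial.mem_coeffs_iff.1 hc
      exact hcl _ (hco n).isAlgebraic
    exact this
  refine ⟨MvPolynomial.aeval x P0 / MvPolynomial.aeval x r, ?_⟩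
  have hr1 := hx.aeval_ne_zero hr0
  have : algebraMap k₀ N (MvPolynomial.aeval x r) ≠ 0 := (_root_.map_ne_zero _).2 hr1
  rw [map_div₀, hmap P0, hP0, div_eq_iff this, mul_comm]
  rw [Algebra.smul_def] at hP
  exact hP

theorem irreducible_map_of_algClosedIn {k N : Type*} [Field k] [Field N] [Algebra k N]
    (hcl : AlgClosedIn k N) {f : k[X]} (hf : Irreducible f) (hm : f.Monic) :
    Irreducible (f.map (algebraMap k N)) := by
  rw [(hm.map _).irreducible_iff_natDegree']
  refine ⟨?_, ?_⟩
  · intro h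
    have h1 := congrArg natDegree h
    rw [hm.natDegree_map, natDegree_one] at h1
    exact hf.natDegree_pos.ne' h1
  intro a b ha hb hab hdeg
  have lift : ∀ c : N[X], c.Monic → c ∣ f.map (algebraMap k N) →
      ∃ c0 : k[X], c0.map (algebraMap k N) = c := by
    intro c hc hd
    have : c ∈ lifts (algebraMap k N) := by
      rw [lifts_iff_coeff_lifts]
      intro n
      exact hcl _ (isIntegral_coeff_of_dvd f c hm hc hd n).isAlgebraic
    rw [lifts_iff_ringHom_rangeS] at this
    simpa using this
  obtain ⟨a0, rfl⟩ := lift a ha ⟨b, hab.symm⟩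
  obtain ⟨b0, rfl⟩ := lift b hb ⟨_, by rw [mul_comm]; exact hab.symm⟩
  rw [← Polynomial.map_mul] at hab
  have h0 := map_injective _ (algebraMap k N).injective hab
  have ha0 : a0.Monic := (monic_map_iff).1 ha
  have hb0 : b0.Monic := (monic_map_iff).1 hb
  rw [natDegree_map, natDegree_map] at hdeg
  exact (hm.irreducible_iff_natDegree'.1 hf).2 a0 b0 ha0 hb0 h0 hdeg

end RatExt

end

/-! ### Monodromy of a generic projection -/

section

open Module Polynomial

theorem algebraicIndependent_of_exchange {k N ι : Type*} [Field k] [Field N] [Algebra k N] [Finite ι]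
    {x y : ι → N} (hx : AlgebraicIndependent k x)
    (hxy : ∀ i, IsAlgebraic (Algebra.adjoin k (Set.range y)) (x i)) : AlgebraicIndependent k y := by
  have _ := Fintype.ofFinite ι
  set M := AlgebraicIndependent.matroid k N with hM
  have h1 : M.Indep (Set.range x) := by
    rw [AlgebraicIndependent.matroid_indep_iff]; exact hx.to_subtype_range
  have h2 : Set.range x ⊆ M.closure (Set.range y) := by
    rw [AlgebraicIndependent.matroid_closure_eq]
    rintro _ ⟨i, rfl⟩
    exact hxy i
  have h3 : (Set.range x).encard ≤ M.eRk (Set.range y) := by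
    rw [← Matroid.eRk_closure_eq]
    exact h1.encard_le_eRk_of_subset h2
  have h4 : ENat.card ι ≤ (Set.range x).encard := hx.injective.encard_range
  have h5 : (Set.range y).encard ≤ ENat.card ι := by
    rw [← Set.image_univ, ← Set.encard_univ]; exact Set.encard_image_le _ _
  have h6 := M.eRk_le_encard (Set.range y)
  have h7 : (Set.range y).encard = ENat.card ι := le_antisymm h5 (h4.trans (h3.trans h6))
  have h8 : Function.Injective y := by
    have hf : (Set.univ : Set ι).Finite := Set.finite_univ
    have := hf.injOn_of_encard_image_eq (f := y) (by rw [Set.image_univ, h7, Set.encard_univ])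
    exact Set.injOn_univ.1 this
  have h9 : M.Indep (Set.range y) := by
    rw [Matroid.indep_iff_eRk_eq_encard_of_finite (Set.finite_range y)]
    exact le_antisymm h6 (h5.trans (h4.trans h3))
  rw [AlgebraicIndependent.matroid_indep_iff] at h9
  exact AlgebraicIndependent.of_subtype_range h8 h9

theorem RatExt.exists_lift {k N Ω ι : Type*} [Field k] [Field N] [Field Ω] [Algebra k N] [Algebra k Ω]
    {x : ι → N} (hx : RatExt k x) {y : ι → Ω} (hy : AlgebraicIndependent k y) :
    ∃ φ : N →ₐ[k] Ω, ∀ i, φ (x i) = y i := by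
  let _ : Algebra (MvPolynomial ι k) N := (MvPolynomial.aeval x).toAlgebra
  have _ : FaithfulSMul (MvPolynomial ι k) N := (faithfulSMul_iff_algebraMap_injective _ _).2 hx.ind
  have _ : IsScalarTower k (MvPolynomial ι k) N := IsScalarTower.of_algHom (MvPolynomial.aeval x)
  have hfrac : IsFractionRing (MvPolynomial ι k) N := by
    refine IsFractionRing.of_field _ _ fun y => ?_
    obtain ⟨p, q, hq, h⟩ := hx.frac y
    exact ⟨p, q, eq_div_of_mul_eq (hx.aeval_ne_zero hq) h⟩
  have hy' : Function.Injective (MvPolynomial.aeval (R := k) y) := hy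
  refine ⟨IsFractionRing.liftAlgHom (K := N) hy', fun i => ?_⟩
  have h1 : x i = algebraMap (MvPolynomial ι k) N (MvPolynomial.X i) :=
    (MvPolynomial.aeval_X x i).symm
  rw [h1, IsFractionRing.liftAlgHom_apply, IsFractionRing.lift_algebraMap]
  exact MvPolynomial.aeval_X y i

theorem RatExt.hom_ext {k N Ω ι : Type*} [Field k] [Field N] [Field Ω] [Algebra k N]
    {x : ι → N} (hx : RatExt k x) {φ ψ : N →+* Ω}
    (h0 : ∀ a : k, φ (algebraMap k N a) = ψ (algebraMap k N a)) (h : ∀ i, φ (x i) = ψ (x i)) :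
    φ = ψ := by
  have hp : ∀ p : MvPolynomial ι k, φ (MvPolynomial.aeval x p) = ψ (MvPolynomial.aeval x p) := by
    intro p
    induction p using MvPolynomial.induction_on with
    | C a => simpa using h0 a
    | add p q hp hq => rw [map_add, map_add, map_add, hp, hq]
    | mul_X p i hp => rw [map_mul, map_mul, map_mul, hp, MvPolynomial.aeval_X, h]
  ext y
  obtain ⟨p, q, hq, hy⟩ := hx.frac y
  have h1 : φ y * φ (MvPolynomial.aeval x q) = ψ y * ψ (MvPolynomial.aeval x q) := by
    rw [← map_mul, ← map_mul, hy, hp]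
  rw [hp] at h1
  exact mul_right_cancel₀ ((_root_.map_ne_zero _).2 (hx.aeval_ne_zero hq)) h1

/-- If `k₀` is algebraically closed in `N`, then a simple algebraic extension `F₀` of `k₀` has only
one compositum with `N`. -/
theorem exists_compositum.{w} {k₀ F₀ Ω : Type*} {N : Type w} [Field k₀] [Field F₀] [Field N] [Field Ω]
    [Algebra k₀ F₀] [Algebra k₀ N] (hcl : AlgClosedIn k₀ N) {z : F₀} (hz : IsIntegral k₀ z)
    (hgen : Algebra.adjoin k₀ {z} = ⊤) :
    ∃ (B : Type w) (_ : Field B) (c : N →+* B) (b : F₀ →+* B),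
      ∀ (ρ : N →+* Ω) (σ : F₀ →+* Ω), ρ.comp (algebraMap k₀ N) = σ.comp (algebraMap k₀ F₀) →
        ∃ τ : B →+* Ω, τ.comp c = ρ ∧ τ.comp b = σ := by
  set f := (minpoly k₀ z).map (algebraMap k₀ N) with hf
  have hirr : Fact (Irreducible f) :=
    ⟨irreducible_map_of_algClosedIn hcl (minpoly.irreducible hz) (minpoly.monic hz)⟩
  let pb := PowerBasis.ofAdjoinEqTop hz hgen
  have hpb : pb.gen = z := PowerBasis.ofAdjoinEqTop_gen hz hgen
  have hroot : aeval (AdjoinRoot.root f) (minpoly k₀ pb.gen) = 0 := by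
    rw [hpb, ← aeval_map_algebraMap N]
    exact AdjoinRoot.aeval_eq f ▸ AdjoinRoot.mk_self
  let b : F₀ →ₐ[k₀] AdjoinRoot f := pb.lift (AdjoinRoot.root f) hroot
  refine ⟨AdjoinRoot f, inferInstance, AdjoinRoot.of f, b, fun ρ σ h => ?_⟩
  have hr : f.eval₂ ρ (σ z) = 0 := by
    rw [hf, eval₂_map, h, ← hom_eval₂]
    exact (congrArg σ (minpoly.aeval k₀ z)).trans (map_zero σ)
  refine ⟨AdjoinRoot.lift ρ (σ z) hr, AdjoinRoot.lift_comp_of hr, ?_⟩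
  let _ : Algebra k₀ Ω := (σ.comp (algebraMap k₀ F₀)).toAlgebra
  let τ : AdjoinRoot f →ₐ[k₀] Ω :=
    { AdjoinRoot.lift ρ (σ z) hr with
      commutes' := fun a => by
        change AdjoinRoot.lift ρ (σ z) hr (AdjoinRoot.of f (algebraMap k₀ N a)) = _
        rw [AdjoinRoot.lift_of]
        exact RingHom.congr_fun h a }
  let σ' : F₀ →ₐ[k₀] Ω := { σ with commutes' := fun a => rfl }
  have : τ.comp b = σ' := by
    apply pb.algHom_ext
    rw [AlgHom.comp_apply, PowerBasis.lift_gen]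
    change AdjoinRoot.lift ρ (σ z) hr (AdjoinRoot.root f) = σ pb.gen
    rw [AdjoinRoot.lift_root, hpb]
  exact congrArg (fun (g : F₀ →ₐ[k₀] Ω) => (g : F₀ →+* Ω)) this

theorem exists_galois_ne {k Q : Type*} [Field k] [Field Q] [CharZero k] [Algebra k Q]
    [Algebra.IsAlgebraic k Q] {e : Q} (he : e ∉ (algebraMap k Q).range) :
    ∃ γ : AlgebraicClosure Q ≃ₐ[k] AlgebraicClosure Q,
      γ (algebraMap Q (AlgebraicClosure Q) e) ≠ algebraMap Q (AlgebraicClosure Q) e := by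
  have _ : Algebra.IsAlgebraic k (AlgebraicClosure Q) := Algebra.IsAlgebraic.trans k Q _
  have _ : IsAlgClosure k (AlgebraicClosure Q) := ⟨inferInstance, inferInstance⟩
  have _ : Normal k (AlgebraicClosure Q) := IsAlgClosure.normal k _
  have _ : IsGalois k (AlgebraicClosure Q) := ⟨⟩
  by_contra! hcon
  obtain ⟨a, ha⟩ := (InfiniteGalois.mem_range_algebraMap_iff_fixed
    (k := k) (algebraMap Q (AlgebraicClosure Q) e)).2 hcon
  apply he
  refine ⟨a, ?_⟩
  rw [IsScalarTower.algebraMap_apply k Q] at ha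
  exact (algebraMap Q (AlgebraicClosure Q)).injective ha

section Monodromy

variable {k k₀ F₀ N ι : Type*} [Field k] [IsAlgClosed k] [CharZero k] [Field k₀] [Field F₀] [Field N]
  [Algebra k k₀] [Algebra k F₀] [Algebra k N] [Algebra k₀ N] [Algebra F₀ N]
  [IsScalarTower k k₀ N] [IsScalarTower k F₀ N] [Finite ι]

/-- The generic linear form `t i + x i * z`. -/
def gform (N : Type*) [Field N] [Algebra k₀ N] [Algebra F₀ N] (x : ι → k₀) (t : ι → F₀) (z : F₀)
    (i : ι) : N :=
  algebraMap F₀ N (t i) + algebraMap k₀ N (x i) * algebraMap F₀ N z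

/-- A generic linear projection of `F₀` has no proper intermediate field: any two nontrivial
conjugations are realised in the same compositum of two copies of `F₀`, so they fix the same
elements. -/
theorem monodromy {x : ι → k₀} (hx : RatExt k x) (hN : RatExt F₀ fun i => algebraMap k₀ N (x i))
    {t : ι → F₀} {z : F₀} (ht : AlgebraicIndependent k t)
    (hz : IsAlgebraic (Algebra.adjoin k (Set.range t)) z)
    (hgen : IntermediateField.adjoin k (insert z (Set.range t)) = ⊤)
    {KT : Type*} [Field KT] [Algebra KT N] [Algebra.IsAlgebraic KT N]
    (hkK : ∀ a : k₀, algebraMap k₀ N a ∈ (algebraMap KT N).range)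
    (htK : ∀ i, gform N x t z i ∈ (algebraMap KT N).range)
    (hzK : IntermediateField.adjoin KT {algebraMap F₀ N z} = ⊤)
    (E : IntermediateField KT N) : E = ⊥ ∨ E = ⊤ := by
  classical
  have _ : CharZero F₀ := charZero_of_injective_algebraMap (algebraMap k F₀).injective
  have _ : CharZero N := charZero_of_injective_algebraMap (algebraMap k N).injective
  have _ : CharZero KT := (algebraMap KT N).charZero_iff (algebraMap KT N).injective |>.2 inferInstance
  let Ω := AlgebraicClosure N
  let ω : N →+* Ω := algebraMap N Ω
  let a₀ : F₀ →+* N := algebraMap F₀ N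
  -- the embedding of `k₀` into `F₀` given by `x i ↦ t i`
  obtain ⟨j, hj⟩ := hx.exists_lift ht
  let _ : Algebra k₀ F₀ := j.toRingHom.toAlgebra
  have hja : ∀ a, algebraMap k₀ F₀ a = j a := fun _ => rfl
  have _ : IsScalarTower k k₀ F₀ := IsScalarTower.of_algHom j
  have htj : ∀ p ∈ Algebra.adjoin k (Set.range t), p ∈ (algebraMap k₀ F₀).range := by
    intro p hp
    induction hp using Algebra.adjoin_induction with
    | mem p hp => obtain ⟨i, rfl⟩ := hp; exact ⟨x i, hj i⟩
    | algebraMap c => exact ⟨algebraMap k k₀ c, (IsScalarTower.algebraMap_apply k k₀ F₀ c).symm⟩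
    | add p q _ _ hp hq => exact add_mem hp hq
    | mul p q _ _ hp hq => exact mul_mem hp hq
  have hzint : IsIntegral k₀ z := by
    apply IsAlgebraic.isIntegral
    obtain ⟨P, hP0, hP⟩ := hz
    have hl : P.map (algebraMap _ F₀) ∈ lifts (algebraMap k₀ F₀) := by
      rw [lifts_iff_coeff_lifts]
      intro n
      rw [coeff_map]
      exact htj _ (P.coeff n).2
    obtain ⟨R, hR⟩ := (mem_lifts _).1 hl
    refine ⟨R, ?_, ?_⟩
    · rintro rfl
      rw [Polynomial.map_zero] at hR
      exact hP0 ((Polynomial.map_eq_zero_iff Subtype.val_injective).1 hR.symm)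
    · rw [← aeval_map_algebraMap F₀, hR, aeval_map_algebraMap, hP]
  have hadj : Algebra.adjoin k₀ {z} = ⊤ := by
    rw [← IntermediateField.adjoin_simple_toSubalgebra_of_isAlgebraic hzint.isAlgebraic,
      ← IntermediateField.top_toSubalgebra]
    congr 1
    rw [eq_top_iff]
    have h1 : IntermediateField.adjoin k (insert z (Set.range t)) ≤
        (IntermediateField.adjoin k₀ {z}).restrictScalars k := by
      rw [IntermediateField.adjoin_le_iff]
      rintro y (rfl | ⟨i, rfl⟩)
      · exact IntermediateField.mem_adjoin_simple_self k₀ y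
      · have : t i = algebraMap k₀ F₀ (x i) := (hj i).symm
        rw [this]
        exact (IntermediateField.adjoin k₀ {z}).algebraMap_mem _
    rw [hgen] at h1
    exact fun y _ => h1 trivial
  have hclk : AlgClosedIn k₀ N := AlgClosedIn.ratExt hx hN (algClosedIn_of_isAlgClosed k F₀)
  obtain ⟨B, _, c, b, hB⟩ := exists_compositum (Ω := Ω) hclk hzint hadj
  let a : F₀ →+* B := c.comp a₀
  let U : ι → B := fun i => (a (t i) - b (t i)) / (b z - a z)
  -- every nontrivial conjugation factors through `B`
  have key : ∀ γ : Ω →+* Ω, (∀ w : KT, γ (ω (algebraMap KT N w)) = ω (algebraMap KT N w)) →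
      γ (ω (a₀ z)) ≠ ω (a₀ z) → ∃ τ : B →+* Ω, τ.comp a = ω.comp a₀ ∧
        τ.comp b = (γ.comp ω).comp a₀ ∧ ∀ i, τ (U i) = ω (algebraMap k₀ N (x i)) := by
    intro γ hγ hγz
    have hfix : ∀ u ∈ (algebraMap KT N).range, γ (ω u) = ω u := by
      rintro _ ⟨w, rfl⟩; exact hγ w
    let σ : F₀ →+* Ω := (γ.comp ω).comp a₀
    have hk : ∀ w : k, σ (algebraMap k F₀ w) = ω (algebraMap k N w) := by
      intro w
      change γ (ω (algebraMap F₀ N (algebraMap k F₀ w))) = _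
      rw [← IsScalarTower.algebraMap_apply k F₀ N, IsScalarTower.algebraMap_apply k k₀ N]
      exact hfix _ (hkK _)
    have hσz : σ z - ω (a₀ z) ≠ 0 := sub_ne_zero.2 hγz
    have hxeq : ∀ i, ω (algebraMap k₀ N (x i)) = (ω (a₀ (t i)) - σ (t i)) / (σ z - ω (a₀ z)) := by
      intro i
      rw [eq_div_iff hσz]
      have h1 := hfix _ (htK i)
      simp only [gform, map_add, map_mul] at h1
      rw [hfix _ (hkK (x i))] at h1
      change σ (t i) + ω (algebraMap k₀ N (x i)) * σ z =
        ω (a₀ (t i)) + ω (algebraMap k₀ N (x i)) * ω (a₀ z) at h1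
      linear_combination h1
    have hΩ : ∀ w : F₀, algebraMap F₀ Ω w = ω (a₀ w) := fun w =>
      IsScalarTower.algebraMap_apply F₀ N Ω w
    have hy : AlgebraicIndependent F₀ fun i => σ (t i) := by
      refine algebraicIndependent_of_exchange (x := fun i => ω (algebraMap k₀ N (x i)))
        (hN.ind.map' (f := IsScalarTower.toAlgHom F₀ N Ω) ω.injective) ?_
      set A := Algebra.adjoin F₀ (Set.range fun i => σ (t i)) with hA
      have hF : ∀ w, IsAlgebraic A (ω (a₀ w)) := fun w => by
        rw [← hΩ]
        exact isAlgebraic_algebraMap (⟨_, A.algebraMap_mem w⟩ : A)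
      have hmem : ∀ p ∈ Algebra.adjoin k (Set.range t), σ p ∈ A := by
        intro p hp
        induction hp using Algebra.adjoin_induction with
        | mem p hp => obtain ⟨i, rfl⟩ := hp; exact Algebra.subset_adjoin ⟨i, rfl⟩
        | algebraMap w =>
          rw [hk w, IsScalarTower.algebraMap_apply k F₀ N]
          exact hΩ (algebraMap k F₀ w) ▸ A.algebraMap_mem _
        | add p q _ _ hp hq => rw [map_add]; exact add_mem hp hq
        | mul p q _ _ hp hq => rw [map_mul]; exact mul_mem hp hq
      let f : Algebra.adjoin k (Set.range t) →+* A :=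
        (σ.comp (Algebra.adjoin k (Set.range t)).val.toRingHom).codRestrict A
          fun p => hmem p.1 p.2
      have hzA : IsAlgebraic A (σ z) := by
        refine hz.ringHom_of_comp_eq f σ ?_ ?_
        · intro p q hpq
          exact Subtype.ext (σ.injective (congrArg Subtype.val hpq))
        · ext p; rfl
      intro i
      rw [hxeq, div_eq_mul_inv]
      exact ((hF _).sub (isAlgebraic_algebraMap
        (⟨_, Algebra.subset_adjoin ⟨i, rfl⟩⟩ : A))).mul (hzA.sub (hF _)).inv
    obtain ⟨ρ, hρ⟩ := hN.exists_lift hy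
    obtain ⟨τ, hτc, hτb⟩ := hB ρ.toRingHom σ (by
      refine hx.hom_ext ?_ ?_
      · intro w
        change ρ (algebraMap k₀ N (algebraMap k k₀ w)) = σ (algebraMap k₀ F₀ (algebraMap k k₀ w))
        rw [← IsScalarTower.algebraMap_apply, ← IsScalarTower.algebraMap_apply, hk,
          IsScalarTower.algebraMap_apply k F₀ N, ρ.commutes, hΩ]
      · intro i
        change ρ (algebraMap k₀ N (x i)) = σ (j (x i))
        rw [hρ, hj])
    have ha : τ.comp a = ω.comp a₀ := by
      ext w
      change τ (c (a₀ w)) = ω (a₀ w)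
      rw [← hΩ, ← ρ.commutes]
      exact RingHom.congr_fun hτc _
    refine ⟨τ, ha, hτb, fun i => ?_⟩
    have ha' : ∀ w, τ (a w) = ω (a₀ w) := RingHom.congr_fun ha
    have hb' : ∀ w, τ (b w) = σ w := RingHom.congr_fun hτb
    rw [map_div₀, map_sub, map_sub, ha', hb', ha', hb', hxeq]
  have key2 : ∀ e : N, ∃ u v : B, ∀ γ : Ω →+* Ω,
      (∀ w : KT, γ (ω (algebraMap KT N w)) = ω (algebraMap KT N w)) →
      γ (ω (a₀ z)) ≠ ω (a₀ z) → (γ (ω e) = ω e ↔ u = v) := by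
    intro e
    obtain ⟨p, q, hq, he⟩ := hN.frac e
    refine ⟨p.eval₂ b U * q.eval₂ a U, p.eval₂ a U * q.eval₂ b U, fun γ h1 h2 => ?_⟩
    obtain ⟨τ, hτa, hτb, hU⟩ := key γ h1 h2
    have hpa : ∀ p : MvPolynomial ι F₀, τ (p.eval₂ a U) =
        ω (MvPolynomial.aeval (fun i => algebraMap k₀ N (x i)) p) := by
      intro p
      rw [MvPolynomial.hom_eval₂, hτa, MvPolynomial.aeval_def, MvPolynomial.hom_eval₂]
      congr 1
      funext i
      exact hU i
    have hpb : ∀ p : MvPolynomial ι F₀, τ (p.eval₂ b U) =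
        γ (ω (MvPolynomial.aeval (fun i => algebraMap k₀ N (x i)) p)) := by
      intro p
      rw [MvPolynomial.hom_eval₂, hτb, MvPolynomial.aeval_def, ← RingHom.comp_apply,
        MvPolynomial.hom_eval₂]
      congr 1
      funext i
      obtain ⟨w, hw⟩ := hkK (x i)
      rw [hU i, RingHom.comp_apply, ← hw, h1]
    rw [← τ.injective.eq_iff, map_mul, map_mul, hpa, hpa, hpb, hpb, ← he]
    simp only [map_mul]
    have hq1 : ω (MvPolynomial.aeval (fun i => algebraMap k₀ N (x i)) q) ≠ 0 :=
      (_root_.map_ne_zero _).2 (hN.aeval_ne_zero hq)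
    have hq2 := (_root_.map_ne_zero γ).2 hq1
    constructor
    · intro h; rw [h]; ring
    · intro h
      apply mul_right_cancel₀ (mul_ne_zero hq1 hq2)
      linear_combination h
  have key3 : ∀ γ : Ω →+* Ω, (∀ w : KT, γ (ω (algebraMap KT N w)) = ω (algebraMap KT N w)) →
      γ (ω (a₀ z)) = ω (a₀ z) → ∀ e, γ (ω e) = ω e := by
    intro γ hγ hz' e
    have he : e ∈ IntermediateField.adjoin KT {algebraMap F₀ N z} := hzK ▸ trivial
    induction he using IntermediateField.adjoin_induction with
    | mem y hy => rw [Set.mem_singleton_iff.1 hy]; exact hz'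
    | algebraMap w => exact hγ w
    | add p q _ _ hp hq => rw [map_add, map_add, hp, hq]
    | inv p _ hp => rw [map_inv₀, map_inv₀, hp]
    | mul p q _ _ hp hq => rw [map_mul, map_mul, hp, hq]
  by_contra! hcon
  obtain ⟨hbot, htop⟩ := hcon
  obtain ⟨e, heE, heK⟩ : ∃ e ∈ E, e ∉ (algebraMap KT N).range := by
    by_contra! h
    exact hbot (le_bot_iff.1 fun e he => IntermediateField.mem_bot.2 (h e he))
  obtain ⟨y, hy⟩ : ∃ y, y ∉ E := by
    by_contra! h
    exact htop (eq_top_iff.2 fun y _ => h y)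
  have _ : Algebra.IsAlgebraic E N := Algebra.IsAlgebraic.tower_top (K := KT) E
  have _ : CharZero E := charZero_of_injective_algebraMap (algebraMap KT E).injective
  obtain ⟨γ', hγ'⟩ := exists_galois_ne heK
  obtain ⟨γ, hγ⟩ := exists_galois_ne (k := E) (e := y) (by
    rintro ⟨w, rfl⟩; exact hy w.2)
  have hγfix : ∀ w : E, γ (ω (w : N)) = ω w := fun w => γ.commutes w
  have hγK : ∀ w : KT, (γ : Ω →+* Ω) (ω (algebraMap KT N w)) = ω (algebraMap KT N w) :=
    fun w => hγfix (algebraMap KT E w)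
  have hγK' : ∀ w : KT, (γ' : Ω →+* Ω) (ω (algebraMap KT N w)) = ω (algebraMap KT N w) :=
    fun w => γ'.commutes w
  obtain ⟨u, v, huv⟩ := key2 e
  apply hγ'
  refine (huv _ hγK' fun h => hγ' (key3 _ hγK' h e)).2 ?_
  exact (huv _ hγK fun h => hγ (key3 _ hγK h y)).1 (hγfix ⟨e, heE⟩)

end Monodromy

end

/-! ### Relatively closed simple subfields -/

section

open Module

section Dichotomy

theorem ratExt_simple {k N : Type*} [Field k] [Field N] [Algebra k N] {u : N}
    (hu : Transcendental k u) (hN : IntermediateField.adjoin k {u} = ⊤) :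
    RatExt k (fun _ : Unit => u) where
  ind := (algebraicIndependent_unique_type_iff).2 hu
  frac := by
    intro y
    have hP : ∀ p : Polynomial k, MvPolynomial.aeval (fun _ : Unit => u)
        (Polynomial.aeval (MvPolynomial.X () : MvPolynomial Unit k) p) = Polynomial.aeval u p := by
      intro p
      rw [← Polynomial.aeval_algHom_apply, MvPolynomial.aeval_X]
    have hy : y ∈ IntermediateField.adjoin k {u} := hN ▸ trivial
    obtain ⟨p, q, rfl⟩ := (IntermediateField.mem_adjoin_simple_iff k y).1 hy
    by_cases hq : Polynomial.aeval u q = 0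
    · exact ⟨0, 1, one_ne_zero, by simp [hq]⟩
    · refine ⟨Polynomial.aeval (MvPolynomial.X ()) p, Polynomial.aeval (MvPolynomial.X ()) q, ?_, ?_⟩
      · intro h
        exact hq (by rw [← hP, h, map_zero])
      · rw [hP, hP, div_mul_cancel₀ _ hq]

theorem adjoin_gen_eq_top (k : Type*) {N : Type*} [Field k] [Field N] [Algebra k N] (v : N) :
    IntermediateField.adjoin k {(IntermediateField.AdjoinSimple.gen k v)} = ⊤ := by
  rw [eq_top_iff]
  rintro ⟨w, hw⟩ -
  obtain ⟨p, q, h⟩ := (IntermediateField.mem_adjoin_simple_iff k w).1 hw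
  refine (IntermediateField.mem_adjoin_simple_iff k _).2 ⟨p, q, Subtype.ext ?_⟩
  have hv : ∀ p : Polynomial k, ((Polynomial.aeval (IntermediateField.AdjoinSimple.gen k v) p :
      IntermediateField.adjoin k {v}) : N) = Polynomial.aeval v p := fun p =>
    (Polynomial.aeval_algHom_apply (IntermediateField.val _)
      (IntermediateField.AdjoinSimple.gen k v) p).symm
  rw [IntermediateField.coe_div, hv, hv]
  exact h

/-- Of two independent generators of a field without proper intermediate extensions, one spans a
relatively algebraically closed subfield. -/
theorem algClosedIn_dichotomy {k N : Type*} [Field k] [Field N] [Algebra k N] {u v : N}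
    (hu : Transcendental k u) (hv : Transcendental k v)
    (huv : Transcendental (IntermediateField.adjoin k {u}) v) (hcl : AlgClosedIn k N)
    (hmin : ∀ E : IntermediateField (IntermediateField.adjoin k ({u, v} : Set N)) N,
      E = ⊥ ∨ E = ⊤) :
    AlgClosedIn (IntermediateField.adjoin k {u}) N ∨
      AlgClosedIn (IntermediateField.adjoin k {v}) N := by
  refine or_iff_not_imp_left.2 fun h => ?_
  unfold AlgClosedIn at h
  push Not at h
  obtain ⟨α, hα, hα'⟩ := h
  set K := IntermediateField.adjoin k {u} with hK
  have hαK : α ∉ K := fun h => hα' ⟨⟨α, h⟩, rfl⟩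
  let A := IntermediateField.adjoin K {α}
  have hA : Algebra.IsAlgebraic K A :=
    IntermediateField.isAlgebraic_adjoin_simple hα.isIntegral
  have hvA : Transcendental A v := by
    intro h
    exact huv (IsAlgebraic.restrictScalars K h)
  have _ : IsScalarTower k A N := IsScalarTower.of_algebraMap_eq fun _ => rfl
  have hαA : α ∈ A := IntermediateField.mem_adjoin_simple_self K α
  -- `α` is not a rational function of `u` and `v`
  have hnot : α ∉ IntermediateField.adjoin k ({u, v} : Set N) := by
    intro h
    have h1 : α ∈ (IntermediateField.adjoin K {v}).restrictScalars k := by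
      refine IntermediateField.adjoin_le_iff.2 ?_ h
      rintro y (rfl | rfl)
      · exact (IntermediateField.adjoin K {v}).algebraMap_mem
          (⟨y, IntermediateField.mem_adjoin_simple_self k y⟩ : K)
      · exact IntermediateField.mem_adjoin_simple_self K y
    obtain ⟨p, q, hpq⟩ := (IntermediateField.mem_adjoin_simple_iff K α).1 h1
    by_cases hq : Polynomial.aeval v q = 0
    · rw [hq, div_zero] at hpq
      exact hαK (hpq ▸ zero_mem K)
    rw [eq_div_iff hq] at hpq
    have h2 : Polynomial.C (⟨α, hαA⟩ : A) * q.map (algebraMap K A) - p.map (algebraMap K A) = 0 := by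
      by_contra hne
      refine hvA ⟨_, hne, ?_⟩
      rw [map_sub, map_mul, Polynomial.aeval_C, Polynomial.aeval_map_algebraMap,
        Polynomial.aeval_map_algebraMap]
      exact sub_eq_zero.2 hpq
    have hq0 : q ≠ 0 := by rintro rfl; simp at hq
    have h3 := congrArg (fun P => ((P.coeff q.natDegree : A) : N)) h2
    simp only [Polynomial.coeff_sub, Polynomial.coeff_C_mul, Polynomial.coeff_map,
      Polynomial.coeff_zero] at h3
    have h4 : α * (q.leadingCoeff : N) - (p.coeff q.natDegree : N) = 0 := h3
    have h5 : (q.leadingCoeff : N) ≠ 0 := by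
      simpa using hq0
    apply hαK
    rw [eq_div_of_mul_eq h5 (sub_eq_zero.1 h4)]
    exact div_mem (SetLike.coe_mem _) (SetLike.coe_mem _)
  have htop : IntermediateField.adjoin A {v} = ⊤ := by
    rw [eq_top_iff]
    rcases hmin (IntermediateField.adjoin _ {α}) with h | h
    · rw [IntermediateField.adjoin_simple_eq_bot_iff] at h
      obtain ⟨⟨w, hw⟩, h⟩ := h
      exact absurd (h ▸ hw) hnot
    · intro y _
      have hle : IntermediateField.adjoin k ({u, v} : Set N) ≤
          (IntermediateField.adjoin A {v}).restrictScalars k := by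
        rw [IntermediateField.adjoin_le_iff]
        rintro y (rfl | rfl)
        · exact (IntermediateField.adjoin A {v}).algebraMap_mem (algebraMap K A
            (⟨y, IntermediateField.mem_adjoin_simple_self k y⟩ : K))
        · exact IntermediateField.mem_adjoin_simple_self A y
      have hy : y ∈ IntermediateField.adjoin (IntermediateField.adjoin k ({u, v} : Set N)) {α} :=
        h ▸ trivial
      induction hy using IntermediateField.adjoin_induction with
      | mem y hy =>
        rw [Set.mem_singleton_iff.1 hy]
        exact (IntermediateField.adjoin A {v}).algebraMap_mem (⟨α, hαA⟩ : A)
      | algebraMap w => exact hle w.2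
      | add p q _ _ hp hq => exact add_mem (hp trivial) (hq trivial)
      | inv p _ hp => exact inv_mem (hp trivial)
      | mul p q _ _ hp hq => exact mul_mem (hp trivial) (hq trivial)
  have hclA : AlgClosedIn k A := by
    intro a ha
    obtain ⟨c, hc⟩ := hcl (a : N) (ha.algHom (A.val.restrictScalars k))
    exact ⟨c, Subtype.ext hc⟩
  have hgen := adjoin_gen_eq_top k v
  refine AlgClosedIn.ratExt (k := k) (Q := A)
    (x := fun _ : Unit => IntermediateField.AdjoinSimple.gen k v) ?_ ?_ hclA
  · refine ratExt_simple ?_ hgen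
    intro h
    exact hv (h.algHom (IntermediateField.val _))
  · exact ratExt_simple hvA htop

end Dichotomy

end

/-! ### Extension of scalars -/

section

open Module

section Ext

variable {k K A B : Type*} [Field k] [Field K] [CommRing A] [CommRing B] [Algebra k A] [Algebra k B]
  [Algebra K B]

/-- The `K`-span of the image of a `k`-subspace under an algebra homomorphism. -/
def ext (K : Type*) [Field K] [Algebra K B] (φ : A →ₐ[k] B) (Y : Submodule k A) : Submodule K B :=
  Submodule.span K (φ '' (Y : Set A))

theorem mem_ext_of_mem {φ : A →ₐ[k] B} {Y : Submodule k A} {y : A} (hy : y ∈ Y) :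
    φ y ∈ ext K φ Y :=
  Submodule.subset_span ⟨y, hy, rfl⟩

theorem ext_mono (φ : A →ₐ[k] B) {Y Y' : Submodule k A} (h : Y ≤ Y') : ext K φ Y ≤ ext K φ Y' :=
  Submodule.span_mono (Set.image_mono h)

theorem ext_mul (φ : A →ₐ[k] B) [Algebra k K] [IsScalarTower k K B] (Y Y' : Submodule k A) :
    ext K φ (Y * Y') = ext K φ Y * ext K φ Y' := by
  apply le_antisymm
  · refine Submodule.span_le.2 ?_
    rintro _ ⟨y, hy, rfl⟩
    induction hy using Submodule.mul_induction_on' with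
    | mem_mul_mem a ha b hb =>
      rw [map_mul]
      exact Submodule.mul_mem_mul (mem_ext_of_mem ha) (mem_ext_of_mem hb)
    | add a _ b _ ha hb => rw [map_add]; exact add_mem ha hb
  · rw [ext, ext, Submodule.span_mul_span]
    refine Submodule.span_le.2 ?_
    rintro _ ⟨_, ⟨a, ha, rfl⟩, _, ⟨b, hb, rfl⟩, rfl⟩
    change φ a * φ b ∈ _
    rw [← map_mul]
    exact mem_ext_of_mem (Submodule.mul_mem_mul ha hb)

theorem ext_one (φ : A →ₐ[k] B) [Algebra k K] [IsScalarTower k K B] :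
    ext K φ (1 : Submodule k A) = 1 := by
  apply le_antisymm
  · refine Submodule.span_le.2 ?_
    rintro _ ⟨y, hy, rfl⟩
    obtain ⟨c, rfl⟩ := Submodule.mem_one.1 hy
    rw [φ.commutes, IsScalarTower.algebraMap_apply k K B]
    exact Submodule.mem_one.2 ⟨_, rfl⟩
  · rw [Submodule.one_le]
    exact map_one φ ▸ mem_ext_of_mem (Submodule.mem_one.2 ⟨1, map_one _⟩)

theorem ext_pow (φ : A →ₐ[k] B) [Algebra k K] [IsScalarTower k K B] (Y : Submodule k A) (n : ℕ) :
    ext K φ (Y ^ n) = ext K φ Y ^ n := by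
  induction n with
  | zero => rw [pow_zero, pow_zero, ext_one]
  | succ n ih => rw [pow_succ, pow_succ, ext_mul, ih]

instance ext_fd (φ : A →ₐ[k] B) [Algebra k K] [IsScalarTower k K B] (Y : Submodule k A)
    [FiniteDimensional k Y] : FiniteDimensional K (ext K φ Y) := by
  obtain ⟨b, hb⟩ := Module.Finite.iff_fg.1 (inferInstance : Module.Finite k Y)
  have h : ext K φ Y = Submodule.span K (φ '' (b : Set A)) := by
    refine le_antisymm (Submodule.span_le.2 ?_) (Submodule.span_mono (Set.image_mono ?_))
    · rintro _ ⟨y, hy, rfl⟩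
      rw [← hb] at hy
      induction hy using Submodule.span_induction with
      | mem y hy => exact Submodule.subset_span ⟨y, hy, rfl⟩
      | zero => rw [map_zero]; exact zero_mem _
      | add a b _ _ ha hb => rw [map_add]; exact add_mem ha hb
      | smul c a _ ha =>
        rw [map_smul, ← algebraMap_smul K]
        exact Submodule.smul_mem _ _ ha
    · rw [← hb]; exact Submodule.subset_span
  rw [h]
  exact FiniteDimensional.span_of_finite K (b.finite_toSet.image φ)

theorem ext_tower {k₀ : Type*} [Field k₀] [Algebra k₀ K] [Algebra k₀ B] [IsScalarTower k₀ K B]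
    (φ : A →ₐ[k] B) (Y : Submodule k A) :
    Submodule.span K (ext k₀ φ Y : Set B) = ext K φ Y :=
  Submodule.span_span_of_tower k₀ K _

theorem ext_map {A' B' : Type*} [CommRing A'] [CommRing B'] [Algebra k A'] [Algebra k B']
    [Algebra K B'] (φ : A →ₐ[k] B) (φ' : A' →ₐ[k] B') (f : A →ₐ[k] A') (g : B →ₐ[K] B')
    (h : ∀ a, g (φ a) = φ' (f a)) (Y : Submodule k A) :
    (ext K φ Y).map g.toLinearMap = ext K φ' (Y.map f.toLinearMap) := by
  rw [ext, Submodule.map_span, ext]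
  congr 1
  ext y
  simp only [Set.mem_image, SetLike.mem_coe, Submodule.mem_map, AlgHom.toLinearMap_apply]
  constructor
  · rintro ⟨_, ⟨a, ha, rfl⟩, rfl⟩
    exact ⟨f a, ⟨a, ha, rfl⟩, (h a).symm⟩
  · rintro ⟨_, ⟨a, ha, rfl⟩, rfl⟩
    exact ⟨φ a, ⟨a, ha, rfl⟩, h a⟩

end Ext

section Clear

set_option linter.unusedSectionVars false

variable {k k₀ A B ι : Type*} [Field k] [Field k₀] [CommRing A] [CommRing B] [Algebra k k₀]
  [Algebra k A] [Algebra k B] [Algebra k₀ B] [IsScalarTower k k₀ B]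

theorem coeff_map_mul_mem {Y : Submodule k A} (p : MvPolynomial ι k) {P : MvPolynomial ι A}
    (hP : ∀ m, P.coeff m ∈ Y) (m : ι →₀ ℕ) :
    (MvPolynomial.map (algebraMap k A) p * P).coeff m ∈ Y := by
  classical
  rw [MvPolynomial.coeff_mul]
  refine Submodule.sum_mem _ fun a _ => ?_
  rw [MvPolynomial.coeff_map, ← Algebra.smul_def]
  exact Submodule.smul_mem _ _ (hP _)

theorem eval₂_map_mul (φ : A →ₐ[k] B) (x : ι → k₀) (p : MvPolynomial ι k) (P : MvPolynomial ι A) :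
    (MvPolynomial.map (algebraMap k A) p * P).eval₂ (φ : A →+* B) (fun i => algebraMap k₀ B (x i)) =
      (MvPolynomial.aeval x p) • P.eval₂ (φ : A →+* B) (fun i => algebraMap k₀ B (x i)) := by
  rw [MvPolynomial.eval₂_mul, Algebra.smul_def, MvPolynomial.eval₂_map]
  congr 1
  have h : (φ : A →+* B).comp (algebraMap k A) = (algebraMap k₀ B).comp (algebraMap k k₀) := by
    rw [← IsScalarTower.algebraMap_eq]
    exact φ.comp_algebraMap
  rw [h, MvPolynomial.aeval_def, MvPolynomial.hom_eval₂]

/-- Clearing denominators. -/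
theorem exists_poly_of_mem_ext {x : ι → k₀} (hx : RatExt k x) (φ : A →ₐ[k] B) {Y : Submodule k A}
    {z : B} (hz : z ∈ ext k₀ φ Y) : ∃ (q : MvPolynomial ι k) (P : MvPolynomial ι A), q ≠ 0 ∧
      (∀ m, P.coeff m ∈ Y) ∧ MvPolynomial.aeval x q • z =
        P.eval₂ (φ : A →+* B) (fun i => algebraMap k₀ B (x i)) := by
  classical
  induction hz using Submodule.span_induction with
  | mem z hz =>
    obtain ⟨y, hy, rfl⟩ := hz
    refine ⟨1, MvPolynomial.C y, one_ne_zero, fun m => ?_, by simp⟩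
    rw [MvPolynomial.coeff_C]
    split_ifs
    exacts [hy, zero_mem _]
  | zero => exact ⟨1, 0, one_ne_zero, fun m => by simp, by simp⟩
  | add a b _ _ ha hb =>
    obtain ⟨q, P, hq, hP, h⟩ := ha
    obtain ⟨q', P', hq', hP', h'⟩ := hb
    refine ⟨q * q', MvPolynomial.map (algebraMap k A) q' * P +
      MvPolynomial.map (algebraMap k A) q * P', mul_ne_zero hq hq', fun m => ?_, ?_⟩
    · rw [MvPolynomial.coeff_add]
      exact add_mem (coeff_map_mul_mem _ hP m) (coeff_map_mul_mem _ hP' m)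
    · rw [MvPolynomial.eval₂_add, eval₂_map_mul, eval₂_map_mul, ← h, ← h', map_mul, smul_add,
        smul_smul, smul_smul, mul_comm]
  | smul c a _ ha =>
    obtain ⟨q, P, hq, hP, h⟩ := ha
    obtain ⟨p', q', hq', hc⟩ := hx.frac c
    refine ⟨q * q', MvPolynomial.map (algebraMap k A) p' * P, mul_ne_zero hq hq',
      coeff_map_mul_mem _ hP, ?_⟩
    rw [eval₂_map_mul, ← h, ← hc, map_mul, smul_smul, smul_smul]
    congr 1
    ring

theorem eval₂_mem_ext (x : ι → k₀) (φ : A →ₐ[k] B) {Y : Submodule k A} {P : MvPolynomial ι A}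
    (hP : ∀ m, P.coeff m ∈ Y) :
    P.eval₂ (φ : A →+* B) (fun i => algebraMap k₀ B (x i)) ∈ ext k₀ φ Y := by
  rw [MvPolynomial.eval₂_eq]
  refine Submodule.sum_mem _ fun m _ => ?_
  simp only [← map_pow]
  rw [← map_prod, mul_comm, ← Algebra.smul_def]
  exact Submodule.smul_mem _ _ (mem_ext_of_mem (hP m))

end Clear

section ExtField

variable {k k₀ E₀ E₁ ι : Type*} [Field k] [Field k₀] [Field E₀] [Field E₁] [Algebra k k₀]
  [Algebra k E₀] [Algebra k E₁] [Algebra k₀ E₁] [Algebra E₀ E₁] [IsScalarTower k k₀ E₁]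
  [IsScalarTower k E₀ E₁] {x : ι → k₀}

theorem RatExt.common {κ : Type*} [Fintype κ] (hx : RatExt k x) (g : κ → k₀) :
    ∃ (Q : MvPolynomial ι k) (P : κ → MvPolynomial ι k), Q ≠ 0 ∧
      ∀ i, g i * MvPolynomial.aeval x Q = MvPolynomial.aeval x (P i) := by
  classical
  choose p q hq hpq using hx.frac
  refine ⟨∏ i, q (g i), fun i => p (g i) * ∏ j ∈ Finset.univ.erase i, q (g j),
    Finset.prod_ne_zero_iff.2 fun i _ => hq _, fun i => ?_⟩
  rw [← Finset.mul_prod_erase _ _ (Finset.mem_univ i), map_mul, map_mul, ← hpq, mul_assoc]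

/-- Linear disjointness of `E₀` and `k₀`. -/
theorem linearIndependent_ext (hx : RatExt k x) (hE : RatExt E₀ fun i => algebraMap k₀ E₁ (x i))
    {κ : Type*} [Finite κ] {b : κ → E₀} (hb : LinearIndependent k b) :
    LinearIndependent k₀ fun j => algebraMap E₀ E₁ (b j) := by
  have _ := Fintype.ofFinite κ
  rw [Fintype.linearIndependent_iff] at hb ⊢
  intro g hg
  obtain ⟨Q, P, hQ, hP⟩ := hx.common g
  have h1 : ∑ j, MvPolynomial.map (algebraMap k E₀) (P j) * MvPolynomial.C (b j) = 0 := by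
    apply hE.ind
    rw [map_zero, map_sum]
    have h2 : ∀ j, MvPolynomial.aeval (fun i => algebraMap k₀ E₁ (x i))
        (MvPolynomial.map (algebraMap k E₀) (P j) * MvPolynomial.C (b j)) =
        MvPolynomial.aeval x Q • (g j • algebraMap E₀ E₁ (b j)) := by
      intro j
      have := eval₂_map_mul (IsScalarTower.toAlgHom k E₀ E₁) x (P j) (MvPolynomial.C (b j))
      rw [MvPolynomial.eval₂_C, ← hP, mul_comm (g j), mul_smul] at this
      exact this
    rw [Finset.sum_congr rfl fun j _ => h2 j, ← Finset.smul_sum, hg, smul_zero]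
  intro j
  have hPj : P j = 0 := by
    ext m
    refine hb (fun j => (P j).coeff m) ?_ j
    have := congrArg (MvPolynomial.coeff m) h1
    rw [MvPolynomial.coeff_sum] at this
    simpa [mul_comm _ (MvPolynomial.C _), MvPolynomial.coeff_C_mul, MvPolynomial.coeff_map,
      Algebra.smul_def, mul_comm] using this
  have := hP j
  rw [hPj, map_zero] at this
  exact (mul_eq_zero.1 this).resolve_right (hx.aeval_ne_zero hQ)

theorem finrank_ext (hx : RatExt k x) (hE : RatExt E₀ fun i => algebraMap k₀ E₁ (x i))
    (Y : Submodule k E₀) [FiniteDimensional k Y] :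
    finrank k₀ (ext k₀ (IsScalarTower.toAlgHom k E₀ E₁) Y) = finrank k Y := by
  let b := finBasis k Y
  have hli := linearIndependent_ext hx hE (E₁ := E₁) (b := fun j => (b j : E₀))
    (b.linearIndependent.map' Y.subtype (Submodule.ker_subtype _))
  have h : ext k₀ (IsScalarTower.toAlgHom k E₀ E₁) Y =
      Submodule.span k₀ (Set.range fun j => algebraMap E₀ E₁ (b j)) := by
    refine le_antisymm (Submodule.span_le.2 ?_) (Submodule.span_le.2 ?_)
    · rintro _ ⟨y, hy, rfl⟩
      have h1 := congrArg (fun w : Y => algebraMap E₀ E₁ (w : E₀)) (b.sum_repr ⟨y, hy⟩)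
      simp only [Submodule.coe_sum, Submodule.coe_smul, map_sum] at h1
      change algebraMap E₀ E₁ y ∈ _
      rw [← h1]
      refine Submodule.sum_mem _ fun j _ => ?_
      rw [Algebra.smul_def, map_mul, ← IsScalarTower.algebraMap_apply,
        IsScalarTower.algebraMap_apply k k₀ E₁, ← Algebra.smul_def]
      exact Submodule.smul_mem _ _ (Submodule.subset_span ⟨j, rfl⟩)
    · rintro _ ⟨j, rfl⟩
      exact mem_ext_of_mem (φ := IsScalarTower.toAlgHom k E₀ E₁) (b j).2
  rw [h, finrank_span_eq_card hli, Fintype.card_fin]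

/-- Saturation passes to the extension, for the generic form `t + x i * z`. -/
theorem ext_sat (hx : RatExt k x) (hE : RatExt E₀ fun i => algebraMap k₀ E₁ (x i))
    {Y Y' : Submodule k E₀} {t z : E₀} (i : ι) (hz : ∀ b ∈ Y, z * b ∈ Y')
    (hs : ∀ a ∈ Y', t * a ∈ Y' → a ∈ Y) {y : E₁}
    (hy : y ∈ ext k₀ (IsScalarTower.toAlgHom k E₀ E₁) Y')
    (huy : (algebraMap E₀ E₁ t + algebraMap k₀ E₁ (x i) * algebraMap E₀ E₁ z) * y ∈
      ext k₀ (IsScalarTower.toAlgHom k E₀ E₁) Y') :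
    y ∈ ext k₀ (IsScalarTower.toAlgHom k E₀ E₁) Y := by
  classical
  obtain ⟨q₁, P₁, hq₁, hP₁, h₁⟩ := exists_poly_of_mem_ext hx _ hy
  obtain ⟨q₂, P₂, hq₂, hP₂, h₂⟩ := exists_poly_of_mem_ext hx _ huy
  set P := MvPolynomial.map (algebraMap k E₀) q₂ * P₁ with hP
  set P' := MvPolynomial.map (algebraMap k E₀) q₁ * P₂ with hP'
  have hPY : ∀ m, P.coeff m ∈ Y' := coeff_map_mul_mem _ hP₁
  have hPY' : ∀ m, P'.coeff m ∈ Y' := coeff_map_mul_mem _ hP₂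
  have hev : P.eval₂ (IsScalarTower.toAlgHom k E₀ E₁ : E₀ →+* E₁) (fun i => algebraMap k₀ E₁ (x i)) =
      MvPolynomial.aeval x (q₁ * q₂) • y := by
    rw [hP, eval₂_map_mul, ← h₁, smul_smul, map_mul, mul_comm]
  have hev' : P'.eval₂ (IsScalarTower.toAlgHom k E₀ E₁ : E₀ →+* E₁)
      (fun i => algebraMap k₀ E₁ (x i)) = MvPolynomial.aeval x (q₁ * q₂) •
        ((algebraMap E₀ E₁ t + algebraMap k₀ E₁ (x i) * algebraMap E₀ E₁ z) * y) := by
    rw [hP', eval₂_map_mul, ← h₂, smul_smul, map_mul]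
  have hpoly : MvPolynomial.C t * P + MvPolynomial.X i * (MvPolynomial.C z * P) = P' := by
    apply hE.ind
    have hA : MvPolynomial.aeval (fun i => algebraMap k₀ E₁ (x i)) P = _ := hev
    have hA' : MvPolynomial.aeval (fun i => algebraMap k₀ E₁ (x i)) P' = _ := hev'
    clear_value P P'
    rw [map_add, map_mul, map_mul, map_mul, MvPolynomial.aeval_X, hA, hA', MvPolynomial.aeval_C,
      MvPolynomial.aeval_C, Algebra.smul_def, Algebra.smul_def]
    ring
  have hcoef : ∀ n : ℕ, ∀ m : ι →₀ ℕ, m i = n → P.coeff m ∈ Y := by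
    intro n
    induction n with
    | zero =>
      intro m hm
      refine hs _ (hPY m) ?_
      have := congrArg (MvPolynomial.coeff m) hpoly
      rw [MvPolynomial.coeff_add, MvPolynomial.coeff_C_mul, MvPolynomial.coeff_X_mul',
        if_neg (by simpa using hm), add_zero] at this
      exact this ▸ hPY' m
    | succ n ih =>
      intro m hm
      refine hs _ (hPY m) ?_
      have := congrArg (MvPolynomial.coeff m) hpoly
      rw [MvPolynomial.coeff_add, MvPolynomial.coeff_C_mul, MvPolynomial.coeff_X_mul',
        if_pos (by simp [hm]), MvPolynomial.coeff_C_mul] at this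
      rw [eq_sub_of_add_eq this]
      exact sub_mem (hPY' m) (hz _ (ih _ (by simp [hm])))
  have hmem := eval₂_mem_ext (k₀ := k₀) x (IsScalarTower.toAlgHom k E₀ E₁) fun m => hcoef _ m rfl
  rw [hev] at hmem
  have hne : MvPolynomial.aeval x (q₁ * q₂) ≠ 0 := hx.aeval_ne_zero (mul_ne_zero hq₁ hq₂)
  have := Submodule.smul_mem _ (MvPolynomial.aeval x (q₁ * q₂))⁻¹ hmem
  rwa [smul_smul, inv_mul_cancel₀ hne, one_smul] at this

end ExtField

end

/-! ### Regular linear forms -/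

section

open Module

section SatForms

variable {k E : Type*} [Field k] [Field E] [Algebra k E]

/-- `t ∈ W` behaves like a linear form which is regular, in large degrees, on the hyperplane
section of the projective variety with homogeneous pieces `W ^ n`. -/
structure SatForm (W : Submodule k E) (t : E) : Prop where
  mem : t ∈ W
  ne : t ∉ (algebraMap k E).range
  sat : ∃ n₁, ∀ n ≥ n₁, ∀ w ∈ W ^ (n + 1), t * w ∈ W ^ (n + 1) → w ∈ W ^ n

variable {W : Submodule k E}

theorem pow_mono_of_one (h1 : (1 : E) ∈ W) {a b : ℕ} (hab : a ≤ b) : W ^ a ≤ W ^ b :=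
  pow_le_pow_right' (Submodule.one_le.2 h1) hab

theorem le_tilde_pow (W : Submodule k E) (n : ℕ) : W ^ n ≤ tilde W (fun n => W ^ n) n := by
  intro x hx
  refine ⟨0, fun m _ y hy => ?_⟩
  change x * y ∈ W ^ (n + m)
  rw [pow_add]
  exact Submodule.mul_mem_mul hx hy

theorem SatForm.tilde_eq {t : E} (h1 : (1 : E) ∈ W) (h : SatForm W t) :
    ∃ n₁, ∀ n ≥ n₁, tilde W (fun n => W ^ n) n = W ^ n := by
  obtain ⟨n₁, hn₁⟩ := h.sat
  refine ⟨n₁, fun n hn => le_antisymm ?_ (le_tilde_pow W n)⟩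
  rintro b ⟨m₀, hm₀⟩
  have hmem : ∀ a m, a ≤ m → t ^ a ∈ W ^ m := fun a m ham =>
    pow_mono_of_one h1 ham (Submodule.pow_mem_pow W h.mem a)
  have hdesc : ∀ i j, i + j = m₀ → ∀ a ≤ j, t ^ a * b ∈ W ^ (n + j) := by
    intro i
    induction i with
    | zero =>
      intro j hj a ha
      rw [mul_comm]
      exact hm₀ j (by omega) _ (hmem a j ha)
    | succ i ih =>
      intro j hj a ha
      refine hn₁ (n + j) (by omega) _ (ih (j + 1) (by omega) a (by omega)) ?_
      rw [← mul_assoc, ← pow_succ']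
      exact ih (j + 1) (by omega) (a + 1) (by omega)
  simpa using hdesc m₀ 0 rfl 0 le_rfl

theorem tilde_pow_mono (h1 : (1 : E) ∈ W) {a b : ℕ} (hab : a ≤ b) :
    tilde W (fun n => W ^ n) a ≤ tilde W (fun n => W ^ n) b := by
  rintro x ⟨m₀, hm₀⟩
  exact ⟨m₀, fun m hm y hy => pow_mono_of_one h1 (by omega) (hm₀ m hm y hy)⟩

theorem SatForm.tilde_fd {t : E} [FiniteDimensional k W] (h1 : (1 : E) ∈ W) (h : SatForm W t)
    (n : ℕ) : FiniteDimensional k (tilde W (fun n => W ^ n) n) := by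
  obtain ⟨n₁, hn₁⟩ := h.tilde_eq h1
  refine Submodule.finiteDimensional_of_le (S₂ := W ^ (max n n₁)) ?_
  rw [← hn₁ _ (le_max_right _ _)]
  exact tilde_pow_mono h1 (le_max_left _ _)

theorem SatForm.tilde_zero [IsAlgClosed k] {t : E} [FiniteDimensional k W] (h1 : (1 : E) ∈ W)
    (h : SatForm W t) : tilde W (fun n => W ^ n) 0 = 1 := by
  let H : Subalgebra k E :=
    { carrier := tilde W (fun n => W ^ n) 0
      mul_mem' := fun {a b} ha hb => by
        obtain ⟨m₀, hm₀⟩ := ha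
        obtain ⟨l₀, hl₀⟩ := hb
        refine ⟨max m₀ l₀, fun m hm z hz => ?_⟩
        rw [mul_assoc]
        have := hl₀ m (by omega) z hz
        rw [zero_add] at this
        exact hm₀ m (by omega) _ this
      add_mem' := fun {a b} ha hb => add_mem ha hb
      algebraMap_mem' := fun c => ⟨0, fun m _ x hx => by
        rw [← Algebra.smul_def, zero_add]; exact Submodule.smul_mem _ _ hx⟩ }
  have hfd : FiniteDimensional k H := h.tilde_fd h1 0
  refine le_antisymm (fun x hx => ?_) (Submodule.one_le.2 (H.one_mem))
  have hIntegral : IsIntegral k x := by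
    have : IsIntegral k (⟨x, hx⟩ : H) := Algebra.IsIntegral.isIntegral _
    exact this.map H.val
  exact Submodule.mem_one.2 (algClosedIn_of_isAlgClosed k E x hIntegral.isAlgebraic)

theorem SatForm.preSection [IsAlgClosed k] {t : E} [FiniteDimensional k W] (h1 : (1 : E) ∈ W)
    (h : SatForm W t) : PreSection (K := k) (KT := E) t (shiftTilde W fun n => W ^ n) where
  fd := by
    rintro (_ | n)
    · change FiniteDimensional k (⊥ : Submodule k E); infer_instance
    · exact h.tilde_fd h1 n
  mono := by
    rintro (_ | n)
    · exact bot_le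
    · exact tilde_pow_mono h1 n.le_succ
  smul := by
    rintro (_ | n) x hx
    · rw [(Submodule.mem_bot k).1 hx, smul_zero]; exact zero_mem _
    · obtain ⟨m₀, hm₀⟩ := hx
      refine ⟨m₀, fun m hm y hy => ?_⟩
      have := Submodule.mul_mem_mul h.mem (hm₀ m hm y hy)
      rwa [← pow_succ', ← mul_assoc, show n + m + 1 = n + 1 + m by omega] at this
  sat := by
    rintro (_ | n) x hx htx
    · change x ∈ tilde W _ 0 at hx
      change _ ∈ tilde W _ 0 at htx
      rw [h.tilde_zero h1, Submodule.mem_one] at hx htx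
      obtain ⟨c, rfl⟩ := hx
      obtain ⟨c', hc'⟩ := htx
      change _ ∈ (⊥ : Submodule k E)
      rw [Submodule.mem_bot]
      by_contra hne
      refine h.ne ⟨c' / c, ?_⟩
      rw [map_div₀, hc', smul_eq_mul, mul_div_cancel_right₀ _ hne]
    · obtain ⟨m₀, hm₀⟩ := hx
      obtain ⟨l₀, hl₀⟩ := htx
      obtain ⟨n₁, hn₁⟩ := h.sat
      refine ⟨max n₁ (max m₀ l₀), fun m hm y hy => ?_⟩
      have e : n + 1 + m = n + m + 1 := by omega
      have ha := hm₀ m (by omega) y hy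
      have hb := hl₀ m (by omega) y hy
      simp only [e] at ha hb
      refine hn₁ (n + m) (by omega) _ ha ?_
      rwa [smul_eq_mul, mul_assoc] at hb

end SatForms

section PreSections

variable {K KT F : Type*} [Field K] [Field KT] [Field F] [Algebra K KT] [Algebra KT F]
  [Algebra K F] [IsScalarTower K KT F] {t : KT} {M : ℕ → Submodule K F}

/-- A filtration starting with `⊥` and saturated for `t` forces `t` to be transcendental. -/
theorem PreSection.transcendental (h : PreSection t M) (h0 : M 0 = ⊥) {y : F} (hy : y ≠ 0) {n : ℕ}
    (hyn : y ∈ M n) : Transcendental K t := by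
  intro halg
  obtain ⟨s, hs⟩ := halg.isIntegral.fg_adjoin_singleton
  have hB : ∀ w : KT, w ∈ Algebra.adjoin K {t} → ∃ B, ∀ m ≥ B, w • y ∈ M m := by
    intro w hw
    rw [Algebra.adjoin_singleton_eq_range_aeval] at hw
    obtain ⟨p, rfl⟩ := hw
    exact h.aeval_smul_mem p n y hyn
  have hs' : ∀ w ∈ s, w ∈ Algebra.adjoin K {t} := fun w hw => by
    have : w ∈ Submodule.span K (s : Set KT) := Submodule.subset_span hw
    rwa [hs] at this
  choose! B hB' using hB
  have hall : ∀ w ∈ Submodule.span K (s : Set KT), w • y ∈ M (s.sup B) := by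
    intro w hw
    induction hw using Submodule.span_induction with
    | mem w hw => exact hB' w (hs' w hw) _ (Finset.le_sup hw)
    | zero => rw [zero_smul]; exact zero_mem _
    | add a b _ _ ha hb => rw [add_smul]; exact add_mem ha hb
    | smul c a _ ha => rw [smul_assoc]; exact Submodule.smul_mem _ _ ha
  have hpow : ∀ a : ℕ, t ^ a • y ∈ M (s.sup B) := fun a => hall _ (by
    rw [hs]
    exact pow_mem (Algebra.self_mem_adjoin_singleton K t) a)
  have hdesc : ∀ i, (∀ a : ℕ, t ^ a • y ∈ M i) → False := by
    intro i
    induction i with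
    | zero =>
      intro hh
      have := hh 0
      rw [pow_zero, one_smul, h0, Submodule.mem_bot] at this
      exact hy this
    | succ i ih =>
      intro hh
      refine ih fun a => h.sat i _ (hh a) ?_
      rw [smul_smul, ← pow_succ']
      exact hh (a + 1)
  exact hdesc _ hpow

theorem PreSection.finrank_span [Infinite K] (ht : RatGen K t) (h : PreSection t M) (n : ℕ) :
    finrank KT (Submodule.span KT (M (n + 1) : Set F)) + finrank K (M n) =
      finrank K (M (n + 1)) := by
  have _ := h.fd n
  have _ := h.fd (n + 1)
  apply le_antisymm
  · obtain ⟨c, hc⟩ := general_section ht (M n) (M (n + 1))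
    rw [inf_eq_right.2, finrank_map_inj _ (lin_mul_injective ht c)] at hc
    · exact hc
    · rintro _ ⟨x, hx, rfl⟩
      rw [LinearMap.mulLeft_apply, lin_mul]
      exact sub_mem (h.smul n x hx) (Submodule.smul_mem _ _ (h.mono n hx))
  · exact h.span_bound ht n _ le_rfl

end PreSections

section ExtSection

set_option linter.unusedSectionVars false

variable {k k₀ K E₀ E₁ ι : Type*} [Field k] [IsAlgClosed k] [Field k₀] [Field K] [Field E₀]
  [Field E₁] [Algebra k k₀] [Algebra k E₀] [Algebra k E₁] [Algebra k₀ E₁] [Algebra E₀ E₁]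
  [IsScalarTower k k₀ E₁] [IsScalarTower k E₀ E₁] {x : ι → k₀} {W : Submodule k E₀}
  [Algebra K E₁] {t z : E₀}

theorem SatForm.preSection_ext [FiniteDimensional k W]
    (hx : RatExt k x) (hE : RatExt E₀ fun i => algebraMap k₀ E₁ (x i)) (h1 : (1 : E₀) ∈ W)
    (h : SatForm W t) (hz : z ∈ W) (i : ι) {c : K} (hc : algebraMap K E₁ c =
      algebraMap E₀ E₁ t + algebraMap k₀ E₁ (x i) * algebraMap E₀ E₁ z) :
    PreSection (K := k₀) c fun n => ext k₀ (IsScalarTower.toAlgHom k E₀ E₁)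
      (shiftTilde W (fun n => W ^ n) n) := by
  have hp := h.preSection h1
  have hzM : ∀ n, ∀ b ∈ shiftTilde W (fun n => W ^ n) n, z * b ∈ shiftTilde W (fun n => W ^ n) (n + 1) := by
    rintro (_ | n) x hx
    · rw [(Submodule.mem_bot k).1 hx, mul_zero]; exact zero_mem _
    · obtain ⟨m₀, hm₀⟩ := hx
      refine ⟨m₀, fun m hm y hy => ?_⟩
      have := Submodule.mul_mem_mul hz (hm₀ m hm y hy)
      rwa [← pow_succ', ← mul_assoc, show n + m + 1 = n + 1 + m by omega] at this
  have hfd := hp.fd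
  refine ⟨fun n => inferInstance, fun n => ext_mono _ (hp.mono n), ?_, ?_⟩
  · intro n y hy
    rw [Algebra.smul_def, hc]
    induction hy using Submodule.span_induction with
    | mem y hy =>
      obtain ⟨y, hy, rfl⟩ := hy
      rw [add_mul, mul_assoc, ← Algebra.smul_def (x i)]
      refine add_mem ?_ (Submodule.smul_mem _ _ ?_)
      · change algebraMap E₀ E₁ t * algebraMap E₀ E₁ y ∈ _
        rw [← map_mul]
        exact mem_ext_of_mem (φ := IsScalarTower.toAlgHom k E₀ E₁) (hp.smul n y hy)
      · change algebraMap E₀ E₁ z * algebraMap E₀ E₁ y ∈ _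
        rw [← map_mul]
        exact mem_ext_of_mem (φ := IsScalarTower.toAlgHom k E₀ E₁) (hzM n y hy)
    | zero => rw [mul_zero]; exact zero_mem _
    | add a b _ _ ha hb => rw [mul_add]; exact add_mem ha hb
    | smul w a _ ha => rw [mul_smul_comm]; exact Submodule.smul_mem _ _ ha
  · intro n y hy hcy
    rw [Algebra.smul_def, hc] at hcy
    exact ext_sat hx hE i (hzM n) (hp.sat n) hy hcy

theorem SatForm.transcendental_gform [FiniteDimensional k W]
    (hx : RatExt k x) (hE : RatExt E₀ fun i => algebraMap k₀ E₁ (x i)) (h1 : (1 : E₀) ∈ W)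
    (h : SatForm W t) (hz : z ∈ W) (i : ι) :
    Transcendental k₀ (algebraMap E₀ E₁ t + algebraMap k₀ E₁ (x i) * algebraMap E₀ E₁ z) := by
  refine (h.preSection_ext (K := E₁) hx hE h1 hz i (c := _) rfl).transcendental (n := 1) ?_
    (one_ne_zero (α := E₁)) ?_
  · change ext k₀ _ ⊥ = ⊥
    simp [ext]
  · have : (1 : E₀) ∈ tilde W (fun n => W ^ n) 0 := le_tilde_pow W 0 (by simp)
    have h := mem_ext_of_mem (K := k₀) (φ := IsScalarTower.toAlgHom k E₀ E₁) this
    rw [map_one] at h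
    exact h

variable [Algebra k₀ K] [IsScalarTower k₀ K E₁] [Algebra k K] [IsScalarTower k K E₁]

/-- Hilbert function of the generic hyperplane section in large degrees. -/
theorem SatForm.finrank_ext_pow [FiniteDimensional k W]
    (hx : RatExt k x) (hE : RatExt E₀ fun i => algebraMap k₀ E₁ (x i)) (h1 : (1 : E₀) ∈ W)
    (h : SatForm W t) (hz : z ∈ W) (i : ι) {c : K} (hc : algebraMap K E₁ c =
      algebraMap E₀ E₁ t + algebraMap k₀ E₁ (x i) * algebraMap E₀ E₁ z) (hcK : RatGen k₀ c) :
    ∃ n₀, ∀ n ≥ n₀, finrank K ↥(ext K (IsScalarTower.toAlgHom k E₀ E₁) W ^ (n + 1)) +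
      finrank k ↥(W ^ n) = finrank k ↥(W ^ (n + 1)) := by
  have hp := h.preSection_ext hx hE h1 hz i hc
  have _ : Infinite k₀ := Infinite.of_injective _ (algebraMap k k₀).injective
  obtain ⟨n₁, hn₁⟩ := h.tilde_eq h1
  refine ⟨n₁, fun n hn => ?_⟩
  have := hp.finrank_span hcK (n + 1)
  have e1 : shiftTilde W (fun n => W ^ n) (n + 1) = W ^ n := hn₁ n hn
  have e2 : shiftTilde W (fun n => W ^ n) (n + 1 + 1) = W ^ (n + 1) := hn₁ (n + 1) (by omega)
  beta_reduce at this
  rwa [e1, e2, ext_tower, finrank_ext hx hE, finrank_ext hx hE,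
    ext_pow] at this

theorem SatForm.finrank_ext_one [FiniteDimensional k W]
    (hx : RatExt k x) (hE : RatExt E₀ fun i => algebraMap k₀ E₁ (x i)) (h1 : (1 : E₀) ∈ W)
    (h : SatForm W t) (hz : z ∈ W) (i : ι) {c : K} (hc : algebraMap K E₁ c =
      algebraMap E₀ E₁ t + algebraMap k₀ E₁ (x i) * algebraMap E₀ E₁ z) (hcK : RatGen k₀ c) :
    finrank k W ≤ finrank K (ext K (IsScalarTower.toAlgHom k E₀ E₁) W) + 1 := by
  have hp := h.preSection_ext hx hE h1 hz i hc
  have := hp.span_bound hcK 1 (ext k₀ (IsScalarTower.toAlgHom k E₀ E₁) W) (ext_mono _ (by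
    have := le_tilde_pow W 1
    rwa [pow_one] at this))
  have e1 : shiftTilde W (fun n => W ^ n) 1 = 1 := h.tilde_zero h1
  beta_reduce at this
  rw [Submodule.one_eq_span] at e1
  rw [e1, finrank_ext hx hE, ext_tower, finrank_ext hx hE] at this
  refine this.trans (Nat.add_le_add_left ?_ _)
  exact (finrank_span_singleton one_ne_zero).le

end ExtSection

end

/-! ### Generation by linear forms -/

section

open Module

section PG

variable {K KT F : Type*} [Field K] [Field KT] [Field F] [Algebra K KT] [Algebra KT F]
  [Algebra K F] [IsScalarTower K KT F]

/-- If `1, t` generate the high powers of `V` and `V` generates the field `F`, then `F` is finite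
over any field containing `t`. -/
theorem powGen_of_gen {t : KT} {V : Submodule K F} [hfd : FiniteDimensional K V] (h1 : (1 : F) ∈ V)
    (ht : algebraMap KT F t ∈ V)
    (hgen : ∃ N, ∀ n ≥ N, ∀ x ∈ V ^ (n + 1), ∃ u ∈ V ^ n, ∃ w ∈ V ^ n, x = u + t • w)
    (hadj : IntermediateField.adjoin K (V : Set F) = ⊤) :
    PowGen t V ∧ FiniteDimensional KT F := by
  obtain ⟨N, hN⟩ := hgen
  have hle : ∀ n, ((V ^ n : Submodule K F) : Set F) ⊆ Submodule.span KT ((V ^ N : Submodule K F) : Set F) := by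
    have hge : ∀ j, ((V ^ (N + j) : Submodule K F) : Set F) ⊆
        Submodule.span KT ((V ^ N : Submodule K F) : Set F) := by
      intro j
      induction j with
      | zero => exact Submodule.subset_span
      | succ j ih =>
        intro x hx
        obtain ⟨u, hu, w, hw, rfl⟩ := hN (N + j) (by omega) x hx
        exact add_mem (ih hu) (Submodule.smul_mem _ _ (ih hw))
    intro n x hx
    exact hge n (pow_mono_of_one h1 (by omega) hx)
  have hspan : Submodule.span KT (⋃ n, ((V ^ n : Submodule K F) : Set F)) =
      Submodule.span KT ((V ^ N : Submodule K F) : Set F) :=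
    le_antisymm (Submodule.span_le.2 (Set.iUnion_subset hle))
      (Submodule.span_mono (Set.subset_iUnion (fun n => ((V ^ n : Submodule K F) : Set F)) N))
  have hD : ∀ x y, x ∈ Submodule.span KT (⋃ n, ((V ^ n : Submodule K F) : Set F)) →
      y ∈ Submodule.span KT (⋃ n, ((V ^ n : Submodule K F) : Set F)) →
      x * y ∈ Submodule.span KT (⋃ n, ((V ^ n : Submodule K F) : Set F)) := by
    intro x y hx hy
    induction hx using Submodule.span_induction with
    | mem a ha =>
      induction hy using Submodule.span_induction with
      | mem b hb =>
        obtain ⟨n, hn⟩ := Set.mem_iUnion.1 ha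
        obtain ⟨m, hm⟩ := Set.mem_iUnion.1 hb
        refine Submodule.subset_span (Set.mem_iUnion.2 ⟨n + m, ?_⟩)
        rw [pow_add]
        exact Submodule.mul_mem_mul hn hm
      | zero => rw [mul_zero]; exact zero_mem _
      | add b b' _ _ h h' => rw [mul_add]; exact add_mem h h'
      | smul c b _ h => rw [mul_smul_comm]; exact Submodule.smul_mem _ _ h
    | zero => rw [zero_mul]; exact zero_mem _
    | add b b' _ _ h h' => rw [add_mul]; exact add_mem h h'
    | smul c b _ h => rw [smul_mul_assoc]; exact Submodule.smul_mem _ _ h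
  have h1D : (1 : F) ∈ Submodule.span KT (⋃ n, ((V ^ n : Submodule K F) : Set F)) :=
    Submodule.subset_span (Set.mem_iUnion.2 ⟨0, by simp⟩)
  let H : Subalgebra KT F := (Submodule.span KT (⋃ n, ((V ^ n : Submodule K F) : Set F))).toSubalgebra
    h1D hD
  have hHfd : FiniteDimensional KT (Submodule.span KT (⋃ n, ((V ^ n : Submodule K F) : Set F))) := by
    rw [hspan]
    exact span_fd _
  have hHfd' : FiniteDimensional KT H := hHfd
  have hfield : IsField H := isField_of_isIntegral_of_isField' (Field.toIsField KT)
  let HF : IntermediateField KT F := H.toIntermediateField' hfield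
  have htop : HF = ⊤ := by
    have : IntermediateField.adjoin K (V : Set F) ≤ HF.restrictScalars K := by
      rw [IntermediateField.adjoin_le_iff]
      intro v hv
      exact Submodule.subset_span (Set.mem_iUnion.2 ⟨1, by rwa [pow_one]⟩)
    rw [hadj, top_le_iff] at this
    rw [eq_top_iff]
    intro v _
    have hv : v ∈ HF.restrictScalars K := this ▸ trivial
    exact hv
  have hDtop : Submodule.span KT (⋃ n, ((V ^ n : Submodule K F) : Set F)) = ⊤ := by
    rw [eq_top_iff]
    intro v _
    have : v ∈ HF := htop ▸ trivial
    exact this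
  refine ⟨⟨hfd, h1, ht, ⟨N, hN⟩, hDtop⟩, ?_⟩
  rw [hDtop] at hHfd
  exact Module.Finite.equiv (Submodule.topEquiv (R := KT) (M := F))

end PG

section Transc

variable {K F : Type*} [Field K] [Field F] [Algebra K F]

theorem transcendental_of_gen {t : F} {V : Submodule K F} [hfd : FiniteDimensional K V]
    (h1 : (1 : F) ∈ V)
    (hgen : ∃ N, ∀ n ≥ N, ∀ x ∈ V ^ (n + 1), ∃ u ∈ V ^ n, ∃ w ∈ V ^ n, x = u + t * w)
    (hub : ∀ B, ∃ n, B < finrank K ↥(V ^ n)) : Transcendental K t := by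
  intro halg
  obtain ⟨N, hN⟩ := hgen
  let E : Submodule K F := Subalgebra.toSubmodule (Algebra.adjoin K {t})
  have hEfd : FiniteDimensional K E := Module.Finite.iff_fg.2 halg.isIntegral.fg_adjoin_singleton
  have h1E : (1 : F) ∈ E := (Algebra.adjoin K {t}).one_mem
  have htE : ∀ e ∈ E, t * e ∈ E := fun e he =>
    (Algebra.adjoin K {t}).mul_mem (Algebra.self_mem_adjoin_singleton K t) he
  have hle : ∀ n, V ^ n ≤ E * V ^ N := by
    have hge : ∀ j, V ^ (N + j) ≤ E * V ^ N := by
      intro j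
      induction j with
      | zero => intro x hx; simpa using Submodule.mul_mem_mul h1E hx
      | succ j ih =>
        intro x hx
        obtain ⟨u, hu, w, hw, rfl⟩ := hN (N + j) (by omega) x hx
        refine add_mem (ih hu) ?_
        refine Submodule.mul_induction_on (C := fun w => t * w ∈ E * V ^ N) (ih hw)
          (fun e he v hv => ?_) fun a b ha hb => ?_
        · rw [← mul_assoc]; exact Submodule.mul_mem_mul (htE e he) hv
        · rw [mul_add]; exact add_mem ha hb
    intro n
    exact (pow_mono_of_one h1 (by omega)).trans (hge n)
  obtain ⟨n, hn⟩ := hub (finrank K ↥(E * V ^ N))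
  exact absurd (Submodule.finrank_mono (hle n)) (by omega)

end Transc

section Dims

variable {k E : Type*} [Field k] [Field E] [Algebra k E]

theorem finrank_sup_mul {t : E} (ht : t ≠ 0) {A B C : Submodule k E} [FiniteDimensional k A]
    [FiniteDimensional k B] (hC : ∀ w ∈ C, w ∈ B ∧ t * w ∈ A) (hC' : ∀ w ∈ B, t * w ∈ A → w ∈ C) :
    finrank k ↥(A ⊔ B.map (LinearMap.mulLeft k t)) + finrank k C = finrank k A + finrank k B := by
  have hinj : Function.Injective (LinearMap.mulLeft k t) := fun a b h => mul_left_cancel₀ ht h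
  have h := Submodule.finrank_sup_add_finrank_inf_eq A (B.map (LinearMap.mulLeft k t))
  rw [finrank_map_inj _ hinj] at h
  rw [← h, ← finrank_map_inj _ hinj C]
  congr 1
  suffices h' : C.map (LinearMap.mulLeft k t) = A ⊓ B.map (LinearMap.mulLeft k t) by rw [h']
  ext w
  constructor
  · rintro ⟨v, hv, rfl⟩
    exact ⟨(hC v hv).2, v, (hC v hv).1, rfl⟩
  · rintro ⟨hw, v, hv, rfl⟩
    exact ⟨v, hC' v hv hw, rfl⟩

/-- Two general linear forms generate the high powers of the coordinate ring of a surface. -/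
theorem gen_of_dims {V : Submodule k E} [FiniteDimensional k V] (h1 : (1 : E) ∈ V) {t : Fin 2 → E}
    (ht0 : SatForm V (t 0)) (ht1 : SatForm V (t 1))
    (hsat : ∃ n₁, ∀ n ≥ n₁, ∀ w ∈ V ^ (n + 1),
      t 1 * w ∈ V ^ (n + 1) ⊔ (V ^ (n + 1)).map (LinearMap.mulLeft k (t 0)) →
      w ∈ V ^ n ⊔ (V ^ n).map (LinearMap.mulLeft k (t 0)))
    (hdim : ∃ n₀, ∀ n ≥ n₀, finrank k ↥(V ^ (n + 3)) + 3 * finrank k ↥(V ^ (n + 1)) =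
      3 * finrank k ↥(V ^ (n + 2)) + finrank k ↥(V ^ n)) :
    ∃ N, ∀ n ≥ N, ∀ y ∈ V ^ (n + 1), ∃ a ∈ V ^ n, ∃ b ∈ V ^ n, ∃ c ∈ V ^ n,
      y = a + t 0 * b + t 1 * c := by
  obtain ⟨n₁, hn₁⟩ := ht0.sat
  obtain ⟨n₂, hn₂⟩ := hsat
  obtain ⟨n₀, hn₀⟩ := hdim
  have hne : ∀ i, t i ≠ 0 := by
    have : ∀ i, SatForm V (t i) := fun i => by fin_cases i <;> assumption
    exact fun i h0 => (this i).ne (h0 ▸ zero_mem _)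
  have hmul : ∀ i n, ∀ w ∈ V ^ n, t i * w ∈ V ^ (n + 1) := by
    have : ∀ i, t i ∈ V := fun i => by fin_cases i; exacts [ht0.mem, ht1.mem]
    intro i n w hw
    rw [pow_succ']
    exact Submodule.mul_mem_mul (this i) hw
  have hmono : ∀ n, V ^ n ≤ V ^ (n + 1) := fun n => pow_mono_of_one h1 n.le_succ
  let A : ℕ → Submodule k E := fun n => V ^ n ⊔ (V ^ n).map (LinearMap.mulLeft k (t 0))
  have hA : ∀ n ≥ n₁, finrank k (A (n + 1)) + finrank k ↥(V ^ n) =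
      finrank k ↥(V ^ (n + 1)) + finrank k ↥(V ^ (n + 1)) := fun n hn =>
    finrank_sup_mul (hne 0) (fun w hw => ⟨hmono n hw, hmul 0 n w hw⟩) (hn₁ n hn)
  have hAfd : ∀ n, FiniteDimensional k (A n) := fun n => by infer_instance
  have hC : ∀ n ≥ n₂, finrank k ↥(A (n + 1) ⊔ (V ^ (n + 1)).map (LinearMap.mulLeft k (t 1))) +
      finrank k (A n) = finrank k (A (n + 1)) + finrank k ↥(V ^ (n + 1)) := by
    intro n hn
    refine finrank_sup_mul (hne 1) (fun w hw => ?_) (hn₂ n hn)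
    obtain ⟨a, ha, _, ⟨b, hb, rfl⟩, rfl⟩ := Submodule.mem_sup.1 hw
    simp only [LinearMap.mulLeft_apply] at hw ⊢
    refine ⟨add_mem (hmono n ha) (hmul 0 n b hb), ?_⟩
    rw [mul_add, mul_left_comm]
    exact add_mem (Submodule.mem_sup_left (hmul 1 n a ha))
      (Submodule.mem_sup_right ⟨_, hmul 1 n b hb, rfl⟩)
  refine ⟨n₀ + n₁ + n₂ + 2, fun n hn y hy => ?_⟩
  obtain ⟨m, rfl⟩ : ∃ m, n = m + 2 := ⟨n - 2, by omega⟩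
  have e1 := hA m (by omega)
  have e2 := hA (m + 1) (by omega)
  have e3 := hC (m + 1) (by omega)
  have e4 := hn₀ m (by omega)
  have hle : A (m + 1 + 1) ⊔ (V ^ (m + 1 + 1)).map (LinearMap.mulLeft k (t 1)) ≤ V ^ (m + 3) := by
    refine sup_le (sup_le (hmono _) ?_) ?_
    · rintro _ ⟨w, hw, rfl⟩; exact hmul 0 _ w hw
    · rintro _ ⟨w, hw, rfl⟩; exact hmul 1 _ w hw
  have heq := Submodule.eq_of_le_of_finrank_eq hle (by
    change finrank k ↥(V ^ (m + 1 + 1 + 1)) + 3 * finrank k ↥(V ^ (m + 1)) =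
      3 * finrank k ↥(V ^ (m + 1 + 1)) + finrank k ↥(V ^ m) at e4
    change _ = finrank k ↥(V ^ (m + 1 + 1 + 1))
    omega)
  have hy' : y ∈ A (m + 1 + 1) ⊔ (V ^ (m + 1 + 1)).map (LinearMap.mulLeft k (t 1)) := by
    rw [heq]; exact hy
  obtain ⟨u, hu, _, ⟨c, hc, rfl⟩, rfl⟩ := Submodule.mem_sup.1 hy'
  obtain ⟨a, ha, _, ⟨b, hb, rfl⟩, rfl⟩ := Submodule.mem_sup.1 hu
  exact ⟨a, ha, b, hb, c, hc, rfl⟩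

end Dims

section GenExt

variable {k k₀ E₀ E₁ : Type*} [Field k] [Field k₀] [Field E₀]
  [Field E₁] [Algebra k k₀] [Algebra k E₀] [Algebra k E₁] [Algebra k₀ E₁] [Algebra E₀ E₁]
  [IsScalarTower k k₀ E₁] [IsScalarTower k E₀ E₁] {x : Fin 2 → k₀}

/-- After a generic change of the linear forms, they still generate the next power: expressing
`z w` through `t 0, t 1` gives a linear system with matrix `1 + x 0 A + x 1 B`. -/
theorem gen_ext (hx : RatExt k x) {V : Submodule k E₀} [FiniteDimensional k V] {t : Fin 2 → E₀}
    {z : E₀} (hz : z ∈ V) {n : ℕ}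
    (hgen : ∀ y ∈ V ^ (n + 1), ∃ a ∈ V ^ n, ∃ b ∈ V ^ n, ∃ c ∈ V ^ n, y = a + t 0 * b + t 1 * c)
    (U : Submodule k₀ E₁) (hU : ∀ w ∈ V ^ n, algebraMap E₀ E₁ w ∈ U)
    (hU' : ∀ i, ∀ w ∈ V ^ n, gform E₁ x t z i * algebraMap E₀ E₁ w ∈ U) :
    ∀ y ∈ V ^ (n + 1), algebraMap E₀ E₁ y ∈ U := by
  classical
  let φ := algebraMap E₀ E₁
  let w := finBasis k ↥(V ^ n)
  have hzw : ∀ a, z * (w a : E₀) ∈ V ^ (n + 1) := fun a => by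
    rw [pow_succ']; exact Submodule.mul_mem_mul hz (w a).2
  choose v hv b hb c hc hvbc using fun a => hgen _ (hzw a)
  let A : Matrix _ _ k := fun a a' => w.repr ⟨b a, hb a⟩ a'
  let B : Matrix _ _ k := fun a a' => w.repr ⟨c a, hc a⟩ a'
  have hA : ∀ a, b a = ∑ a', A a a' • (w a' : E₀) := fun a => by
    have := congrArg Subtype.val (w.sum_repr ⟨b a, hb a⟩)
    simp only [AddSubmonoidClass.coe_finsetSum, SetLike.val_smul] at this
    exact this.symm
  have hB : ∀ a, c a = ∑ a', B a a' • (w a' : E₀) := fun a => by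
    have := congrArg Subtype.val (w.sum_repr ⟨c a, hc a⟩)
    simp only [AddSubmonoidClass.coe_finsetSum, SetLike.val_smul] at this
    exact this.symm
  let MP : Matrix (Fin _) (Fin _) (MvPolynomial (Fin 2) k) :=
    1 + (MvPolynomial.X 0 : MvPolynomial (Fin 2) k) • A.map MvPolynomial.C +
      (MvPolynomial.X 1 : MvPolynomial (Fin 2) k) • B.map MvPolynomial.C
  have hdetP : MP.det ≠ 0 := by
    intro h0
    have := congrArg (MvPolynomial.constantCoeff (R := k) (σ := Fin 2)) h0
    rw [RingHom.map_det, map_zero] at this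
    have h1 : (MvPolynomial.constantCoeff (R := k) (σ := Fin 2)).mapMatrix MP = 1 := by
      ext i j
      simp [MP, Matrix.one_apply, apply_ite]
    rw [h1, Matrix.det_one] at this
    exact one_ne_zero this
  let M : Matrix (Fin _) (Fin _) k₀ := (MvPolynomial.aeval x : _ →ₐ[k] k₀).toRingHom.mapMatrix MP
  have hM : ∀ a a', M a a' = (1 : Matrix (Fin _) (Fin _) k₀) a a' + x 0 * algebraMap k k₀ (A a a') +
      x 1 * algebraMap k k₀ (B a a') := by
    intro a a'
    simp [M, MP, Matrix.one_apply, apply_ite]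
  have hdet : M.det ≠ 0 := by
    rw [← RingHom.map_det]
    exact hx.aeval_ne_zero hdetP
  have hsys : ∀ a, ∑ a', M a a' • (φ z * φ (w a')) ∈ U := by
    intro a
    have key : ∑ a', M a a' • (φ z * φ (w a')) = φ (v a) + gform E₁ x t z 0 * φ (b a) +
        gform E₁ x t z 1 * φ (c a) := by
      have e1 : φ z * φ (w a) = φ (v a) + φ (t 0) * φ (b a) + φ (t 1) * φ (c a) := by
        rw [← map_mul, hvbc a, map_add, map_add, map_mul, map_mul]
      have eA : φ (b a) = ∑ a', algebraMap k₀ E₁ (algebraMap k k₀ (A a a')) * φ (w a') := by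
        rw [hA, map_sum]
        refine Finset.sum_congr rfl fun a' _ => ?_
        rw [Algebra.smul_def, map_mul, ← IsScalarTower.algebraMap_apply,
          ← IsScalarTower.algebraMap_apply]
      have eB : φ (c a) = ∑ a', algebraMap k₀ E₁ (algebraMap k k₀ (B a a')) * φ (w a') := by
        rw [hB, map_sum]
        refine Finset.sum_congr rfl fun a' _ => ?_
        rw [Algebra.smul_def, map_mul, ← IsScalarTower.algebraMap_apply,
          ← IsScalarTower.algebraMap_apply]
      have : ∑ a', M a a' • (φ z * φ (w a')) = φ z * φ (w a) +
          algebraMap k₀ E₁ (x 0) * φ z * φ (b a) + algebraMap k₀ E₁ (x 1) * φ z * φ (c a) := by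
        rw [eA, eB, Finset.mul_sum, Finset.mul_sum]
        simp only [hM, add_smul, Finset.sum_add_distrib]
        congr 1
        · congr 1
          · simp [Matrix.one_apply]
          · refine Finset.sum_congr rfl fun a' _ => ?_
            rw [Algebra.smul_def, map_mul]; ring
        · refine Finset.sum_congr rfl fun a' _ => ?_
          rw [Algebra.smul_def, map_mul]; ring
      rw [this, e1]
      simp only [gform]
      ring
    rw [key]
    exact add_mem (add_mem (hU _ (hv a)) (hU' 0 _ (hb a))) (hU' 1 _ (hc a))
  have hzU : ∀ a, φ z * φ (w a) ∈ U := by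
    intro a
    have h : ∑ a', (M⁻¹) a a' • ∑ a'', M a' a'' • (φ z * φ (w a'')) = φ z * φ (w a) := by
      simp only [Finset.smul_sum, smul_smul]
      rw [Finset.sum_comm]
      simp only [← Finset.sum_smul]
      have : ∀ a'', ∑ a', M⁻¹ a a' * M a' a'' = (1 : Matrix (Fin _) (Fin _) k₀) a a'' := by
        intro a''
        rw [← Matrix.nonsing_inv_mul M (isUnit_iff_ne_zero.2 hdet), Matrix.mul_apply]
      simp [this, Matrix.one_apply]
    rw [← h]
    exact sum_mem fun a' _ => Submodule.smul_mem _ _ (hsys a')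
  have hzU' : ∀ y ∈ V ^ n, φ z * φ y ∈ U := by
    intro y hy
    have := congrArg Subtype.val (w.sum_repr ⟨y, hy⟩)
    simp only [AddSubmonoidClass.coe_finsetSum, SetLike.val_smul] at this
    rw [← this, map_sum, Finset.mul_sum]
    refine sum_mem fun a _ => ?_
    rw [Algebra.smul_def, map_mul, ← IsScalarTower.algebraMap_apply,
      IsScalarTower.algebraMap_apply k k₀ E₁, mul_left_comm, ← Algebra.smul_def]
    exact Submodule.smul_mem _ _ (hzU a)
  have htU : ∀ i, ∀ y ∈ V ^ n, φ (t i) * φ y ∈ U := by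
    intro i y hy
    have : φ (t i) * φ y = gform E₁ x t z i * φ y - x i • (φ z * φ y) := by
      rw [Algebra.smul_def]; simp only [gform, φ]; ring
    rw [this]
    exact sub_mem (hU' i y hy) (Submodule.smul_mem _ _ (hzU' y hy))
  intro y hy
  obtain ⟨a, ha, b, hb, c, hc, rfl⟩ := hgen y hy
  rw [map_add, map_add, map_mul, map_mul]
  exact add_mem (add_mem (hU a ha) (htU 0 b hb)) (htU 1 c hc)

end GenExt

end

/-! ### Fields generated by linear forms -/

section

open Module

section FieldLemmas

/-- Algebraicity of `N` over a field only depends on the image of that field. -/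
theorem isAlgebraic_of_range_le {A B N : Type*} [Field A] [Field B] [Field N] [Algebra A N]
    [Algebra B N] (h : (algebraMap A N).range ≤ (algebraMap B N).range)
    [hA : Algebra.IsAlgebraic A N] : Algebra.IsAlgebraic B N := by
  let e : B ≃+* (algebraMap B N).range := RingEquiv.ofBijective (algebraMap B N).rangeRestrict
    ⟨fun a b hab => (algebraMap B N).injective (congrArg Subtype.val hab),
      (algebraMap B N).rangeRestrict_surjective⟩
  let f : A →+* B := e.symm.toRingHom.comp
    ((algebraMap A N).codRestrict (algebraMap B N).range fun a => h ⟨a, rfl⟩)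
  let _ : Algebra A B := f.toAlgebra
  have hf : ∀ a, algebraMap B N (f a) = algebraMap A N a := fun a => by
    have : (e (f a) : N) = algebraMap A N a := by simp [f]
    exact this
  have _ : IsScalarTower A B N := IsScalarTower.of_algebraMap_eq fun a => (hf a).symm
  exact Algebra.IsAlgebraic.tower_top (K := A) B

theorem ratGen_gen {k N : Type*} [Field k] [Field N] [Algebra k N] {u : N}
    (hu : Transcendental k u) : RatGen k (IntermediateField.AdjoinSimple.gen k u) where
  trans := fun h => hu (by
    exact IsAlgebraic.algHom (IntermediateField.val (IntermediateField.adjoin k {u})) h)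
  frac := by
    intro y
    have hy : y ∈ IntermediateField.adjoin k {IntermediateField.AdjoinSimple.gen k u} :=
      adjoin_gen_eq_top k u ▸ trivial
    obtain ⟨p, q, rfl⟩ := (IntermediateField.mem_adjoin_simple_iff k y).1 hy
    by_cases hq : Polynomial.aeval (IntermediateField.AdjoinSimple.gen k u) q = 0
    · exact ⟨0, 1, one_ne_zero, by simp [hq]⟩
    · exact ⟨p, q, fun h => hq (by rw [h, map_zero]), div_mul_cancel₀ _ hq⟩

theorem subfield_eq_top_of_gen {k k₀ F₀ N ι : Type*} [Field k] [Field k₀] [Field F₀] [Field N]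
    [Algebra k k₀] [Algebra k F₀] [Algebra k N] [Algebra k₀ N] [Algebra F₀ N]
    [IsScalarTower k k₀ N] [IsScalarTower k F₀ N] {x : ι → k₀}
    (hN : RatExt F₀ fun i => algebraMap k₀ N (x i)) {X : Set F₀}
    (hX : IntermediateField.adjoin k X = ⊤) (S : Subfield N) (hk : ∀ a, algebraMap k₀ N a ∈ S)
    (hS : ∀ y ∈ X, algebraMap F₀ N y ∈ S) (y : N) : y ∈ S := by
  have hF : ∀ y, algebraMap F₀ N y ∈ S := by
    intro y
    have hy : y ∈ IntermediateField.adjoin k X := hX ▸ trivial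
    induction hy using IntermediateField.adjoin_induction with
    | mem y hy => exact hS y hy
    | algebraMap c =>
      rw [← IsScalarTower.algebraMap_apply, IsScalarTower.algebraMap_apply k k₀ N]
      exact hk _
    | add a b _ _ ha hb => rw [map_add]; exact add_mem ha hb
    | inv a _ ha => rw [map_inv₀]; exact inv_mem ha
    | mul a b _ _ ha hb => rw [map_mul]; exact mul_mem ha hb
  have hP : ∀ p : MvPolynomial ι F₀, MvPolynomial.aeval (fun i => algebraMap k₀ N (x i)) p ∈ S := by
    intro p
    induction p using MvPolynomial.induction_on with
    | C a => rw [MvPolynomial.aeval_C]; exact hF a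
    | add p q hp hq => rw [map_add]; exact add_mem hp hq
    | mul_X p i hp => rw [map_mul, MvPolynomial.aeval_X]; exact mul_mem hp (hk _)
  obtain ⟨p, q, hq, h⟩ := hN.frac y
  rw [eq_div_of_mul_eq (hN.aeval_ne_zero hq) h]
  exact div_mem (hP p) (hP q)

end FieldLemmas

section Base

set_option linter.unusedSectionVars false

variable {k F₀ : Type*} [Field k] [IsAlgClosed k] [Field F₀] [Algebra k F₀]

theorem ext_gen {K B A : Type*} [Field K] [Field B] [Field A] [Algebra k A] [Algebra k B]
    [Algebra K B] [Algebra k K] [IsScalarTower k K B] (φ : A →ₐ[k] B) {V : Submodule k A} {θ : B}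
    {n : ℕ} (h : ∀ y ∈ V ^ (n + 1), φ y ∈ (ext K φ V) ^ n ⊔
      ((ext K φ V) ^ n).map (LinearMap.mulLeft K θ)) :
    ∀ y ∈ (ext K φ V) ^ (n + 1), ∃ u ∈ (ext K φ V) ^ n, ∃ w ∈ (ext K φ V) ^ n, y = u + θ * w := by
  intro y hy
  have hle : ext K φ V ^ (n + 1) ≤ (ext K φ V) ^ n ⊔
      ((ext K φ V) ^ n).map (LinearMap.mulLeft K θ) := by
    rw [← ext_pow φ V (n + 1)]
    refine Submodule.span_le.2 ?_
    rintro _ ⟨y, hy, rfl⟩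
    exact h y hy
  obtain ⟨u, hu, _, ⟨w, hw, rfl⟩, rfl⟩ := Submodule.mem_sup.1 (hle hy)
  exact ⟨u, hu, w, hw, rfl⟩

theorem SatForm.transcendental {V : Submodule k F₀} [FiniteDimensional k V] (h1 : (1 : F₀) ∈ V)
    {t : F₀} (h : SatForm V t) : Transcendental k t :=
  (h.preSection h1).transcendental rfl (one_ne_zero (α := F₀)) (n := 1)
    (le_tilde_pow V 0 (by simp))

/-- On a surface, two general linear forms are algebraically independent and the function field
is algebraic over them. -/
theorem base_indep {V : Submodule k F₀} [FiniteDimensional k V] (h1 : (1 : F₀) ∈ V)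
    {t : Fin 2 → F₀} (ht : ∀ i, t i ∈ V) (ht0 : SatForm V (t 0))
    (hgen : ∃ N, ∀ n ≥ N, ∀ y ∈ V ^ (n + 1), ∃ a ∈ V ^ n, ∃ b ∈ V ^ n, ∃ c ∈ V ^ n,
      y = a + t 0 * b + t 1 * c)
    (hgrow : ∀ B m, ∃ n ≥ m, B + finrank k ↥(V ^ n) < finrank k ↥(V ^ (n + 1)))
    (hV : IntermediateField.adjoin k (V : Set F₀) = ⊤) :
    AlgebraicIndependent k t ∧
      Algebra.IsAlgebraic (IntermediateField.adjoin k (Set.range t)) F₀ := by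
  have htr := ht0.transcendental h1
  have hRG := ratGen_gen htr
  let K := IntermediateField.adjoin k {t 0}
  let c : K := IntermediateField.AdjoinSimple.gen k (t 0)
  have hp : PreSection (K := k) (KT := K) (F := F₀) c (shiftTilde V fun n => V ^ n) := by
    have := ht0.preSection h1
    exact ⟨this.fd, this.mono, this.smul, this.sat⟩
  have _ : Infinite k := inferInstance
  let φ : F₀ →ₐ[k] F₀ := AlgHom.id k F₀
  have h1' : (1 : F₀) ∈ ext K φ V := by simpa using mem_ext_of_mem (K := K) (φ := φ) h1
  have hgen' : ∃ N, ∀ n ≥ N, ∀ y ∈ (ext K φ V) ^ (n + 1), ∃ u ∈ (ext K φ V) ^ n,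
      ∃ w ∈ (ext K φ V) ^ n, y = u + t 1 * w := by
    obtain ⟨N, hN⟩ := hgen
    refine ⟨N, fun n hn => ext_gen φ fun y hy => ?_⟩
    obtain ⟨a, ha, b, hb, d, hd, rfl⟩ := hN n hn y hy
    have hm : ∀ a ∈ V ^ n, a ∈ ext K φ V ^ n := fun a ha => by
      rw [← ext_pow]; exact mem_ext_of_mem (φ := φ) ha
    refine add_mem (Submodule.mem_sup_left (add_mem (hm a ha) ?_))
      (Submodule.mem_sup_right ⟨d, hm d hd, rfl⟩)
    exact Submodule.smul_mem _ c (hm b hb)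
  have htr1 : Transcendental K (t 1) := by
    refine transcendental_of_gen h1' hgen' fun B => ?_
    obtain ⟨n₁, hn₁⟩ := ht0.tilde_eq h1
    obtain ⟨n, hn, hB⟩ := hgrow B n₁
    refine ⟨n + 1, ?_⟩
    have e1 : shiftTilde V (fun n => V ^ n) (n + 1) = V ^ n := hn₁ n hn
    have e2 : shiftTilde V (fun n => V ^ n) (n + 1 + 1) = V ^ (n + 1) := hn₁ (n + 1) (by omega)
    have := hp.finrank_span hRG (n + 1)
    rw [e1, e2] at this
    have e3 : ext K φ V ^ (n + 1) = Submodule.span K ((V ^ (n + 1) : Submodule k F₀) : Set F₀) := by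
      rw [← ext_pow, ext]
      simp [φ]
    rw [e3]
    change finrank K (Submodule.span K ((V ^ (n + 1) : Submodule k F₀) : Set F₀)) + _ = _ at this
    omega
  constructor
  · have hu : AlgebraicIndependent k (fun _ : Unit => t 0) :=
      (algebraicIndependent_unique_type_iff).2 htr
    have ho : AlgebraicIndependent k (fun o : Option Unit => o.elim (t 1) fun _ => t 0) := by
      refine (hu.option_iff_transcendental _).2 fun halg => htr1 ?_
      obtain ⟨P, hP0, hP⟩ := halg
      have hle : Algebra.adjoin k (Set.range fun _ : Unit => t 0) ≤ K.toSubalgebra := by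
        refine Algebra.adjoin_le ?_
        rintro _ ⟨_, rfl⟩
        exact IntermediateField.mem_adjoin_simple_self k (t 0)
      refine ⟨P.map (Subalgebra.inclusion hle).toRingHom, ?_, ?_⟩
      · exact (Polynomial.map_ne_zero_iff (Subalgebra.inclusion_injective hle)).2 hP0
      · rw [Polynomial.aeval_def, Polynomial.eval₂_map]
        exact hP
    let e : Fin 2 → Option Unit := ![some (), none]
    have := ho.comp e (by decide)
    convert this using 1
    ext i
    fin_cases i <;> rfl
  · let KT := IntermediateField.adjoin K {t 1}
    let c' : KT := IntermediateField.AdjoinSimple.gen K (t 1)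
    have hadj : IntermediateField.adjoin K (ext K φ V : Set F₀) = ⊤ := by
      rw [eq_top_iff]
      intro y _
      have hy : y ∈ IntermediateField.adjoin k (V : Set F₀) := hV ▸ trivial
      have hle : IntermediateField.adjoin k (V : Set F₀) ≤
          (IntermediateField.adjoin K (ext K φ V : Set F₀)).restrictScalars k := by
        rw [IntermediateField.adjoin_le_iff]
        intro v hv
        exact IntermediateField.subset_adjoin K _ (mem_ext_of_mem (φ := φ) hv)
      exact hle hy
    have := (powGen_of_gen (K := K) (KT := KT) (t := c') h1'
      (mem_ext_of_mem (φ := φ) (ht 1)) hgen' hadj).2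
    have _ : Algebra.IsAlgebraic KT F₀ := inferInstance
    refine isAlgebraic_of_range_le (A := KT) ?_
    rintro _ ⟨⟨y, hy⟩, rfl⟩
    refine ⟨⟨y, ?_⟩, rfl⟩
    have hK : K ≤ IntermediateField.adjoin k (Set.range t) :=
      IntermediateField.adjoin.mono _ _ _ (by simp)
    induction hy using IntermediateField.adjoin_induction with
    | mem y hy => rw [Set.mem_singleton_iff.1 hy]; exact IntermediateField.subset_adjoin _ _ ⟨1, rfl⟩
    | algebraMap c => exact hK c.2
    | add a b _ _ ha hb => exact add_mem ha hb
    | inv a _ ha => exact inv_mem ha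
    | mul a b _ _ ha hb => exact mul_mem ha hb

end Base

end

/-! ### Forms vanishing on the surface section -/

section

open Module

section HInj

variable {k k₀ K F₀ L₀ F L ι : Type*} [Field k] [Field k₀] [Field K] [Field F₀] [Field L₀]
  [Field F] [Field L] [Algebra k k₀] [Algebra k F₀] [Algebra k L₀] [Algebra k F] [Algebra k L]
  [Algebra k₀ F] [Algebra k₀ L] [Algebra F₀ F] [Algebra L₀ L] [Algebra k₀ K] [Algebra K F]
  [Algebra K L] [IsScalarTower k k₀ F] [IsScalarTower k k₀ L] [IsScalarTower k F₀ F]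
  [IsScalarTower k L₀ L] [IsScalarTower k₀ K F] [IsScalarTower k₀ K L] {x : ι → k₀}

variable (k F₀ L₀ F L) in
/-- The scalar extension of `F₀ × L₀`. -/
def prodExt : F₀ × L₀ →ₐ[k] F × L :=
  AlgHom.prodMap (IsScalarTower.toAlgHom k F₀ F) (IsScalarTower.toAlgHom k L₀ L)

theorem prodExt_fst (y : F₀ × L₀) : (prodExt k F₀ L₀ F L y).1 = algebraMap F₀ F y.1 := rfl

theorem prodExt_snd (y : F₀ × L₀) : (prodExt k F₀ L₀ F L y).2 = algebraMap L₀ L y.2 := rfl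

theorem exists_mem_ext_of_mem_adjoin {A B : Type*} [CommRing A] [CommRing B] [Algebra k A]
    [Algebra k B] [Algebra k₀ B] [IsScalarTower k k₀ B] (Φ : A →ₐ[k] B) {Z : Submodule k A}
    (h1 : (1 : A) ∈ Z) {y : B} (hy : y ∈ Algebra.adjoin k₀ (Φ '' Z)) :
    ∃ n, y ∈ ext k₀ Φ (Z ^ n) := by
  have hmono : ∀ {a b}, a ≤ b → ext k₀ Φ (Z ^ a) ≤ ext k₀ Φ (Z ^ b) := fun hab =>
    ext_mono Φ (pow_le_pow_right' (Submodule.one_le.2 h1) hab)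
  induction hy using Algebra.adjoin_induction with
  | mem y hy =>
    obtain ⟨z, hz, rfl⟩ := hy
    exact ⟨1, mem_ext_of_mem (by rwa [pow_one])⟩
  | algebraMap c =>
    refine ⟨0, ?_⟩
    rw [Algebra.algebraMap_eq_smul_one, ← map_one Φ]
    exact Submodule.smul_mem _ _ (mem_ext_of_mem (by
      rw [pow_zero]; exact Submodule.one_le.1 le_rfl))
  | add a b _ _ ha hb =>
    obtain ⟨n, hn⟩ := ha
    obtain ⟨m, hm⟩ := hb
    exact ⟨max n m, add_mem (hmono (le_max_left _ _) hn) (hmono (le_max_right _ _) hm)⟩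
  | mul a b _ _ ha hb =>
    obtain ⟨n, hn⟩ := ha
    obtain ⟨m, hm⟩ := hb
    refine ⟨n + m, ?_⟩
    rw [pow_add, ext_mul]
    exact Submodule.mul_mem_mul hn hm

/-- Forms vanishing on the generic section of the surface vanish on that of the curve. -/
theorem hinj_ext (hx : RatExt k x) (hF : RatExt F₀ fun i => algebraMap k₀ F (x i))
    {Z : Submodule k (F₀ × L₀)} (h1 : (1 : F₀ × L₀) ∈ Z)
    (hinj : ∀ n, ∀ z ∈ Z ^ n, z.1 = 0 → z.2 = 0) {p q : F₀ × L₀} (hp : p ∈ Z) (hq : q ∈ Z) (i : ι)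
    {c : K} (hcK : RatGen k₀ c) (hcF : algebraMap K F c = algebraMap F₀ F p.1 +
      algebraMap k₀ F (x i) * algebraMap F₀ F q.1) (hcL : algebraMap K L c = algebraMap L₀ L p.2 +
      algebraMap k₀ L (x i) * algebraMap L₀ L q.2) (n : ℕ) :
    ∀ z ∈ ext K (prodExt k F₀ L₀ F L) (Z ^ n), z.1 = 0 → z.2 = 0 := by
  set Φ := prodExt k F₀ L₀ F L with hΦ
  set D := Algebra.adjoin k₀ (Φ '' Z) with hD
  have _ : IsScalarTower k₀ K (F × L) := inferInstance
  have hΦD : ∀ n, ∀ y ∈ Z ^ n, Φ y ∈ D := by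
    intro n y hy
    induction hy using Submodule.pow_induction_on_left' with
    | algebraMap r =>
      rw [AlgHom.commutes, IsScalarTower.algebraMap_apply k k₀ (F × L)]
      exact D.algebraMap_mem _
    | add y z i hy hz h1 h2 => rw [map_add]; exact add_mem h1 h2
    | mem_mul m hm i y hy h =>
      rw [map_mul]
      exact mul_mem (Algebra.subset_adjoin ⟨m, hm, rfl⟩) h
  have hcD : algebraMap K (F × L) c ∈ D := by
    have : algebraMap K (F × L) c = Φ p + x i • Φ q := by
      refine Prod.ext ?_ ?_
      · change algebraMap K F c = _ + _ • _
        rw [hcF, Algebra.smul_def]; rfl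
      · change algebraMap K L c = _ + _ • _
        rw [hcL, Algebra.smul_def]; rfl
    rw [this]
    exact add_mem (Algebra.subset_adjoin ⟨p, hp, rfl⟩)
      (D.smul_mem (Algebra.subset_adjoin ⟨q, hq, rfl⟩) _)
  have hPD : ∀ P : Polynomial k₀, ∀ y ∈ D, Polynomial.aeval c P • y ∈ D := by
    intro P y hy
    rw [Algebra.smul_def, ← Polynomial.aeval_algebraMap_apply]
    exact mul_mem (Algebra.adjoin_le (Set.singleton_subset_iff.2 hcD)
      (Polynomial.aeval_mem_adjoin_singleton k₀ _)) hy
  intro z hz hz1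
  obtain ⟨Q, hQ0, hQ⟩ : ∃ Q : Polynomial k₀, Q ≠ 0 ∧ Polynomial.aeval c Q • z ∈ D := by
    clear hz1
    induction hz using Submodule.span_induction with
    | mem z hz =>
      obtain ⟨y, hy, rfl⟩ := hz
      exact ⟨1, one_ne_zero, by rw [map_one, one_smul]; exact hΦD n y hy⟩
    | zero => exact ⟨1, one_ne_zero, by rw [smul_zero]; exact zero_mem _⟩
    | add a b _ _ ha hb =>
      obtain ⟨Q, hQ, ha⟩ := ha
      obtain ⟨R, hR, hb⟩ := hb
      refine ⟨Q * R, mul_ne_zero hQ hR, ?_⟩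
      rw [smul_add, map_mul]
      refine add_mem ?_ ?_
      · rw [mul_comm, mul_smul]; exact hPD _ _ ha
      · rw [mul_smul]; exact hPD _ _ hb
    | smul g a _ ha =>
      obtain ⟨Q, hQ, ha⟩ := ha
      obtain ⟨P, R, hR, hg⟩ := hcK.frac g
      refine ⟨Q * R, mul_ne_zero hQ hR, ?_⟩
      have : Polynomial.aeval c (Q * R) • g • a = Polynomial.aeval c P • Polynomial.aeval c Q • a := by
        rw [smul_smul, smul_smul, ← hg, map_mul]; congr 1; ring
      rw [this]
      exact hPD _ _ ha
  obtain ⟨m, hm⟩ := exists_mem_ext_of_mem_adjoin Φ h1 hQ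
  obtain ⟨q', P, hq', hP, h⟩ := exists_poly_of_mem_ext hx Φ hm
  have h1' := congrArg Prod.fst h
  have h2' := congrArg Prod.snd h
  have e1 : (P.eval₂ (Φ : F₀ × L₀ →+* F × L) fun i => algebraMap k₀ (F × L) (x i)).1 =
      MvPolynomial.aeval (fun i => algebraMap k₀ F (x i)) (P.map (RingHom.fst F₀ L₀)) := by
    have := MvPolynomial.hom_eval₂ P (Φ : F₀ × L₀ →+* F × L) (RingHom.fst F L)
      (fun i => algebraMap k₀ (F × L) (x i))
    rw [MvPolynomial.aeval_def, MvPolynomial.eval₂_map]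
    exact this
  have e2 : (P.eval₂ (Φ : F₀ × L₀ →+* F × L) fun i => algebraMap k₀ (F × L) (x i)).2 =
      MvPolynomial.aeval (fun i => algebraMap k₀ L (x i)) (P.map (RingHom.snd F₀ L₀)) := by
    have := MvPolynomial.hom_eval₂ P (Φ : F₀ × L₀ →+* F × L) (RingHom.snd F L)
      (fun i => algebraMap k₀ (F × L) (x i))
    rw [MvPolynomial.aeval_def, MvPolynomial.eval₂_map]
    exact this
  rw [e1, Prod.smul_fst, Prod.smul_fst, hz1, smul_zero, smul_zero] at h1'
  have hP1 : P.map (RingHom.fst F₀ L₀) = 0 := by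
    by_contra hne
    exact hF.aeval_ne_zero hne h1'.symm
  have hP2 : P.map (RingHom.snd F₀ L₀) = 0 := by
    ext m'
    rw [MvPolynomial.coeff_map]
    refine hinj m _ (hP m') ?_
    have := congrArg (MvPolynomial.coeff m') hP1
    rwa [MvPolynomial.coeff_map] at this
  rw [e2, hP2, map_zero, Prod.smul_snd, Prod.smul_snd] at h2'
  have hq0 : MvPolynomial.aeval x q' ≠ 0 := hx.aeval_ne_zero hq'
  have hQ0' : Polynomial.aeval c Q ≠ 0 := fun h0 => hcK.trans ⟨Q, hQ0, h0⟩
  rcases smul_eq_zero.1 h2' with h0 | h0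
  · exact absurd h0 hq0
  · exact (smul_eq_zero.1 h0).resolve_left hQ0'

end HInj

end

/-! ### The surface and the curve over the field of the generic form -/

section

open Module

section SurfExt

set_option linter.unusedSectionVars false

variable {k k₀ K F₀ F : Type*} [Field k] [IsAlgClosed k] [CharZero k] [Field k₀] [Field K]
  [Field F₀] [Field F] [Algebra k k₀] [Algebra k F₀] [Algebra k F] [Algebra k₀ F] [Algebra F₀ F]
  [IsScalarTower k k₀ F] [IsScalarTower k F₀ F] [Algebra k₀ K] [Algebra K F]
  [IsScalarTower k₀ K F] [Algebra k K] [IsScalarTower k K F]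
  {x : Fin 2 → k₀} {V : Submodule k F₀} [FiniteDimensional k V] {t : Fin 2 → F₀} {z : F₀}

/-- Over the field `K` containing the generic form with index `i`, the other generic form and `1`
generate the high powers of the extended space of linear forms. -/
theorem surf_gen (hx : RatExt k x) (hz : z ∈ V)
    (hgen : ∃ N, ∀ n ≥ N, ∀ y ∈ V ^ (n + 1), ∃ a ∈ V ^ n, ∃ b ∈ V ^ n, ∃ c ∈ V ^ n,
      y = a + t 0 * b + t 1 * c) {i j : Fin 2} (hij : i ≠ j) {c : K}
    (hc : algebraMap K F c = gform F x t z i) :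
    ∃ N, ∀ n ≥ N, ∀ y ∈ (ext K (IsScalarTower.toAlgHom k F₀ F) V) ^ (n + 1),
      ∃ u ∈ (ext K (IsScalarTower.toAlgHom k F₀ F) V) ^ n,
      ∃ w ∈ (ext K (IsScalarTower.toAlgHom k F₀ F) V) ^ n, y = u + gform F x t z j * w := by
  obtain ⟨N, hN⟩ := hgen
  refine ⟨N, fun n hn => ext_gen _ fun y hy => ?_⟩
  have hm : ∀ w ∈ V ^ n, algebraMap F₀ F w ∈ (ext K (IsScalarTower.toAlgHom k F₀ F) V) ^ n := by
    intro w hw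
    rw [← ext_pow]
    exact mem_ext_of_mem (φ := IsScalarTower.toAlgHom k F₀ F) hw
  refine gen_ext hx hz (hN n hn) (((ext K (IsScalarTower.toAlgHom k F₀ F) V) ^ n ⊔
      ((ext K (IsScalarTower.toAlgHom k F₀ F) V) ^ n).map
        (LinearMap.mulLeft K (gform F x t z j))).restrictScalars k₀)
    (fun w hw => Submodule.mem_sup_left (hm w hw)) (fun l w hw => ?_) y hy
  rw [Submodule.restrictScalars_mem]
  by_cases hl : l = i
  · rw [hl, ← hc, ← Algebra.smul_def]
    exact Submodule.smul_mem _ _ (Submodule.mem_sup_left (hm w hw))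
  · have : l = j := by omega
    rw [this]
    exact Submodule.mem_sup_right ⟨_, hm w hw, rfl⟩

theorem surf_trans (hx : RatExt k x) (hF : RatExt F₀ fun i => algebraMap k₀ F (x i))
    (h1 : (1 : F₀) ∈ V) (ht : ∀ i, SatForm V (t i)) (hz : z ∈ V)
    (hgen : ∃ N, ∀ n ≥ N, ∀ y ∈ V ^ (n + 1), ∃ a ∈ V ^ n, ∃ b ∈ V ^ n, ∃ c ∈ V ^ n,
      y = a + t 0 * b + t 1 * c)
    (hgrow : ∀ B m, ∃ n ≥ m, B + finrank k ↥(V ^ n) < finrank k ↥(V ^ (n + 1)))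
    {i j : Fin 2} (hij : i ≠ j) {c : K} (hcK : RatGen k₀ c)
    (hc : algebraMap K F c = gform F x t z i) : Transcendental K (gform F x t z j) := by
  have h1' : (1 : F) ∈ ext K (IsScalarTower.toAlgHom k F₀ F) V := by
    have := mem_ext_of_mem (K := K) (φ := IsScalarTower.toAlgHom k F₀ F) h1
    rwa [map_one] at this
  refine transcendental_of_gen h1' (surf_gen hx hz hgen hij hc) fun B => ?_
  obtain ⟨n₀, hn₀⟩ := (ht i).finrank_ext_pow hx hF h1 hz i hc hcK
  obtain ⟨n, hn, hB⟩ := hgrow B n₀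
  have := hn₀ n hn
  exact ⟨n + 1, by omega⟩

theorem surf_adj (hF : RatExt F₀ fun i => algebraMap k₀ F (x i))
    (hV : IntermediateField.adjoin k (V : Set F₀) = ⊤) :
    IntermediateField.adjoin K (ext K (IsScalarTower.toAlgHom k F₀ F) V : Set F) = ⊤ := by
  rw [eq_top_iff]
  intro y _
  refine subfield_eq_top_of_gen hF hV (IntermediateField.adjoin K
    (ext K (IsScalarTower.toAlgHom k F₀ F) V : Set F)).toSubfield (fun a => ?_) (fun v hv => ?_) y
  · rw [IsScalarTower.algebraMap_apply k₀ K F]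
    exact IntermediateField.algebraMap_mem _ _
  · exact IntermediateField.subset_adjoin K _
      (mem_ext_of_mem (φ := IsScalarTower.toAlgHom k F₀ F) hv)

/-- The projection by the two generic forms has no proper intermediate field. -/
theorem surf_hmin (hx : RatExt k x) (hF : RatExt F₀ fun i => algebraMap k₀ F (x i))
    (ht : AlgebraicIndependent k t)
    (halg : Algebra.IsAlgebraic (IntermediateField.adjoin k (Set.range t)) F₀)
    (hz : IntermediateField.adjoin k (insert z (Set.range t)) = ⊤)
    {KT : Type*} [Field KT] [Algebra KT F] [Algebra.IsAlgebraic KT F]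
    (hkK : ∀ a : k₀, algebraMap k₀ F a ∈ (algebraMap KT F).range)
    (htK : ∀ i, gform F x t z i ∈ (algebraMap KT F).range) (E : IntermediateField KT F) :
    E = ⊥ ∨ E = ⊤ := by
  refine monodromy hx hF ht ?_ hz hkK htK ?_ E
  · open IntermediateField.algebraAdjoinAdjoin in
    exact (IsFractionRing.isAlgebraic_iff (Algebra.adjoin k (Set.range t))
      (IntermediateField.adjoin k (Set.range t)) F₀).2 (halg.isAlgebraic z)
  · rw [eq_top_iff]
    intro y _
    set S := (IntermediateField.adjoin KT {algebraMap F₀ F z}).toSubfield with hS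
    have hr : ∀ y ∈ (algebraMap KT F).range, y ∈ S := by
      rintro _ ⟨a, rfl⟩
      exact IntermediateField.algebraMap_mem _ _
    have hzS : algebraMap F₀ F z ∈ S := IntermediateField.mem_adjoin_simple_self KT _
    refine subfield_eq_top_of_gen hF hz S (fun a => hr _ (hkK a)) ?_ y
    rintro v (rfl | ⟨i, rfl⟩)
    · exact hzS
    · have : algebraMap F₀ F (t i) = gform F x t z i - algebraMap k₀ F (x i) * algebraMap F₀ F z := by
        simp only [gform]; ring
      rw [this]
      exact sub_mem (hr _ (htK i)) (mul_mem (hr _ (hkK _)) hzS)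

end SurfExt

section Assembly

variable {k F₀ L₀ : Type*} [Field k] [Field F₀] [Field L₀] [Algebra k F₀] [Algebra k L₀]

/-- A space `Z` of linear forms, seen as functions on a surface (with function field `F₀`) and on a
curve contained in it (with function field `L₀`), with general linear forms `p 0, p 1`. -/
structure GeomBase (Z : Submodule k (F₀ × L₀)) (p : Fin 2 → F₀ × L₀) (r : ℕ)
    (d s π pa g : ℤ) : Prop where
  fd : FiniteDimensional k Z
  one : (1 : F₀ × L₀) ∈ Z
  p_mem : ∀ i, p i ∈ Z
  inj : ∀ n, ∀ z ∈ Z ^ n, z.1 = 0 → z.2 = 0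
  satF : ∀ i, SatForm (Z.map (AlgHom.fst k F₀ L₀).toLinearMap) (p i).1
  satL : ∀ i, SatForm (Z.map (AlgHom.snd k F₀ L₀).toLinearMap) (p i).2
  satB : ∃ n₁, ∀ n ≥ n₁, ∀ w ∈ (Z.map (AlgHom.fst k F₀ L₀).toLinearMap) ^ (n + 1),
      (p 1).1 * w ∈ (Z.map (AlgHom.fst k F₀ L₀).toLinearMap) ^ (n + 1) ⊔
        ((Z.map (AlgHom.fst k F₀ L₀).toLinearMap) ^ (n + 1)).map (LinearMap.mulLeft k (p 0).1) →
      w ∈ (Z.map (AlgHom.fst k F₀ L₀).toLinearMap) ^ n ⊔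
        ((Z.map (AlgHom.fst k F₀ L₀).toLinearMap) ^ n).map (LinearMap.mulLeft k (p 0).1)
  dimF : ∃ n₀ : ℕ, ∀ n : ℕ, n₀ ≤ n →
    (finrank k ↥((Z.map (AlgHom.fst k F₀ L₀).toLinearMap) ^ n) : ℤ) =
      s * (n * (n + 1) / 2) + (1 - π) * n + 1 + pa
  dimL : ∃ n₀ : ℕ, ∀ n : ℕ, n₀ ≤ n →
    (finrank k ↥((Z.map (AlgHom.snd k F₀ L₀).toLinearMap) ^ n) : ℤ) = d * n + 1 - g
  dim1 : finrank k (Z.map (AlgHom.snd k F₀ L₀).toLinearMap) = r + 1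
  adj : IntermediateField.adjoin k ((Z.map (AlgHom.fst k F₀ L₀).toLinearMap : Submodule k F₀) : Set F₀) = ⊤

/-- The data of `GeomBase` with a further linear form `q` which, together with `p 0, p 1`, generates
the function field of the surface. -/
structure GeomData (Z : Submodule k (F₀ × L₀)) (p : Fin 2 → F₀ × L₀) (q : F₀ × L₀) (r : ℕ)
    (d s π pa g : ℤ) : Prop extends GeomBase Z p r d s π pa g where
  q_mem : q ∈ Z
  adjq : IntermediateField.adjoin k (insert q.1 (Set.range fun i => (p i).1)) = ⊤

theorem tri_succ (n : ℕ) : ((n + 1 : ℕ) : ℤ) * (((n + 1 : ℕ) : ℤ) + 1) / 2 = (n : ℤ) * (n + 1) / 2 + (n + 1) := by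
  push_cast
  have : ((n : ℤ) + 1) * (n + 1 + 1) = n * (n + 1) + (n + 1) * 2 := by ring
  rw [this, Int.add_mul_ediv_right _ _ (by norm_num)]

theorem GeomBase.oneF {Z : Submodule k (F₀ × L₀)} {p : Fin 2 → F₀ × L₀} {r : ℕ}
    {d s π pa g : ℤ} (h : GeomBase Z p r d s π pa g) :
    (1 : F₀) ∈ Z.map (AlgHom.fst k F₀ L₀).toLinearMap :=
  ⟨1, h.one, rfl⟩

theorem GeomBase.oneL {Z : Submodule k (F₀ × L₀)} {p : Fin 2 → F₀ × L₀} {r : ℕ}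
    {d s π pa g : ℤ} (h : GeomBase Z p r d s π pa g) :
    (1 : L₀) ∈ Z.map (AlgHom.snd k F₀ L₀).toLinearMap :=
  ⟨1, h.one, rfl⟩

theorem GeomBase.hgrow {Z : Submodule k (F₀ × L₀)} {p : Fin 2 → F₀ × L₀} {r : ℕ}
    {d s π pa g : ℤ} (h : GeomBase Z p r d s π pa g) (hs : 0 < s) (B m : ℕ) :
    ∃ n ≥ m, B + finrank k ↥((Z.map (AlgHom.fst k F₀ L₀).toLinearMap) ^ n) <
      finrank k ↥((Z.map (AlgHom.fst k F₀ L₀).toLinearMap) ^ (n + 1)) := by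
  obtain ⟨n₀, hn₀⟩ := h.dimF
  refine ⟨n₀ + m + B + π.toNat, by omega, ?_⟩
  have h0 := hn₀ (n₀ + m + B + π.toNat) (by omega)
  have h1 := hn₀ (n₀ + m + B + π.toNat + 1) (by omega)
  rw [tri_succ] at h1
  have := Int.self_le_toNat π
  push_cast at h0 h1
  zify
  rw [h0, h1]
  nlinarith

theorem GeomBase.hgen {Z : Submodule k (F₀ × L₀)} {p : Fin 2 → F₀ × L₀} {r : ℕ}
    {d s π pa g : ℤ} (h : GeomBase Z p r d s π pa g) :
    ∃ N, ∀ n ≥ N, ∀ y ∈ (Z.map (AlgHom.fst k F₀ L₀).toLinearMap) ^ (n + 1),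
      ∃ a ∈ (Z.map (AlgHom.fst k F₀ L₀).toLinearMap) ^ n,
      ∃ b ∈ (Z.map (AlgHom.fst k F₀ L₀).toLinearMap) ^ n,
      ∃ c ∈ (Z.map (AlgHom.fst k F₀ L₀).toLinearMap) ^ n,
      y = a + (p 0).1 * b + (p 1).1 * c := by
  have _ := h.fd
  refine gen_of_dims (t := fun i => (p i).1) h.oneF (h.satF 0) (h.satF 1) h.satB ?_
  obtain ⟨n₀, hn₀⟩ := h.dimF
  refine ⟨n₀, fun n hn => ?_⟩
  have h0 := hn₀ n hn
  have h1 := hn₀ (n + 1) (by omega)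
  have h2 := hn₀ (n + 1 + 1) (by omega)
  have h3 := hn₀ (n + 1 + 1 + 1) (by omega)
  rw [tri_succ] at h1 h2 h3
  rw [tri_succ] at h2 h3
  rw [tri_succ] at h3
  push_cast at h0 h1 h2 h3
  zify
  change (finrank k ↥((Z.map (AlgHom.fst k F₀ L₀).toLinearMap) ^ (n + 1 + 1 + 1)) : ℤ) +
    3 * (finrank k ↥((Z.map (AlgHom.fst k F₀ L₀).toLinearMap) ^ (n + 1)) : ℤ) =
    3 * (finrank k ↥((Z.map (AlgHom.fst k F₀ L₀).toLinearMap) ^ (n + 1 + 1)) : ℤ) + _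
  rw [h0, h1, h2, h3]
  ring

end Assembly

end

/-! ### The bound for the generic section -/

section

open Module

section Assembly

set_option linter.unusedSectionVars false

variable {k F₀ L₀ : Type*} [Field k] [Field F₀] [Field L₀] [Algebra k F₀] [Algebra k L₀]

variable [IsAlgClosed k] [CharZero k]
  {k₀ F L : Type*} [Field k₀] [Field F] [Field L] [Algebra k k₀] [Algebra k F] [Algebra k L]
  [Algebra k₀ F] [Algebra k₀ L] [Algebra F₀ F] [Algebra L₀ L] [IsScalarTower k k₀ F]
  [IsScalarTower k k₀ L] [IsScalarTower k F₀ F] [IsScalarTower k L₀ L] {x : Fin 2 → k₀}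

section OverK

variable {K : Type*} [Field K] [Algebra k₀ K] [Algebra K F] [Algebra K L] [Algebra k K]
  [IsScalarTower k₀ K F] [IsScalarTower k₀ K L] [IsScalarTower k K F] [IsScalarTower k K L]

/-- The lower bound for the section by the generic form `p i + x i * q`, as a dimension over the
field `K = k₀(p i + x i * q)` embedded in both function fields. -/
theorem GeomData.bound_over {Z : Submodule k (F₀ × L₀)} {p : Fin 2 → F₀ × L₀} {q : F₀ × L₀} {r : ℕ}
    {d s π pa g : ℤ} (h : GeomData Z p q r d s π pa g) (hx : RatExt k x)
    (hFx : RatExt F₀ fun i => algebraMap k₀ F (x i)) (hLx : RatExt L₀ fun i => algebraMap k₀ L (x i))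
    (hr : 4 ≤ r) (hs1 : (r : ℤ) - 1 ≤ s) (hs2 : s ≤ 2 * r - 4) (hd : s * (s - 1) ≤ d)
    {i j : Fin 2} (hij : i ≠ j) {c : K} (hcK : RatGen k₀ c)
    (hcF : algebraMap K F c = gform F x (fun i => (p i).1) q.1 i)
    (hcL : algebraMap K L c = gform L x (fun i => (p i).2) q.2 i)
    (hcl : AlgClosedIn K F) (n : ℕ) (hn : 1 ≤ n) :
    hF r d s π n ≤ finrank K ↥((ext K (IsScalarTower.toAlgHom k L₀ L)
      (Z.map (AlgHom.snd k F₀ L₀).toLinearMap)) ^ n) := by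
  have _ := h.fd
  have hs : 0 < s := by have : (4 : ℤ) ≤ r := by exact_mod_cast hr
                        linarith
  have hgen := h.hgen
  have hgrow := h.hgrow hs
  set V := Z.map (AlgHom.fst k F₀ L₀).toLinearMap with hV
  set W := Z.map (AlgHom.snd k F₀ L₀).toLinearMap with hW
  set t : Fin 2 → F₀ := fun i => (p i).1 with ht
  have h1V : (1 : F₀) ∈ V := h.oneF
  have h1W : (1 : L₀) ∈ W := h.oneL
  have hqV : q.1 ∈ V := ⟨q, h.q_mem, rfl⟩
  have hqW : q.2 ∈ W := ⟨q, h.q_mem, rfl⟩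
  have hind := base_indep (t := t) h1V (fun i => (h.satF i).mem) (h.satF 0) hgen hgrow h.adj
  have htr : Transcendental K (gform F x t q.1 j) :=
    surf_trans hx hFx h1V h.satF hqV hgen hgrow hij hcK hcF
  let KT := IntermediateField.adjoin K {gform F x t q.1 j}
  let θ : KT := IntermediateField.AdjoinSimple.gen K (gform F x t q.1 j)
  have hθ : algebraMap KT F θ = gform F x t q.1 j := rfl
  have hRG : RatGen K θ := ratGen_gen htr
  have h1V' : (1 : F) ∈ ext K (IsScalarTower.toAlgHom k F₀ F) V := by
    have := mem_ext_of_mem (K := K) (φ := IsScalarTower.toAlgHom k F₀ F) h1V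
    rwa [map_one] at this
  have hm : ∀ v ∈ V, algebraMap F₀ F v ∈ ext K (IsScalarTower.toAlgHom k F₀ F) V := fun v hv =>
    mem_ext_of_mem (K := K) (φ := IsScalarTower.toAlgHom k F₀ F) hv
  have hθV : algebraMap KT F θ ∈ ext K (IsScalarTower.toAlgHom k F₀ F) V := by
    rw [hθ]
    refine add_mem (hm _ (h.satF j).mem) ?_
    rw [IsScalarTower.algebraMap_apply k₀ K F, ← Algebra.smul_def]
    exact Submodule.smul_mem _ _ (hm _ hqV)
  obtain ⟨hPG, hfin⟩ := powGen_of_gen (t := θ) h1V' hθV (by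
    obtain ⟨N, hN⟩ := surf_gen (K := K) hx hqV hgen hij hcF
    refine ⟨N, fun n hn y hy => ?_⟩
    obtain ⟨u, hu, w, hw, e⟩ := hN n hn y hy
    exact ⟨u, hu, w, hw, by rw [e, Algebra.smul_def, hθ]⟩) (surf_adj hFx h.adj)
  have _ : Algebra.IsAlgebraic KT F := Algebra.IsAlgebraic.of_finite KT F
  have hKr : ∀ a : K, algebraMap K F a ∈ (algebraMap KT F).range := fun a =>
    ⟨algebraMap K KT a, rfl⟩
  have hmin := surf_hmin (KT := KT) hx hFx hind.1 hind.2 h.adjq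
    (fun a => by rw [IsScalarTower.algebraMap_apply k₀ K F]; exact hKr _) (fun l => by
      by_cases hl : l = i
      · rw [hl, ← hcF]; exact hKr _
      · have : l = j := by omega
        rw [this]; exact ⟨θ, hθ⟩)
  set Z' := ext K (prodExt k F₀ L₀ F L) Z with hZ'
  have hfst : Z'.map (AlgHom.fst K F L).toLinearMap = ext K (IsScalarTower.toAlgHom k F₀ F) V :=
    ext_map (prodExt k F₀ L₀ F L) (IsScalarTower.toAlgHom k F₀ F) (AlgHom.fst k F₀ L₀)
      (AlgHom.fst K F L) (fun _ => rfl) Z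
  have hsnd : Z'.map (AlgHom.snd K F L).toLinearMap = ext K (IsScalarTower.toAlgHom k L₀ L) W :=
    ext_map (prodExt k F₀ L₀ F L) (IsScalarTower.toAlgHom k L₀ L) (AlgHom.snd k F₀ L₀)
      (AlgHom.snd K F L) (fun _ => rfl) Z
  have hcl' : ∀ H : Subalgebra K F, FiniteDimensional K H → H = ⊥ := by
    intro H hH
    rw [eq_bot_iff]
    intro a ha
    have : IsAlgebraic K (⟨a, ha⟩ : H) := (Algebra.IsIntegral.isIntegral _).isAlgebraic
    obtain ⟨b, hb⟩ := hcl a (this.algHom H.val)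
    exact hb ▸ Subalgebra.algebraMap_mem _ _
  have _ : Infinite K := Infinite.of_injective _ (algebraMap k K).injective
  rw [← hsnd]
  refine section_bound hcl' hmin hRG Z' ?_ (by rw [hfst]; exact hPG) ?_ (by exact_mod_cast hr)
    hs1 hs2 hd ?_ ?_ ?_ n hn
  · have := mem_ext_of_mem (K := K) (φ := prodExt k F₀ L₀ F L) h.one
    rwa [map_one] at this
  · intro n
    rw [hZ', ← ext_pow]
    exact hinj_ext hx hFx h.one h.inj (h.p_mem i) h.q_mem i hcK hcF hcL n
  · rw [hfst]
    obtain ⟨n₀, hn₀⟩ := (h.satF i).finrank_ext_pow hx hFx h1V hqV i hcF hcK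
    obtain ⟨n₁, hn₁⟩ := h.dimF
    refine ⟨n₀ + n₁ + 1, ?_⟩
    rintro (_ | n) hn
    · omega
    · have e0 := hn₀ n (by omega)
      have e1 := hn₁ n (by omega)
      have e2 := hn₁ (n + 1) (by omega)
      rw [tri_succ] at e2
      zify at e0
      push_cast at e1 e2 ⊢
      rw [e1, e2] at e0
      linarith
  · rw [hsnd]
    obtain ⟨n₀, hn₀⟩ := (h.satL i).finrank_ext_pow hx hLx h1W hqW i hcL hcK
    obtain ⟨n₁, hn₁⟩ := h.dimL
    refine ⟨n₀ + n₁ + 1, ?_⟩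
    rintro (_ | n) hn
    · omega
    · have e0 := hn₀ n (by omega)
      have e1 := hn₁ n (by omega)
      have e2 := hn₁ (n + 1) (by omega)
      zify at e0
      push_cast at e1 e2 ⊢
      rw [e1, e2] at e0
      linarith
  · rw [hsnd]
    have e0 := (h.satL i).finrank_ext_one hx hLx h1W hqW i hcL hcK
    rw [h.dim1] at e0
    exact_mod_cast (by omega : r ≤ _)

/-- A maximal independent family of forms, chosen over `k`, which is independent over the
polynomials in the generic form. -/
theorem exists_indep_forms {W : Submodule k L₀} [FiniteDimensional k W] {c : K} (hcK : RatGen k₀ c) {y : L}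
    (hcL : algebraMap K L c = y) (n : ℕ) :
    ∃ w : Fin (finrank K ↥((ext K (IsScalarTower.toAlgHom k L₀ L) W) ^ n)) → L₀,
      (∀ j, w j ∈ W ^ n) ∧ ∀ P : Fin (finrank K ↥((ext K (IsScalarTower.toAlgHom k L₀ L) W) ^ n)) →
        Polynomial k₀, ∑ j, Polynomial.aeval y (P j) * algebraMap L₀ L (w j) = 0 → P = 0 := by
  rw [← ext_pow]
  have hfd : FiniteDimensional K (ext K (IsScalarTower.toAlgHom k L₀ L) (W ^ n)) := inferInstance
  rw [ext] at hfd ⊢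
  obtain ⟨f, hf, -, hli⟩ := Submodule.exists_fun_fin_finrank_span_eq K
    (IsScalarTower.toAlgHom k L₀ L '' (W ^ n : Submodule k L₀))
  choose w hw hwf using hf
  refine ⟨w, hw, fun P hP => ?_⟩
  rw [Fintype.linearIndependent_iff] at hli
  have h0 := hli (fun j => Polynomial.aeval c (P j)) (by
    rw [← hP]
    refine Finset.sum_congr rfl fun j _ => ?_
    rw [Algebra.smul_def, ← Polynomial.aeval_algebraMap_apply, hcL, ← hwf j]
    rfl)
  funext j
  exact hcK.aeval_inj (by rw [h0 j, Pi.zero_apply, map_zero])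

end OverK

/-- The lower bound for the section by a generic linear form `p i + x i * q`; for one of the two
choices of `i`, the function field of the surface is a regular extension of the field `k₀(p i + x i * q)`. -/
theorem generic_bound {Z : Submodule k (F₀ × L₀)} {p : Fin 2 → F₀ × L₀} {q : F₀ × L₀} {r : ℕ}
    {d s π pa g : ℤ} (h : GeomData Z p q r d s π pa g) (hx : RatExt k x)
    (hFx : RatExt F₀ fun i => algebraMap k₀ F (x i)) (hLx : RatExt L₀ fun i => algebraMap k₀ L (x i))
    (hr : 4 ≤ r) (hs1 : (r : ℤ) - 1 ≤ s) (hs2 : s ≤ 2 * r - 4) (hd : s * (s - 1) ≤ d) :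
    ∃ i : Fin 2, Transcendental k₀ (gform L x (fun i => (p i).2) q.2 i) ∧
      ∀ n : ℕ, 1 ≤ n → ∃ (N : ℕ) (w : Fin N → L₀), hF r d s π n ≤ N ∧
        (∀ j, w j ∈ (Z.map (AlgHom.snd k F₀ L₀).toLinearMap) ^ n) ∧
        ∀ P : Fin N → Polynomial k₀, ∑ j, Polynomial.aeval (gform L x (fun i => (p i).2) q.2 i) (P j) *
          algebraMap L₀ L (w j) = 0 → P = 0 := by
  have _ := h.fd
  have hs : 0 < s := by have : (4 : ℤ) ≤ r := by exact_mod_cast hr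
                        linarith
  have hgen := h.hgen
  have hgrow := h.hgrow hs
  have h1V := h.oneF
  have h1W := h.oneL
  have hqV : q.1 ∈ Z.map (AlgHom.fst k F₀ L₀).toLinearMap := ⟨q, h.q_mem, rfl⟩
  have hqW : q.2 ∈ Z.map (AlgHom.snd k F₀ L₀).toLinearMap := ⟨q, h.q_mem, rfl⟩
  set t : Fin 2 → F₀ := fun i => (p i).1 with ht
  have hind := base_indep (t := t) h1V (fun i => (h.satF i).mem) (h.satF 0) hgen hgrow h.adj
  have htrF : ∀ i, Transcendental k₀ (gform F x t q.1 i) := fun i =>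
    (h.satF i).transcendental_gform hx hFx h1V hqV i
  have htrL : ∀ i, Transcendental k₀ (gform L x (fun i => (p i).2) q.2 i) := fun i =>
    (h.satL i).transcendental_gform hx hLx h1W hqW i
  suffices hex : ∃ i, AlgClosedIn (IntermediateField.adjoin k₀ {gform F x t q.1 i}) F by
    obtain ⟨i, hcl⟩ := hex
    obtain ⟨j, hij⟩ : ∃ j : Fin 2, i ≠ j := ⟨1 - i, by fin_cases i <;> simp⟩
    refine ⟨i, htrL i, fun n hn => ?_⟩
    let K := IntermediateField.adjoin k₀ {gform F x t q.1 i}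
    let c : K := IntermediateField.AdjoinSimple.gen k₀ (gform F x t q.1 i)
    have hcK : RatGen k₀ c := ratGen_gen (htrF i)
    obtain ⟨φ, hφ⟩ := (ratExt_simple (u := c) hcK.trans
      (adjoin_gen_eq_top k₀ _)).exists_lift
        (y := fun _ : Unit => gform L x (fun i => (p i).2) q.2 i)
        (algebraicIndependent_unique_type_iff.2 (htrL i))
    let _ : Algebra K L := φ.toRingHom.toAlgebra
    have _ : IsScalarTower k K F := IsScalarTower.of_algebraMap_eq fun a => by
      rw [IsScalarTower.algebraMap_apply k k₀ K, ← IsScalarTower.algebraMap_apply k₀ K F,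
        IsScalarTower.algebraMap_apply k k₀ F]
    have _ : IsScalarTower k₀ K L := IsScalarTower.of_algHom φ
    have _ : IsScalarTower k K L := IsScalarTower.of_algebraMap_eq fun a => by
      rw [IsScalarTower.algebraMap_apply k k₀ L, IsScalarTower.algebraMap_apply k₀ K L,
        ← IsScalarTower.algebraMap_apply k k₀ K]
    have hcL : algebraMap K L c = gform L x (fun i => (p i).2) q.2 i := hφ ()
    obtain ⟨w, hw, hP⟩ := exists_indep_forms
      (W := Z.map (AlgHom.snd k F₀ L₀).toLinearMap) hcK hcL n
    exact ⟨_, w, h.bound_over (K := K) hx hFx hLx hr hs1 hs2 hd hij hcK rfl hcL hcl n hn, hw, hP⟩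
  have hcl₀ : AlgClosedIn k₀ F := AlgClosedIn.ratExt hx hFx (algClosedIn_of_isAlgClosed k F₀)
  let K := IntermediateField.adjoin k₀ {gform F x t q.1 0}
  let c : K := IntermediateField.AdjoinSimple.gen k₀ (gform F x t q.1 0)
  have hcK : RatGen k₀ c := ratGen_gen (htrF 0)
  have _ : IsScalarTower k K F := IsScalarTower.of_algebraMap_eq fun a => by
      rw [IsScalarTower.algebraMap_apply k k₀ K, ← IsScalarTower.algebraMap_apply k₀ K F,
        IsScalarTower.algebraMap_apply k k₀ F]
  have h01 : (0 : Fin 2) ≠ 1 := by simp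
  have huv : Transcendental K (gform F x t q.1 1) :=
    surf_trans (c := c) hx hFx h1V h.satF hqV hgen hgrow h01 hcK rfl
  let E := IntermediateField.adjoin k₀ {gform F x t q.1 0, gform F x t q.1 1}
  have hE : ∀ y ∈ E, y ∈ (algebraMap E F).range := fun y hy => ⟨⟨y, hy⟩, rfl⟩
  have hmem : ∀ i, gform F x t q.1 i ∈ E := fun i =>
    IntermediateField.subset_adjoin _ _ (by fin_cases i <;> simp)
  have halg : Algebra.IsAlgebraic E F := by
    let KT := IntermediateField.adjoin K {gform F x t q.1 1}
    have h1V' : (1 : F) ∈ ext K (IsScalarTower.toAlgHom k F₀ F)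
        (Z.map (AlgHom.fst k F₀ L₀).toLinearMap) := by
      have := mem_ext_of_mem (K := K) (φ := IsScalarTower.toAlgHom k F₀ F) h1V
      rwa [map_one] at this
    have hm : ∀ v ∈ Z.map (AlgHom.fst k F₀ L₀).toLinearMap, algebraMap F₀ F v ∈
        ext K (IsScalarTower.toAlgHom k F₀ F) (Z.map (AlgHom.fst k F₀ L₀).toLinearMap) :=
      fun v hv => mem_ext_of_mem (K := K) (φ := IsScalarTower.toAlgHom k F₀ F) hv
    obtain ⟨-, hfin⟩ := powGen_of_gen (KT := KT)
      (t := IntermediateField.AdjoinSimple.gen K (gform F x t q.1 1)) h1V' (by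
        change gform F x t q.1 1 ∈ _
        refine add_mem (hm _ (h.satF 1).mem) ?_
        rw [IsScalarTower.algebraMap_apply k₀ K F, ← Algebra.smul_def]
        exact Submodule.smul_mem _ _ (hm _ hqV)) (by
        obtain ⟨N, hN⟩ := surf_gen (K := K) (F := F) (t := t) (c := c) hx hqV hgen h01 rfl
        refine ⟨N, fun n hn y hy => ?_⟩
        obtain ⟨u, hu, w, hw, e⟩ := hN n hn y hy
        exact ⟨u, hu, w, hw, by rw [e, Algebra.smul_def]; rfl⟩) (surf_adj hFx h.adj)
    have _ : Algebra.IsAlgebraic KT F := Algebra.IsAlgebraic.of_finite KT F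
    refine isAlgebraic_of_range_le (A := KT) ?_
    rintro _ ⟨⟨y, hy⟩, rfl⟩
    refine hE y ?_
    have hKE : K ≤ E := IntermediateField.adjoin.mono _ _ _ (by simp)
    have : KT ≤ IntermediateField.extendScalars hKE :=
      IntermediateField.adjoin_le_iff.2 (by rintro _ rfl; exact hmem 1)
    exact this hy
  rcases algClosedIn_dichotomy (htrF 0) (htrF 1) huv hcl₀
    (surf_hmin (KT := E) hx hFx hind.1 hind.2 h.adjq
      (fun a => hE _ (IntermediateField.algebraMap_mem _ a)) fun i => hE _ (hmem i)) with h | h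
  · exact ⟨0, h⟩
  · exact ⟨1, h⟩

end Assembly

end

/-! ### Saturated ideals and regular forms -/

section

open Module MvPolynomial

section Saturation

variable {n : ℕ}

/-- The space of homogeneous forms of degree `m`. -/
abbrev forms (n m : ℕ) : Submodule ℂ (MPoly n) := homogeneousSubmodule (Fin n) ℂ m

theorem mul_mem_forms {a b : ℕ} {f g : MPoly n} (hf : f ∈ forms n a) (hg : g ∈ forms n b) :
    f * g ∈ forms n (a + b) := IsHomogeneous.mul hf hg

/-- A monomial of large degree is divisible by a high power of some variable. -/
theorem mul_mem_of_pow_mul_mem {J : Ideal (MPoly n)} {f : MPoly n} {k : ℕ}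
    (hf : ∀ j, X j ^ k * f ∈ J) {m : ℕ} (hm : n * k < m) {a : MPoly n} (ha : a ∈ forms n m) :
    a * f ∈ J := by
  rw [a.as_sum, Finset.sum_mul]
  refine J.sum_mem fun e he => ?_
  have hdeg : ∑ j, e j = m := by
    have := (ha : a.IsHomogeneous m).degree_eq_sum_deg_support he
    rw [this]
    exact (Finset.sum_subset (Finset.subset_univ _) (by simp)).symm
  obtain ⟨j, hj⟩ : ∃ j, k ≤ e j := by
    by_contra! h
    have : ∑ j, e j ≤ ∑ _j : Fin n, k := Finset.sum_le_sum fun j _ => (h j).le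
    simp at this
    omega
  have : (monomial e) (coeff e a) = monomial (e - Finsupp.single j k) (coeff e a) * X j ^ k := by
    rw [X_pow_eq_monomial, monomial_mul, mul_one, tsub_add_cancel_of_le]
    simpa using hj
  rw [this, mul_assoc]
  exact J.mul_mem_left _ (hf j)

theorem exists_forms_mul_mem {J : Ideal (MPoly n)} {f : MPoly n} (hf : f ∈ satIdeal J) :
    ∃ m₀, ∀ m ≥ m₀, ∀ a ∈ forms n m, a * f ∈ J := by
  obtain ⟨k, hk⟩ := hf
  exact ⟨n * k + 1, fun m hm a ha => mul_mem_of_pow_mul_mem hk (by omega) ha⟩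

theorem le_satIdeal (J : Ideal (MPoly n)) : J ≤ satIdeal J := fun f hf =>
  ⟨0, fun j => by simpa using hf⟩

theorem mem_satIdeal_of_X_mul {J : Ideal (MPoly n)} {f : MPoly n}
    (h : ∀ j, X j * f ∈ satIdeal J) : f ∈ satIdeal J := by
  choose k hk using h
  refine ⟨∑ j, k j + 1, fun j => ?_⟩
  have hle : k j ≤ ∑ j, k j := Finset.single_le_sum (fun _ _ => Nat.zero_le _) (Finset.mem_univ j)
  have : X (R := ℂ) j ^ (∑ j, k j + 1) * f =
      X j ^ (∑ j, k j - k j) * (X j ^ k j * (X j * f)) := by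
    rw [← mul_assoc, ← mul_assoc, ← pow_add, ← pow_succ]
    congr 3
    omega
  rw [this]
  exact J.mul_mem_left _ (hk j j)

/-- Homogeneous components of a product of a form with a polynomial. -/
theorem homogeneousComponent_mul_form {a m : ℕ} {f g : MPoly n} (hf : f ∈ forms n a) :
    homogeneousComponent (a + m) (f * g) = f * homogeneousComponent m g := by
  conv_lhs => rw [← sum_homogeneousComponent g, Finset.mul_sum, map_sum]
  have h : ∀ i, homogeneousComponent (a + m) (f * homogeneousComponent i g) =
      if m = i then f * homogeneousComponent m g else 0 := by
    intro i
    rw [homogeneousComponent_of_mem (mul_mem_forms hf (homogeneousComponent_mem i g))]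
    by_cases hi : m = i
    · simp [hi]
    · rw [if_neg hi, if_neg (by omega)]
  simp only [h]
  rw [Finset.sum_ite_eq]
  split_ifs with hm
  · rfl
  · rw [homogeneousComponent_eq_zero m g (by simp at hm; omega), mul_zero]

theorem IsHomogIdeal.sat {J : Ideal (MPoly n)} (hJ : IsHomogIdeal J) :
    IsHomogIdeal (satIdeal J) := by
  rintro f ⟨k, hk⟩ m
  refine ⟨k, fun j => ?_⟩
  have := hJ _ (hk j) (k + m)
  rwa [homogeneousComponent_mul_form (isHomogeneous_X_pow j k)] at this

/-- A homogeneous ideal agrees with its saturation in large degrees. -/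
theorem IsHomogIdeal.exists_mem_of_mem_satIdeal {J : Ideal (MPoly n)} (hJ : IsHomogIdeal J) :
    ∃ m₀, ∀ m ≥ m₀, ∀ f ∈ forms n m, f ∈ satIdeal J → f ∈ J := by
  obtain ⟨S, hS⟩ := (IsNoetherian.noetherian (satIdeal J) : (satIdeal J).FG)
  have hSat : ∀ s ∈ S, s ∈ satIdeal J := fun s hs => hS ▸ Submodule.subset_span hs
  have hex : ∀ g : MPoly n, ∃ m₀, g ∈ satIdeal J → ∀ m ≥ m₀, ∀ a ∈ forms n m, a * g ∈ J := by
    intro g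
    by_cases hg : g ∈ satIdeal J
    · obtain ⟨m₀, h⟩ := exists_forms_mul_mem hg
      exact ⟨m₀, fun _ => h⟩
    · exact ⟨0, fun h => absurd h hg⟩
  choose κ hκ using hex
  let D := S.sup totalDegree
  let κ' : MPoly n → ℕ := fun s => (Finset.range (D + 1)).sup fun c => κ (homogeneousComponent c s)
  refine ⟨D + S.sup κ', fun m hm f hf hfs => ?_⟩
  rw [← hS, Submodule.mem_span_finset] at hfs
  obtain ⟨a, -, rfl⟩ := hfs
  rw [← homogeneousComponent_eq_self hf, map_sum]
  refine J.sum_mem fun s hs => ?_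
  rw [smul_eq_mul]
  generalize a s = b
  rw [← sum_homogeneousComponent s, Finset.mul_sum, map_sum]
  refine J.sum_mem fun c hc => ?_
  have hcD : c ≤ D := by
    have : s.totalDegree ≤ D := Finset.le_sup (f := totalDegree) hs
    simp at hc; omega
  have hκm : κ (homogeneousComponent c s) ≤ S.sup κ' :=
    (Finset.le_sup (f := fun c => κ (homogeneousComponent c s))
      (Finset.mem_range.2 (by omega : c < D + 1))).trans (Finset.le_sup (f := κ') hs)
  have e := homogeneousComponent_mul_form (g := b) (m := m - c) (homogeneousComponent_mem c s)
  rw [show c + (m - c) = m by omega] at e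
  rw [mul_comm, e, mul_comm]
  exact hκ _ (hJ.sat _ (hSat s hs) c) _ (by omega) _ (homogeneousComponent_mem _ _)

/-- Linear forms outside finitely many proper subspaces are regular modulo a saturated ideal. -/
theorem exists_finite_regular (J : Ideal (MPoly n)) : ∃ T : Set (Submodule ℂ (MPoly n)),
    T.Finite ∧ (∀ U ∈ T, ¬ forms n 1 ≤ U) ∧
      ∀ y, (∀ U ∈ T, y ∉ U) → ∀ f, y * f ∈ satIdeal J → f ∈ satIdeal J := by
  refine ⟨(fun p : Ideal (MPoly n) => p.restrictScalars ℂ) ''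
    associatedPrimes (MPoly n) (MPoly n ⧸ satIdeal J), (associatedPrimes.finite _ _).image _, ?_, ?_⟩
  · rintro _ ⟨p, hp, rfl⟩ hle
    obtain ⟨hprime, x, hx⟩ := isAssociatedPrime_iff.1 hp
    obtain ⟨f, rfl⟩ := Ideal.Quotient.mk_surjective x
    have hmem : ∀ g, g ∈ p ↔ g * f ∈ satIdeal J := by
      intro g
      rw [hx, Submodule.mem_colon_singleton, Submodule.mem_bot, ← Ideal.Quotient.eq_zero_iff_mem,
        map_mul]
      rfl
    apply hprime.ne_top
    rw [Ideal.eq_top_iff_one, hmem, one_mul]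
    exact mem_satIdeal_of_X_mul fun j => (hmem _).1 (hle (isHomogeneous_X ℂ j))
  · intro y hy f hf
    by_contra hf'
    have : y ∈ ⋃ p ∈ associatedPrimes (MPoly n) (MPoly n ⧸ satIdeal J), (p : Set (MPoly n)) := by
      rw [biUnion_associatedPrimes_eq_zero_divisors]
      refine ⟨Ideal.Quotient.mk _ f, fun h => hf' (Ideal.Quotient.eq_zero_iff_mem.1 h), ?_⟩
      have := Ideal.Quotient.eq_zero_iff_mem.2 hf
      rw [map_mul] at this
      exact this
    simp only [Set.mem_iUnion] at this
    obtain ⟨p, hp, hyp⟩ := this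
    exact hy _ ⟨p, hp, rfl⟩ hyp

theorem exists_form_avoiding {T : Set (Submodule ℂ (MPoly n))} (hT : T.Finite)
    (h : ∀ U ∈ T, ¬ forms n 1 ≤ U) : ∃ y ∈ forms n 1, ∀ U ∈ T, y ∉ U := by
  classical
  by_contra! hc
  have hs : (⊤ : Submodule ℂ (forms n 1)) ∉
      hT.toFinset.image (fun U => U.comap (forms n 1).subtype) := by
    simp only [Finset.mem_image, Set.Finite.mem_toFinset, not_exists, not_and]
    intro U hU e
    exact h U hU (Submodule.comap_subtype_eq_top.1 e)
  refine Subspace.biUnion_ne_univ_of_top_notMem hs (Set.eq_univ_of_forall fun y => ?_)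
  obtain ⟨U, hU, hyU⟩ := hc y y.2
  simp only [Finset.mem_image, Set.Finite.mem_toFinset, Set.mem_iUnion]
  exact ⟨_, ⟨U, hU, rfl⟩, hyU⟩

/-- Forms in the ideal generated by a homogeneous ideal and two linear forms. -/
theorem IsHomogIdeal.exists_of_mem_sup {I : Ideal (MPoly n)} (hI : IsHomogIdeal I) {u v : MPoly n}
    (hu : u ∈ forms n 1) (hv : v ∈ forms n 1) {m : ℕ} {f : MPoly n} (hf : f ∈ forms n (m + 1))
    (hfJ : f ∈ I ⊔ Ideal.span {u, v}) :
    ∃ i ∈ I, ∃ g ∈ forms n m, ∃ h ∈ forms n m, f = i + u * g + v * h := by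
  obtain ⟨i, hi, w, hw, rfl⟩ := Submodule.mem_sup.1 hfJ
  obtain ⟨a, b, rfl⟩ := Ideal.mem_span_pair.1 hw
  refine ⟨_, hI i hi (m + 1), _, homogeneousComponent_mem m a, _, homogeneousComponent_mem m b, ?_⟩
  have e := homogeneousComponent_eq_self hf
  rw [map_add, map_add, mul_comm a, mul_comm b, add_comm m 1, homogeneousComponent_mul_form hu,
    homogeneousComponent_mul_form hv, add_comm 1 m] at e
  rw [add_assoc, e, mul_comm u, mul_comm v]

theorem IsHomogIdeal.sup_span {I : Ideal (MPoly n)} (hI : IsHomogIdeal I) {u v : MPoly n}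
    (hu : u ∈ forms n 1) (hv : v ∈ forms n 1) : IsHomogIdeal (I ⊔ Ideal.span {u, v}) := by
  have hcomp : ∀ w ∈ forms n 1, ∀ a : MPoly n, ∀ k, homogeneousComponent k (w * a) ∈
      Ideal.span {w} := by
    rintro w hw a (_ | k)
    · have : homogeneousComponent 0 (w * a) = 0 := by
        rw [homogeneousComponent_zero, ← constantCoeff_eq, map_mul]
        have : constantCoeff w = 0 := (hw : w.IsHomogeneous 1).coeff_eq_zero (by simp)
        simp [this]
      rw [this]; exact zero_mem _
    · rw [add_comm, homogeneousComponent_mul_form hw]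
      exact Ideal.mul_mem_right _ _ (Ideal.mem_span_singleton_self w)
  intro f hf k
  obtain ⟨i, hi, w, hw, rfl⟩ := Submodule.mem_sup.1 hf
  obtain ⟨a, b, rfl⟩ := Ideal.mem_span_pair.1 hw
  rw [map_add, map_add]
  refine add_mem (Ideal.mem_sup_left (hI i hi k)) (Ideal.mem_sup_right (add_mem ?_ ?_))
  · rw [mul_comm]
    exact Ideal.span_mono (by simp) (hcomp u hu a k)
  · rw [mul_comm]
    exact Ideal.span_mono (by simp) (hcomp v hv b k)

end Saturation

end

/-! ### Dehomogenization -/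

section

open Module MvPolynomial

section Chart

variable {n : ℕ}

theorem aeval_mul_of_homogeneous {A : Type*} [CommRing A] [Algebra ℂ A] {m : ℕ} {f : MPoly n}
    (hf : f ∈ forms n m) (c : A) (y : Fin n → A) :
    aeval (fun j => c * y j) f = c ^ m * aeval y f := by
  conv_lhs => rw [f.as_sum]
  conv_rhs => rw [f.as_sum]
  rw [map_sum, map_sum, Finset.mul_sum]
  refine Finset.sum_congr rfl fun e he => ?_
  have hdeg : ∑ j, e j = m := by
    rw [(hf : f.IsHomogeneous m).degree_eq_sum_deg_support he]
    exact (Finset.sum_subset (Finset.subset_univ _) (by simp)).symm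
  rw [aeval_monomial, aeval_monomial, Finsupp.prod_fintype _ _ (by simp),
    Finsupp.prod_fintype _ _ (by simp)]
  simp only [mul_pow]
  rw [Finset.prod_mul_distrib, Finset.prod_pow_eq_pow_sum, hdeg]
  ring

/-- Dehomogenization of the coordinate ring of `V(I)` into its function field `Q`, in the chart where
the first coordinate does not vanish. -/
structure Chart (I : Ideal (MPoly (n + 1))) {Q : Type*} [Field Q] [Algebra ℂ Q]
    (δ : MPoly (n + 1) →ₐ[ℂ] Q) : Prop where
  X0 : δ (X 0) = 1
  zero_iff : ∀ m, ∀ f ∈ forms (n + 1) m, δ f = 0 ↔ f ∈ I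
  adj : IntermediateField.adjoin ℂ (((forms (n + 1) 1).map δ.toLinearMap : Submodule ℂ Q) : Set Q) = ⊤

theorem exists_chart {I : Ideal (MPoly (n + 1))} (hI : I.IsPrime) (h0 : X 0 ∉ I) :
    ∃ (Q : Type) (_ : Field Q) (_ : Algebra ℂ Q) (δ : MPoly (n + 1) →ₐ[ℂ] Q), Chart I δ := by
  let R := MPoly (n + 1) ⧸ I
  let Fr := FractionRing R
  let mk : MPoly (n + 1) →ₐ[ℂ] Fr :=
    (IsScalarTower.toAlgHom ℂ R Fr).comp (Ideal.Quotient.mkₐ ℂ I)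
  have hmk : ∀ f, mk f = 0 ↔ f ∈ I := by
    intro f
    change algebraMap R Fr (Ideal.Quotient.mk I f) = 0 ↔ _
    rw [FaithfulSMul.algebraMap_eq_zero_iff, Ideal.Quotient.eq_zero_iff_mem]
  have hx0 : mk (X 0) ≠ 0 := fun h => h0 ((hmk _).1 h)
  let y : Fin (n + 1) → Fr := fun j => (mk (X 0))⁻¹ * mk (X j)
  let δ' : MPoly (n + 1) →ₐ[ℂ] Fr := aeval y
  have hδ' : ∀ m, ∀ f ∈ forms (n + 1) m, δ' f = (mk (X 0))⁻¹ ^ m * mk f := by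
    intro m f hf
    have : mk = aeval fun j => mk (X j) := by ext j; simp
    change aeval y f = _
    rw [aeval_mul_of_homogeneous hf, ← this]
  let S : Set Fr := ((forms (n + 1) 1).map δ'.toLinearMap : Submodule ℂ Fr)
  let Q := IntermediateField.adjoin ℂ S
  have hyQ : ∀ j, y j ∈ Q := fun j =>
    IntermediateField.subset_adjoin ℂ S ⟨X j, isHomogeneous_X ℂ j, by simp [δ']⟩
  let δ : MPoly (n + 1) →ₐ[ℂ] Q := aeval fun j => (⟨y j, hyQ j⟩ : Q)
  have hδ : ∀ f, ((δ f : Q) : Fr) = δ' f := by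
    intro f
    have : (Q.val.comp δ) = δ' := by ext j; simp [δ, δ']
    rw [← this]; rfl
  refine ⟨Q, inferInstance, inferInstance, δ, ?_, ?_, ?_⟩
  · apply Subtype.ext
    rw [hδ]
    simp only [δ', y, aeval_X]
    exact inv_mul_cancel₀ hx0
  · intro m f hf
    rw [← hmk, ← ZeroMemClass.coe_eq_zero, hδ, hδ' m f hf]
    simp [hx0]
  · rw [← IntermediateField.lift_inj, IntermediateField.lift_top, IntermediateField.lift_adjoin]
    congr 1
    ext z
    constructor
    · rintro ⟨_, ⟨f, hf, rfl⟩, rfl⟩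
      exact ⟨f, hf, (hδ f).symm⟩
    · rintro ⟨f, hf, rfl⟩
      exact ⟨_, ⟨f, hf, rfl⟩, hδ f⟩

variable {I : Ideal (MPoly (n + 1))} {Q : Type*} [Field Q] [Algebra ℂ Q]
    {δ : MPoly (n + 1) →ₐ[ℂ] Q}

instance finiteDimensional_forms (m : ℕ) : FiniteDimensional ℂ (forms n m) :=
  Module.Finite.iff_fg.2 (homogeneousSubmodule_fg _ _ m)

theorem map_forms_pow (δ : MPoly (n + 1) →ₐ[ℂ] Q) (m : ℕ) :
    ((forms (n + 1) 1).map δ.toLinearMap) ^ m = (forms (n + 1) m).map δ.toLinearMap := by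
  rw [show forms (n + 1) m = forms (n + 1) 1 ^ m from (homogeneousSubmodule_one_pow _ m).symm]
  exact (Submodule.map_pow ..).symm

theorem finrank_map_eq_hilb {J : Ideal (MPoly n)} {A : Type*} [AddCommGroup A] [Module ℂ A]
    (f : MPoly n →ₗ[ℂ] A) (m : ℕ) (h : ∀ p ∈ forms n m, f p = 0 ↔ p ∈ J) :
    (finrank ℂ ((forms n m).map f) : ℤ) = hilbZ J m := by
  have e1 := finrank_map_add_inf_ker f (forms n m)
  have e2 := finrank_map_add_inf_ker (Ideal.Quotient.mkₐ ℂ J).toLinearMap (forms n m)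
  have e3 : forms n m ⊓ LinearMap.ker f =
      forms n m ⊓ LinearMap.ker (Ideal.Quotient.mkₐ ℂ J).toLinearMap := by
    ext p
    simp only [Submodule.mem_inf, LinearMap.mem_ker, AlgHom.toLinearMap_apply, Ideal.Quotient.mkₐ_eq_mk,
      Ideal.Quotient.eq_zero_iff_mem]
    exact and_congr_right fun hp => h p hp
  rw [e3] at e1
  have : hilbZ J m = finrank ℂ ((forms n m).map (Ideal.Quotient.mkₐ ℂ J).toLinearMap) := by
    rw [hilbZ, hilbNat, degQZ, if_pos (Int.natCast_nonneg m), Int.toNat_natCast]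
    rfl
  rw [this]
  omega

theorem Chart.finrank_pow (h : Chart I δ) (m : ℕ) :
    (finrank ℂ ↥(((forms (n + 1) 1).map δ.toLinearMap) ^ m) : ℤ) = hilbZ I m := by
  rw [map_forms_pow]
  exact finrank_map_eq_hilb _ m (h.zero_iff m)

theorem finrank_forms_one : finrank ℂ (forms n 1) = n := by
  have : forms n 1 = Submodule.span ℂ (Set.range X) := homogeneousSubmodule_one_eq_span_X
  rw [this, finrank_span_eq_card (linearIndependent_X _ _), Fintype.card_fin]

theorem Nondeg.finrank (hI : Nondeg I) (h : Chart I δ) :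
    finrank ℂ ((forms (n + 1) 1).map δ.toLinearMap) = n + 1 := by
  have e1 := finrank_map_add_inf_ker δ.toLinearMap (forms (n + 1) 1)
  have e3 : forms (n + 1) 1 ⊓ LinearMap.ker δ.toLinearMap = ⊥ := by
    rw [eq_bot_iff]
    rintro p ⟨hp, hp0⟩
    exact hI p hp ((h.zero_iff 1 p hp).1 hp0)
  rw [e3, finrank_bot, add_zero, finrank_forms_one] at e1
  exact e1

/-- A linear form regular modulo the saturation of `I + (x₀, v)` satisfies, in large degrees, the
corresponding cancellation property among dehomogenized forms. -/
theorem Chart.regular (h : Chart I δ) (hI : IsHomogIdeal I) {v y : MPoly (n + 1)}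
    (hv : v ∈ forms (n + 1) 1) (hy : y ∈ forms (n + 1) 1)
    (hreg : ∀ f, y * f ∈ satIdeal (I ⊔ Ideal.span {X 0, v}) →
      f ∈ satIdeal (I ⊔ Ideal.span {X 0, v})) :
    ∃ n₁, ∀ m ≥ n₁, ∀ w ∈ ((forms (n + 1) 1).map δ.toLinearMap) ^ (m + 1),
      δ y * w ∈ ((forms (n + 1) 1).map δ.toLinearMap) ^ (m + 1) ⊔
        (((forms (n + 1) 1).map δ.toLinearMap) ^ (m + 1)).map (LinearMap.mulLeft ℂ (δ v)) →
      w ∈ ((forms (n + 1) 1).map δ.toLinearMap) ^ m ⊔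
        (((forms (n + 1) 1).map δ.toLinearMap) ^ m).map (LinearMap.mulLeft ℂ (δ v)) := by
  have hX0 : X 0 ∈ forms (n + 1) 1 := isHomogeneous_X ℂ 0
  obtain ⟨m₀, hm₀⟩ := (hI.sup_span hX0 hv).exists_mem_of_mem_satIdeal
  refine ⟨m₀, fun m hm w hw hyw => ?_⟩
  simp only [map_forms_pow] at hw hyw ⊢
  obtain ⟨f, hf, rfl⟩ := hw
  obtain ⟨_, ⟨a, ha, rfl⟩, _, ⟨_, ⟨b, hb, rfl⟩, rfl⟩, e⟩ := Submodule.mem_sup.1 hyw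
  simp only [AlgHom.toLinearMap_apply, LinearMap.mulLeft_apply] at e ⊢
  have hmem : y * f - (X 0 * a + v * b) ∈ I := by
    rw [← h.zero_iff (1 + (m + 1))]
    · rw [map_sub, map_add, map_mul, map_mul, map_mul, h.X0, ← e]
      ring
    · exact sub_mem (mul_mem_forms hy hf) (add_mem (mul_mem_forms hX0 ha) (mul_mem_forms hv hb))
  have hsat : f ∈ satIdeal (I ⊔ Ideal.span {X 0, v}) := by
    refine hreg f (le_satIdeal _ ?_)
    rw [← sub_add_cancel (y * f) (X 0 * a + v * b)]
    refine add_mem (Ideal.mem_sup_left hmem) (Ideal.mem_sup_right ?_)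
    exact Ideal.mem_span_pair.2 ⟨a, b, by ring⟩
  obtain ⟨i, hi, g, hg, g', hg', rfl⟩ := hI.exists_of_mem_sup hX0 hv hf
    (hm₀ _ (by omega) f hf hsat)
  have hi0 : δ i = 0 := by
    rw [h.zero_iff (1 + m)]
    · exact hi
    · have : i = (i + X 0 * g + v * g') - (X 0 * g + v * g') := by ring
      rw [this]
      refine sub_mem (by rwa [add_comm 1 m]) (add_mem (mul_mem_forms hX0 hg) (mul_mem_forms hv hg'))
  rw [map_add, map_add, map_mul, map_mul, h.X0, hi0, zero_add, one_mul]
  exact Submodule.add_mem_sup ⟨g, hg, rfl⟩ ⟨_, ⟨g', hg', rfl⟩, rfl⟩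

end Chart

end

/-! ### Choice of general linear forms -/

section

open Module MvPolynomial

section Choice

variable {n : ℕ} {I : Ideal (MPoly (n + 1))} {Q : Type*} [Field Q] [Algebra ℂ Q]
    {δ : MPoly (n + 1) →ₐ[ℂ] Q}

/-- If the function field is algebraic over `ℂ(t)`, then a linear form outside finitely many proper
subspaces generates it over `ℂ(t)`: a finite separable extension has finitely many subextensions. -/
theorem Chart.exists_finite_generating (h : Chart I δ) {S : Set Q}
    (halg : Algebra.IsAlgebraic (IntermediateField.adjoin ℂ S) Q) :
    ∃ T : Set (Submodule ℂ (MPoly (n + 1))), T.Finite ∧ (∀ U ∈ T, ¬ forms (n + 1) 1 ≤ U) ∧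
      ∀ y, (∀ U ∈ T, y ∉ U) → IntermediateField.adjoin ℂ (insert (δ y) S) = ⊤ := by
  set K := IntermediateField.adjoin ℂ S with hK
  have htop : ∀ M : IntermediateField K Q,
      ((forms (n + 1) 1).map δ.toLinearMap : Set Q) ⊆ M → M = ⊤ := by
    intro M hM
    have : (⊤ : IntermediateField ℂ Q) ≤ M.restrictScalars ℂ := by
      rw [← h.adj, IntermediateField.adjoin_le_iff]
      exact hM
    rw [eq_top_iff]
    intro z _
    exact this (IntermediateField.mem_top (F := ℂ))
  have hfd : FiniteDimensional K Q := by
    have e : IntermediateField.adjoin K (Set.range fun j : Fin (n + 1) => δ (X j)) = ⊤ := by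
      refine htop _ ?_
      rintro _ ⟨f, hf, rfl⟩
      have : forms (n + 1) 1 = Submodule.span ℂ (Set.range X) := homogeneousSubmodule_one_eq_span_X
      rw [SetLike.mem_coe, this] at hf
      refine Submodule.span_induction (p := fun f _ => δ f ∈ IntermediateField.adjoin K
        (Set.range fun j : Fin (n + 1) => δ (X j))) ?_ ?_ ?_ ?_ hf
      · rintro _ ⟨j, rfl⟩
        exact IntermediateField.subset_adjoin _ _ ⟨j, rfl⟩
      · rw [map_zero]; exact zero_mem _
      · intro a b _ _ ha hb
        rw [map_add]; exact add_mem ha hb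
      · intro c a _ ha
        rw [map_smul, Algebra.smul_def, IsScalarTower.algebraMap_apply ℂ K Q]
        exact mul_mem (IntermediateField.algebraMap_mem _ _) ha
    have := IntermediateField.finiteDimensional_adjoin (K := K)
      (S := Set.range fun j : Fin (n + 1) => δ (X j))
      (fun x _ => (halg.isAlgebraic x).isIntegral)
    rw [e] at this
    exact Module.Finite.equiv (IntermediateField.topEquiv (F := K) (E := Q)).toLinearEquiv
  have hfin : Finite (IntermediateField K Q) :=
    (Field.exists_primitive_element_iff_finite_intermediateField K Q).1
      ⟨halg, Field.exists_primitive_element K Q⟩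
  refine ⟨(fun M : IntermediateField K Q =>
    ((M.restrictScalars ℂ).toSubalgebra.toSubmodule.comap δ.toLinearMap)) '' {M | M ≠ ⊤},
    (Set.toFinite _).image _, ?_, ?_⟩
  · rintro _ ⟨M, hM, rfl⟩ hle
    refine hM (htop M ?_)
    rintro _ ⟨f, hf, rfl⟩
    exact hle hf
  · intro y hy
    have e : IntermediateField.adjoin K {δ y} = ⊤ := by
      by_contra hne
      exact hy _ ⟨_, hne, rfl⟩ (IntermediateField.mem_adjoin_simple_self K (δ y))
    have e2 := IntermediateField.adjoin_adjoin_left ℂ S {δ y}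
    rw [← hK, e] at e2
    rw [Set.insert_eq, Set.union_comm, ← e2]
    rfl

theorem Chart.satForm (h : Chart I δ) (hI : IsHomogIdeal I) (hnd : Nondeg I) {y : MPoly (n + 1)}
    (hy : y ∈ forms (n + 1) 1) (hy0 : y ∉ Submodule.span ℂ {(X 0 : MPoly (n + 1))})
    (hreg : ∀ f, y * f ∈ satIdeal (I ⊔ Ideal.span {X 0, 0}) →
      f ∈ satIdeal (I ⊔ Ideal.span {X 0, 0})) :
    SatForm ((forms (n + 1) 1).map δ.toLinearMap) (δ y) where
  mem := ⟨y, hy, rfl⟩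
  ne := by
    rintro ⟨c, hc⟩
    apply hy0
    have hmem : y - c • X 0 ∈ forms (n + 1) 1 :=
      sub_mem hy (Submodule.smul_mem _ _ (isHomogeneous_X ℂ 0))
    have := hnd _ hmem ((h.zero_iff 1 _ hmem).1 (by
      rw [map_sub, map_smul, h.X0, ← hc, Algebra.algebraMap_eq_smul_one, sub_self]))
    rw [sub_eq_zero.1 this]
    exact Submodule.smul_mem _ _ (Submodule.mem_span_singleton_self _)
  sat := by
    obtain ⟨n₁, hn₁⟩ := h.regular hI (zero_mem _) hy hreg
    refine ⟨n₁, fun m hm w hw hyw => ?_⟩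
    have e : LinearMap.mulLeft ℂ (δ 0) = 0 := by ext; simp
    have := hn₁ m hm w hw (Submodule.mem_sup_left hyw)
    rw [e, Submodule.map_zero, sup_bot_eq] at this
    exact this

theorem Nondeg.mono {J : Ideal (MPoly n)} {J' : Ideal (MPoly n)} (h : Nondeg J) (hle : J' ≤ J) :
    Nondeg J' := fun f hf hfJ => h f hf (hle hfJ)

theorem Nondeg.X_notMem (h : Nondeg I) : X 0 ∉ I := fun hm =>
  X_ne_zero (R := ℂ) 0 (h _ (isHomogeneous_X ℂ 0) hm)

end Choice

section Existence

/-- Charts for the curve and the surface, and general linear forms, satisfying the hypotheses of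
`generic_bound`. -/
theorem exists_geomData {r : ℕ} {d s π pa g : ℤ} (hr : 4 ≤ r) (hs : 0 < s)
    {IC IS : Ideal (MPoly (r + 1))} (hcurve : IsCurve IC) (hnd : Nondeg IC) (hinv : CurveInv IC d g)
    (hsurf : IsSurface IS) (hsinv : SurfInv IS s π pa) (hsub : IS ≤ IC) :
    ∃ (F₀ L₀ : Type) (_ : Field F₀) (_ : Algebra ℂ F₀) (_ : Field L₀) (_ : Algebra ℂ L₀)
      (δS : MPoly (r + 1) →ₐ[ℂ] F₀) (δC : MPoly (r + 1) →ₐ[ℂ] L₀) (y : Fin 2 → MPoly (r + 1))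
      (z : MPoly (r + 1)), Chart IC δC ∧ (∀ i, y i ∈ forms (r + 1) 1) ∧ z ∈ forms (r + 1) 1 ∧
      GeomData ((forms (r + 1) 1).map (δS.prod δC).toLinearMap) (fun i => δS.prod δC (y i))
        (δS.prod δC z) r d s π pa g := by
  have hndS : Nondeg IS := hnd.mono hsub
  obtain ⟨F₀, _, _, δS, hδS⟩ := exists_chart hsurf.2.1 hndS.X_notMem
  obtain ⟨L₀, _, _, δC, hδC⟩ := exists_chart hcurve.2.1 hnd.X_notMem
  obtain ⟨TS, hTS, hTS', hregS⟩ := exists_finite_regular (IS ⊔ Ideal.span {X 0, 0})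
  obtain ⟨TC, hTC, hTC', hregC⟩ := exists_finite_regular (IC ⊔ Ideal.span {X 0, 0})
  have hX : ∀ U ∈ ({Submodule.span ℂ {X 0}} : Set (Submodule ℂ (MPoly (r + 1)))),
      ¬ forms (r + 1) 1 ≤ U := by
    rintro _ rfl hle
    have := Submodule.finrank_mono hle
    have h1 := finrank_span_singleton (K := ℂ) (X_ne_zero (R := ℂ) (0 : Fin (r + 1)))
    rw [finrank_forms_one, h1] at this
    omega
  obtain ⟨y₀, hy₀, hy₀T⟩ := exists_form_avoiding ((hTS.union hTC).union (Set.finite_singleton _))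
    (by rintro U ((hU | hU) | hU); exacts [hTS' U hU, hTC' U hU, hX U hU])
  obtain ⟨TB, hTB, hTB', hregB⟩ := exists_finite_regular (IS ⊔ Ideal.span {X 0, y₀})
  obtain ⟨y₁, hy₁, hy₁T⟩ := exists_form_avoiding
    (((hTS.union hTC).union (Set.finite_singleton _)).union hTB)
    (by rintro U (((hU | hU) | hU) | hU); exacts [hTS' U hU, hTC' U hU, hX U hU, hTB' U hU])
  let y : Fin 2 → MPoly (r + 1) := ![y₀, y₁]
  have hy : ∀ i, y i ∈ forms (r + 1) 1 := by
    intro i; fin_cases i; exacts [hy₀, hy₁]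
  have hyT : ∀ i, ∀ U ∈ TS ∪ TC ∪ {Submodule.span ℂ {X 0}}, y i ∉ U := by
    intro i; fin_cases i
    · exact hy₀T
    · exact fun U hU => hy₁T U (Or.inl hU)
  set Z := (forms (r + 1) 1).map (δS.prod δC).toLinearMap with hZ
  have eF : Z.map (AlgHom.fst ℂ F₀ L₀).toLinearMap = (forms (r + 1) 1).map δS.toLinearMap := by
    rw [hZ, ← Submodule.map_comp]; rfl
  have eL : Z.map (AlgHom.snd ℂ F₀ L₀).toLinearMap = (forms (r + 1) 1).map δC.toLinearMap := by
    rw [hZ, ← Submodule.map_comp]; rfl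
  have hbase : GeomBase Z (fun i => δS.prod δC (y i)) r d s π pa g := by
    refine ⟨?_, ?_, ?_, ?_, ?_, ?_, ?_, ?_, ?_, ?_, ?_⟩
    · exact inferInstanceAs (FiniteDimensional ℂ ↥((forms (r + 1) 1).map (δS.prod δC).toLinearMap))
    · exact ⟨X 0, isHomogeneous_X ℂ 0, Prod.ext hδS.X0 hδC.X0⟩
    · exact fun i => ⟨y i, hy i, rfl⟩
    · intro m z hz hz1
      have e : Z ^ m = (forms (r + 1) m).map (δS.prod δC).toLinearMap := by
        rw [show forms (r + 1) m = forms (r + 1) 1 ^ m from (homogeneousSubmodule_one_pow _ m).symm]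
        exact (Submodule.map_pow ..).symm
      rw [e] at hz
      obtain ⟨f, hf, rfl⟩ := hz
      exact (hδC.zero_iff m f hf).2 (hsub ((hδS.zero_iff m f hf).1 hz1))
    · intro i
      rw [eF]
      exact hδS.satForm hsurf.1 hndS (hy i) (hyT i _ (Or.inr rfl))
        (hregS _ fun U hU => hyT i U (Or.inl (Or.inl hU)))
    · intro i
      rw [eL]
      exact hδC.satForm hcurve.1 hnd (hy i) (hyT i _ (Or.inr rfl))
        (hregC _ fun U hU => hyT i U (Or.inl (Or.inr hU)))
    · rw [eF]
      exact hδS.regular hsurf.1 hy₀ hy₁ (hregB _ fun U hU => hy₁T U (Or.inr hU))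
    · obtain ⟨N, hN⟩ := hsinv
      refine ⟨N.toNat, fun n hn => ?_⟩
      rw [eF, hδS.finrank_pow, hN n (by omega)]
    · obtain ⟨N, hN⟩ := hinv
      refine ⟨N.toNat, fun n hn => ?_⟩
      rw [eL, hδC.finrank_pow, hN n (by omega)]
    · rw [eL, hnd.finrank hδC]
    · rw [eF, hδS.adj]
  have _ := hbase.fd
  have hind := base_indep (t := fun i => δS (y i)) hbase.oneF (fun i => (hbase.satF i).mem)
    (hbase.satF 0) hbase.hgen (hbase.hgrow hs) hbase.adj
  obtain ⟨T, hT, hT', hgenz⟩ := hδS.exists_finite_generating hind.2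
  obtain ⟨z, hz, hzT⟩ := exists_form_avoiding hT hT'
  exact ⟨F₀, L₀, _, _, _, _, δS, δC, y, z, hδC, hy, hz, hbase, ⟨z, hz, rfl⟩, hgenz z hzT⟩

end Existence

end

/-! ### Minors and rational functions -/

section

open Module MvPolynomial

section Minors

variable {ι κ : Type*} [Fintype ι] [Fintype κ]

/-- A matrix over a domain with independent columns has a nonzero maximal minor. -/
theorem exists_minor_ne_zero [DecidableEq κ] {D : Type*} [CommRing D] [IsDomain D]
    (A : Matrix ι κ D) (hA : ∀ v, A.mulVec v = 0 → v = 0) :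
    ∃ f : κ → ι, (A.submatrix f id).det ≠ 0 := by
  let K := FractionRing D
  let A' : Matrix ι κ K := A.map (algebraMap D K)
  have hli : LinearIndependent D A.col := Matrix.mulVec_injective_iff.1 fun u v huv =>
    sub_eq_zero.1 (hA _ (by rw [Matrix.mulVec_sub, sub_eq_zero]; exact huv))
  have hli' : LinearIndependent K A'.col := by
    have h1 : LinearIndependent D A'.col := by
      have : A'.col = fun j => (LinearMap.compLeft (Algebra.linearMap D K) ι) (A.col j) := rfl
      rw [this]
      refine hli.map' _ (LinearMap.ker_eq_bot.2 fun u v huv => ?_)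
      funext i
      exact IsFractionRing.injective D K (congrFun huv i)
    exact (LinearIndependent.iff_fractionRing D K).1 h1
  have hrank : Fintype.card κ = finrank K (Submodule.span K (Set.range A'.row)) := by
    have h1 : A'.rank = Fintype.card κ := by
      rw [← Matrix.rank_transpose]
      exact LinearIndependent.rank_matrix (M := A'.transpose) hli'
    rw [← h1, Matrix.rank_eq_finrank_span_row]
  obtain ⟨b, hb, -, hbli⟩ := Submodule.exists_fun_fin_finrank_span_eq K (Set.range A'.row)
  choose f hf using hb
  let e : κ ≃ Fin (finrank K (Submodule.span K (Set.range A'.row))) :=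
    Fintype.equivFinOfCardEq hrank
  refine ⟨f ∘ e, fun h0 => ?_⟩
  have hrows : LinearIndependent K (A'.submatrix (f ∘ e) id).row := by
    have : (A'.submatrix (f ∘ e) id).row = b ∘ e := by
      funext i
      exact hf (e i)
    rw [this]
    exact hbli.comp _ e.injective
  have hu := (Matrix.isUnit_iff_isUnit_det _).1 (Matrix.linearIndependent_rows_iff_isUnit.1 hrows)
  have hdet : (A'.submatrix (f ∘ e) id).det = algebraMap D K ((A.submatrix (f ∘ e) id).det) := by
    rw [RingHom.map_det]; rfl
  rw [hdet, h0, map_zero] at hu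
  exact hu.ne_zero rfl

/-- If the columns of a matrix of polynomials become independent after some base change to a domain,
then they are independent at a general point. -/
theorem exists_generic_indep {σ D : Type*} [CommRing D] [IsDomain D]
    (A : Matrix ι κ (MvPolynomial σ ℂ)) (ρ : MvPolynomial σ ℂ →+* D)
    (hA : ∀ v, (A.map ρ).mulVec v = 0 → v = 0) :
    ∃ Q : MvPolynomial σ ℂ, Q ≠ 0 ∧ ∀ c : σ → ℂ, eval c Q ≠ 0 →
      ∀ v, (A.map (eval c)).mulVec v = 0 → v = 0 := by
  classical
  obtain ⟨f, hf⟩ := exists_minor_ne_zero _ hA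
  refine ⟨(A.submatrix f id).det, fun h0 => hf ?_, fun c hc v hv => ?_⟩
  · have : ((A.map ρ).submatrix f id).det = ρ ((A.submatrix f id).det) := by
      rw [RingHom.map_det]; rfl
    rw [this, h0, map_zero]
  · have hdet : ((A.map (eval c)).submatrix f id).det ≠ 0 := by
      have : ((A.map (eval c)).submatrix f id).det = eval c ((A.submatrix f id).det) := by
        rw [RingHom.map_det]; rfl
      rwa [this]
    refine Matrix.eq_zero_of_mulVec_eq_zero hdet ?_
    funext i
    exact congrFun hv (f i)

end Minors

section RationalFunctions

theorem ratExt_of_isFractionRing {k σ N : Type*} [Field k] [Field N] [Algebra (MvPolynomial σ k) N]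
    [IsFractionRing (MvPolynomial σ k) N] [Algebra k N] [IsScalarTower k (MvPolynomial σ k) N] :
    RatExt k fun i : σ => algebraMap (MvPolynomial σ k) N (X i) := by
  have e : aeval (fun i : σ => algebraMap (MvPolynomial σ k) N (X i)) =
      IsScalarTower.toAlgHom k (MvPolynomial σ k) N := by
    ext i
    simp
  have hinj : Function.Injective (algebraMap (MvPolynomial σ k) N) := IsFractionRing.injective _ _
  constructor
  · rw [AlgebraicIndependent, e]
    exact hinj
  · intro y
    obtain ⟨p, q, hq, rfl⟩ := IsFractionRing.div_surjective (A := MvPolynomial σ k) y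
    have hq0 := nonZeroDivisors.ne_zero hq
    refine ⟨p, q, hq0, ?_⟩
    rw [e]
    exact div_mul_cancel₀ _ ((map_ne_zero_iff _ hinj).2 hq0)

/-- The field of rational functions over an extension `E` of `k` is an extension of the field of
rational functions over `k`. -/
theorem exists_ratExt {k σ E k₀ : Type} [Field k] [Field E] [Algebra k E] [Field k₀]
    [Algebra (MvPolynomial σ k) k₀] [IsFractionRing (MvPolynomial σ k) k₀] [Algebra k k₀]
    [IsScalarTower k (MvPolynomial σ k) k₀] :
    ∃ (N : Type) (_ : Field N) (_ : Algebra k N) (_ : Algebra k₀ N)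
      (_ : Algebra E N) (_ : IsScalarTower k k₀ N)
      (_ : IsScalarTower k E N), RatExt E fun i : σ => algebraMap k₀ N
        (algebraMap (MvPolynomial σ k) k₀ (X i)) := by
  let N := FractionRing (MvPolynomial σ E)
  let φ : MvPolynomial σ k →+* N :=
    (algebraMap (MvPolynomial σ E) N).comp (MvPolynomial.map (algebraMap k E))
  have hφ : Function.Injective φ := (IsFractionRing.injective _ _).comp
    (MvPolynomial.map_injective _ (algebraMap k E).injective)
  let Φ : k₀ →+* N := IsFractionRing.lift hφ
  have hΦ : ∀ p, Φ (algebraMap _ _ p) = φ p := fun p => IsFractionRing.lift_algebraMap hφ p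
  let _ : Algebra k₀ N := Φ.toAlgebra
  have i1 : IsScalarTower k E N := inferInstance
  have i2 : IsScalarTower k k₀ N := by
    refine IsScalarTower.of_algebraMap_eq fun a => ?_
    change _ = Φ _
    rw [IsScalarTower.algebraMap_apply k (MvPolynomial σ k) k₀, hΦ]
    simp only [φ, RingHom.comp_apply, MvPolynomial.algebraMap_eq, MvPolynomial.map_C]
    rw [IsScalarTower.algebraMap_apply k E N, IsScalarTower.algebraMap_apply E (MvPolynomial σ E) N,
      MvPolynomial.algebraMap_eq]
  refine ⟨N, inferInstance, inferInstance, inferInstance, inferInstance, i2, i1, ?_⟩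
  convert ratExt_of_isFractionRing (k := E) (σ := σ) (N := N) using 2 with i
  change Φ _ = _
  rw [hΦ]
  simp [φ]

end RationalFunctions

end

/-! ### From the generic to the general linear form -/

section

open Module MvPolynomial

section SectionMatrix

variable {n N : ℕ} {ι κ A : Type*} [Fintype ι] [Fintype κ] [CommRing A] [Algebra ℂ A]
  {U : Submodule ℂ A}

/-- The matrix whose columns are the coordinates of the vectors `w j` and of the vectors
`∑ l, X l * u l k`, the `X l` being indeterminate coefficients. -/
noncomputable def secMatrix (B : Basis ι ℂ U) (w : Fin N → U) (u : Fin n → κ → U) :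
    Matrix ι (Fin N ⊕ κ) (MvPolynomial (Fin n) ℂ) :=
  fun i => Sum.elim (fun j => C (B.repr (w j) i)) fun k => ∑ l, X l * C (B.repr (u l k) i)

theorem secMatrix_sum (B : Basis ι ℂ U) (w : Fin N → U) (u : Fin n → κ → U) {D D' : Type*}
    [CommRing D] [CommRing D'] (ρ : MvPolynomial (Fin n) ℂ →+* D) (ψ : D →+* D') (φ : A →+* D')
    (hc : ∀ a : ℂ, ψ (ρ (C a)) = φ (algebraMap ℂ A a)) (v : Fin N ⊕ κ → D) :
    ∑ i, ψ (((secMatrix B w u).map ρ).mulVec v i) * φ (B i) =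
      ∑ j, ψ (v (Sum.inl j)) * φ (w j) +
        ∑ k, ψ (v (Sum.inr k)) * ∑ l, ψ (ρ (X l)) * φ (u l k) := by
  have key : ∀ x : U, ∑ i, ψ (ρ (C (B.repr x i))) * φ (B i) = φ x := by
    intro x
    have h := congrArg (fun y : U => φ (y : A)) (B.sum_repr x)
    simp only [Submodule.coe_sum, Submodule.coe_smul, map_sum, Algebra.smul_def, map_mul] at h
    rw [← h]
    exact Finset.sum_congr rfl fun i _ => by rw [hc]
  have e : ∀ i, ψ (((secMatrix B w u).map ρ).mulVec v i) * φ (B i) =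
      ∑ j, ψ (v (Sum.inl j)) * (ψ (ρ (C (B.repr (w j) i))) * φ (B i)) +
        ∑ k, ψ (v (Sum.inr k)) * ∑ l, ψ (ρ (X l)) * (ψ (ρ (C (B.repr (u l k) i))) * φ (B i)) := by
    intro i
    simp only [Matrix.mulVec, dotProduct, Fintype.sum_sum_type, secMatrix, Matrix.map_apply,
      Sum.elim_inl, Sum.elim_inr, map_add, map_sum, map_mul, add_mul, Finset.sum_mul, Finset.mul_sum]
    congr 1
    · exact Finset.sum_congr rfl fun j _ => by ring
    · exact Finset.sum_congr rfl fun k _ => Finset.sum_congr rfl fun l _ => by ring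
  rw [Finset.sum_congr rfl fun i _ => e i, Finset.sum_add_distrib, Finset.sum_comm]
  congr 1
  · exact Finset.sum_congr rfl fun j _ => by rw [← Finset.mul_sum, key]
  · rw [Finset.sum_comm]
    refine Finset.sum_congr rfl fun k _ => ?_
    rw [← Finset.mul_sum, Finset.sum_comm]
    congr 1
    exact Finset.sum_congr rfl fun l _ => by rw [← Finset.mul_sum, key]

end SectionMatrix

section Transfer

variable {r : ℕ}

theorem exists_coeffs {n : ℕ} {f : MPoly n} (hf : f ∈ forms n 1) :
    ∃ a : Fin n → ℂ, f = ∑ j, C (a j) * X j := by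
  have : forms n 1 = Submodule.span ℂ (Set.range X) := homogeneousSubmodule_one_eq_span_X
  rw [this, Submodule.mem_span_range_iff_exists_fun] at hf
  obtain ⟨a, rfl⟩ := hf
  exact ⟨a, by simp [smul_eq_C_mul]⟩

/-- If the elements `w j` are independent over `k₀[ϑ]`, where `ϑ = y + x * z` is a generic linear
form, then for a general linear form `ℓ` no nontrivial combination of the `w j` is a multiple of `ℓ`
by an element of degree `M`. -/
theorem exists_generic_no_multiple {L₀ : Type*} [Field L₀] [Algebra ℂ L₀]
    {δ : MPoly (r + 1) →ₐ[ℂ] L₀} (hX0 : δ (X 0) = 1)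
    {k₀ L ι : Type*} [Field k₀] [Field L] [Algebra ℂ k₀] [Algebra ℂ L] [Algebra k₀ L] [Algebra L₀ L]
    [IsScalarTower ℂ k₀ L] [IsScalarTower ℂ L₀ L] {x : ι → k₀} (hx : RatExt ℂ x)
    (hLx : RatExt L₀ fun i => algebraMap k₀ L (x i)) (i : ι)
    {y z : MPoly (r + 1)} (hy : y ∈ forms (r + 1) 1) (hz : z ∈ forms (r + 1) 1)
    {M N : ℕ} (w : Fin N → L₀)
    (hw : ∀ j, w j ∈ ((forms (r + 1) 1).map δ.toLinearMap) ^ (M + 1))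
    (hind : ∀ P : Fin N → Polynomial k₀, ∑ j, Polynomial.aeval (algebraMap L₀ L (δ y) +
      algebraMap k₀ L (x i) * algebraMap L₀ L (δ z)) (P j) * algebraMap L₀ L (w j) = 0 → P = 0) :
    ∃ Q : MvPolynomial (Fin (r + 1)) ℂ, Q ≠ 0 ∧ ∀ c : Fin (r + 1) → ℂ, eval c Q ≠ 0 →
      ∀ a : Fin N → ℂ, ∀ u ∈ ((forms (r + 1) 1).map δ.toLinearMap) ^ M,
        ∑ j, a j • w j + δ (∑ l, C (c l) * X l) * u = 0 → a = 0 ∧ u = 0 := by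
  set W := (forms (r + 1) 1).map δ.toLinearMap with hW
  have hXW : ∀ l, δ (X l) ∈ W := fun l => ⟨X l, isHomogeneous_X ℂ l, rfl⟩
  let B := Module.finBasis ℂ ↥(W ^ (M + 1))
  let b := Module.finBasis ℂ ↥(W ^ M)
  let w' : Fin N → ↥(W ^ (M + 1)) := fun j => ⟨w j, hw j⟩
  let u' : Fin (r + 1) → Fin (finrank ℂ ↥(W ^ M)) → ↥(W ^ (M + 1)) := fun l k =>
    ⟨δ (X l) * b k, by rw [pow_succ']; exact Submodule.mul_mem_mul (hXW l) (b k).2⟩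
  obtain ⟨ay, hay⟩ := exists_coeffs hy
  obtain ⟨az, haz⟩ := exists_coeffs hz
  let ρ : MvPolynomial (Fin (r + 1)) ℂ →+* Polynomial k₀ :=
    (aeval (R := ℂ) fun l : Fin (r + 1) => Polynomial.C (algebraMap ℂ k₀ (ay l) +
      x i * algebraMap ℂ k₀ (az l)) - if l = 0 then Polynomial.X else 0).toRingHom
  let ψ : Polynomial k₀ →+* Polynomial L := Polynomial.mapRingHom (algebraMap k₀ L)
  let φ : L₀ →+* Polynomial L := Polynomial.C.comp (algebraMap L₀ L)
  set ϑ : L := algebraMap L₀ L (δ y) + algebraMap k₀ L (x i) * algebraMap L₀ L (δ z) with hϑ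
  have hψρ : ∀ a : ℂ, ψ (ρ (C a)) = φ (algebraMap ℂ L₀ a) := by
    intro a
    simp only [ρ, ψ, φ, AlgHom.toRingHom_eq_coe, RingHom.coe_coe, RingHom.comp_apply]
    rw [← MvPolynomial.algebraMap_eq, AlgHom.commutes, ← IsScalarTower.algebraMap_apply ℂ L₀ L,
      IsScalarTower.algebraMap_apply ℂ k₀ L, IsScalarTower.algebraMap_apply ℂ k₀ (Polynomial k₀)]
    simp
  have hform : ∑ l, ψ (ρ (X l)) * φ (δ (X l)) = Polynomial.C ϑ - Polynomial.X := by
    have e1 : ∀ a : Fin (r + 1) → ℂ, algebraMap L₀ L (δ (∑ l, C (a l) * X l)) =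
        ∑ l, algebraMap ℂ L (a l) * algebraMap L₀ L (δ (X l)) := by
      intro a
      rw [map_sum, map_sum]
      refine Finset.sum_congr rfl fun l _ => ?_
      rw [map_mul, map_mul, ← MvPolynomial.algebraMap_eq, AlgHom.commutes,
        ← IsScalarTower.algebraMap_apply]
    have e2 : ∀ l, ψ (ρ (X l)) * φ (δ (X l)) =
        Polynomial.C (algebraMap ℂ L (ay l) * algebraMap L₀ L (δ (X l)) + algebraMap k₀ L (x i) *
          (algebraMap ℂ L (az l) * algebraMap L₀ L (δ (X l)))) -
        if l = 0 then Polynomial.X else 0 := by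
      intro l
      by_cases hl : l = 0
      · subst hl
        simp [ρ, ψ, φ, hX0, ← IsScalarTower.algebraMap_apply]
      · simp [ρ, ψ, φ, hl, ← IsScalarTower.algebraMap_apply]
        ring
    rw [Finset.sum_congr rfl fun l _ => e2 l, Finset.sum_sub_distrib, ← map_sum,
      Finset.sum_add_distrib, ← Finset.mul_sum, ← e1, ← e1, ← hay, ← haz]
    simp [hϑ]
  have hinr : ∀ v : Fin (finrank ℂ ↥(W ^ M)) → Polynomial k₀,
      ∑ k, ψ (v k) * ∑ l, ψ (ρ (X l)) * φ (u' l k) =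
        (Polynomial.C ϑ - Polynomial.X) * ∑ k, ψ (v k) * φ (b k) := by
    intro v
    rw [← hform, Finset.mul_sum]
    refine Finset.sum_congr rfl fun k _ => ?_
    simp only [u', map_mul, ← mul_assoc, ← Finset.sum_mul]
    ring
  obtain ⟨Q, hQ, hQc⟩ := exists_generic_indep (secMatrix B w' u') ρ (by
    intro v hv
    have h := secMatrix_sum B w' u' ρ ψ φ hψρ v
    rw [hv, hinr] at h
    simp only [Pi.zero_apply, map_zero, zero_mul, Finset.sum_const_zero] at h
    have h1 : (fun j => v (Sum.inl j)) = 0 := by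
      refine hind _ ?_
      have := congrArg (Polynomial.eval ϑ) h
      simp only [Polynomial.eval_zero, Polynomial.eval_add, Polynomial.eval_mul,
        Polynomial.eval_sub, Polynomial.eval_C, Polynomial.eval_X, sub_self, zero_mul, add_zero,
        Polynomial.eval_finsetSum] at this
      rw [this]
      refine Finset.sum_congr rfl fun j _ => ?_
      simp only [ψ, φ, w', RingHom.comp_apply, Polynomial.eval_C, Polynomial.coe_mapRingHom,
        Polynomial.eval_map_algebraMap]
    have h1' : ∀ j, v (Sum.inl j) = 0 := fun j => congrFun h1 j
    simp only [h1', map_zero, zero_mul, Finset.sum_const_zero, zero_add] at h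
    have hne : Polynomial.C ϑ - Polynomial.X ≠ 0 := by
      rw [← neg_ne_zero, neg_sub]
      exact Polynomial.X_sub_C_ne_zero ϑ
    have h2 := (mul_eq_zero.1 h.symm).resolve_left hne
    have hli : LinearIndependent ℂ fun k => ((b k : ↥(W ^ M)) : L₀) :=
      b.linearIndependent.map' (W ^ M).subtype (Submodule.ker_subtype _)
    have hli' := Fintype.linearIndependent_iff.1 (linearIndependent_ext hx hLx hli)
    funext jk
    rcases jk with j | k
    · exact h1' j
    · ext e
      refine hli' (fun k => (v (Sum.inr k)).coeff e) ?_ k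
      have := congrArg (fun p => Polynomial.coeff p e) h2
      simp only [ψ, φ, Polynomial.finsetSum_coeff, RingHom.comp_apply, Polynomial.coeff_mul_C,
        Polynomial.coe_mapRingHom, Polynomial.coeff_map, Polynomial.coeff_zero] at this
      rw [← this]
      exact Finset.sum_congr rfl fun k _ => Algebra.smul_def _ _)
  refine ⟨Q, hQ, fun c hc a u hu h0 => ?_⟩
  have hv := hQc c hc (Sum.elim a fun k => b.repr ⟨u, hu⟩ k) (by
    have h := secMatrix_sum B w' u' (eval c) (algebraMap ℂ L₀) (RingHom.id L₀)
      (fun a => by simp) (Sum.elim a fun k => b.repr ⟨u, hu⟩ k)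
    have hb : ∑ k, algebraMap ℂ L₀ (b.repr ⟨u, hu⟩ k) * ((b k : ↥(W ^ M)) : L₀) = u := by
      have := congrArg Subtype.val (b.sum_repr ⟨u, hu⟩)
      simp only [Submodule.coe_sum, Submodule.coe_smul, Algebra.smul_def] at this
      exact this
    have hl : ∑ l, algebraMap ℂ L₀ (eval c (X l)) * δ (X l) = δ (∑ l, C (c l) * X l) := by
      rw [map_sum]
      refine Finset.sum_congr rfl fun l _ => ?_
      rw [map_mul, ← MvPolynomial.algebraMap_eq, AlgHom.commutes, eval_X]
    have hr : ∑ k, algebraMap ℂ L₀ (b.repr ⟨u, hu⟩ k) * ∑ l, algebraMap ℂ L₀ (eval c (X l)) *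
        (u' l k : L₀) = δ (∑ l, C (c l) * X l) * u := by
      rw [← hl]
      conv_rhs => rw [← hb]
      rw [Finset.mul_sum]
      refine Finset.sum_congr rfl fun k _ => ?_
      simp only [u', ← mul_assoc, ← Finset.sum_mul]
      ring
    simp only [RingHom.id_apply, Sum.elim_inl, Sum.elim_inr] at h
    rw [hr] at h
    have h0' : ∑ j, algebraMap ℂ L₀ (a j) * (w' j : L₀) + δ (∑ l, C (c l) * X l) * u = 0 := by
      rw [← h0]
      congr 1
      exact Finset.sum_congr rfl fun j _ => (Algebra.smul_def _ _).symm
    rw [h0'] at h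
    have hBli : LinearIndependent ℂ fun k => ((B k : ↥(W ^ (M + 1))) : L₀) :=
      B.linearIndependent.map' (W ^ (M + 1)).subtype (Submodule.ker_subtype _)
    funext k
    refine Fintype.linearIndependent_iff.1 hBli _ ?_ k
    rw [← h]
    exact Finset.sum_congr rfl fun k _ => Algebra.smul_def _ _)
  have ha : a = 0 := funext fun j => congrFun hv (Sum.inl j)
  refine ⟨ha, ?_⟩
  have : b.repr ⟨u, hu⟩ = 0 := by
    ext k
    exact congrFun hv (Sum.inr k)
  exact congrArg Subtype.val ((LinearEquiv.map_eq_zero_iff _).1 this)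

end Transfer

end

/-! ### The general hyperplane section -/

section

open Module MvPolynomial

section Specialization

variable {r : ℕ}

/-- The Hilbert function of a saturated ideal does not decrease. -/
theorem hilbZ_satIdeal_mono {n : ℕ} (J : Ideal (MPoly n)) {a b : ℕ} (hab : a ≤ b) :
    hilbZ (satIdeal J) a ≤ hilbZ (satIdeal J) b := by
  induction b, hab using Nat.le_induction with
  | base => exact le_rfl
  | succ b _ ih =>
    refine ih.trans ?_
    obtain ⟨T, hT, hT', hreg⟩ := exists_finite_regular J
    obtain ⟨y, hy, hyT⟩ := exists_form_avoiding hT hT'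
    have hreg := hreg y hyT
    let f : MPoly n →ₗ[ℂ] MPoly n ⧸ satIdeal J :=
      (Ideal.Quotient.mkₐ ℂ (satIdeal J)).toLinearMap ∘ₗ LinearMap.mulLeft ℂ y
    have hf : ∀ p, f p = Ideal.Quotient.mk (satIdeal J) (y * p) := fun _ => rfl
    rw [← finrank_map_eq_hilb (J := satIdeal J) f b fun p _ => by
        rw [hf, Ideal.Quotient.eq_zero_iff_mem]
        exact ⟨hreg p, Ideal.mul_mem_left _ y⟩,
      ← finrank_map_eq_hilb (J := satIdeal J) (Ideal.Quotient.mkₐ ℂ (satIdeal J)).toLinearMap (b + 1)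
        fun p _ => Ideal.Quotient.eq_zero_iff_mem]
    norm_cast
    refine Submodule.finrank_mono ?_
    rintro _ ⟨p, hp, rfl⟩
    exact ⟨y * p, by rw [add_comm]; exact mul_mem_forms hy hp, rfl⟩

/-- If no nontrivial combination of the `w j` is a multiple of the linear form `ℓ`, then the `w j`
are independent on the section by `ℓ`. -/
theorem Chart.le_hilbZ_sect {IC : Ideal (MPoly (r + 1))} {L₀ : Type*} [Field L₀] [Algebra ℂ L₀]
    {δ : MPoly (r + 1) →ₐ[ℂ] L₀} (h : Chart IC δ) (hI : IsHomogIdeal IC) {n M N : ℕ} (hn : 1 ≤ n)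
    (hnM : n ≤ M) (htilde : tilde ((forms (r + 1) 1).map δ.toLinearMap)
      (fun m => ((forms (r + 1) 1).map δ.toLinearMap) ^ m) M =
        ((forms (r + 1) 1).map δ.toLinearMap) ^ M)
    {w : Fin N → L₀} (hw : ∀ j, w j ∈ ((forms (r + 1) 1).map δ.toLinearMap) ^ n)
    {ℓ : MPoly (r + 1)} (hℓ : ℓ ∈ forms (r + 1) 1)
    (hmul : ∀ a : Fin N → ℂ, ∀ u ∈ ((forms (r + 1) 1).map δ.toLinearMap) ^ M,
        ∑ j, a j • w j + δ ℓ * u = 0 → a = 0 ∧ u = 0) :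
    (N : ℤ) ≤ hilbZ (sect IC ℓ) n := by
  have h1 : (1 : L₀) ∈ (forms (r + 1) 1).map δ.toLinearMap := ⟨X 0, isHomogeneous_X ℂ 0, h.X0⟩
  have hw' : ∀ j, ∃ f ∈ forms (r + 1) n, δ f = w j := by
    intro j
    have := hw j
    rw [map_forms_pow] at this
    exact this
  choose f hf hfw using hw'
  have hℓ0 : δ ℓ ≠ 0 := by
    intro h0
    have := (hmul 0 1 (by
      have := pow_mono_of_one h1 (Nat.zero_le M)
      rw [pow_zero] at this
      exact this (Submodule.one_le.1 le_rfl)) (by simp [h0])).2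
    exact one_ne_zero this
  have hli : ∀ a : Fin N → ℂ, ∑ j, a j • f j ∈ sect IC ℓ → a = 0 := by
    intro a ha
    set g := ∑ j, a j • f j with hg
    have hgf : g ∈ forms (r + 1) n := sum_mem fun j _ => Submodule.smul_mem _ _ (hf j)
    have hδg : δ g = ∑ j, a j • w j := by
      rw [hg, map_sum]
      exact Finset.sum_congr rfl fun j _ => by rw [map_smul, hfw]
    obtain ⟨m₀, hm₀⟩ := exists_forms_mul_mem ha
    have hγ : δ g / δ ℓ ∈ tilde ((forms (r + 1) 1).map δ.toLinearMap)
        (fun m => ((forms (r + 1) 1).map δ.toLinearMap) ^ m) (n - 1) := by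
      refine ⟨m₀, fun m hm x hx => ?_⟩
      simp only [map_forms_pow] at hx ⊢
      obtain ⟨p, hp, rfl⟩ := hx
      have hmem := hm₀ m hm p hp
      have hle : IC ⊔ Ideal.span {ℓ} ≤ IC ⊔ Ideal.span {ℓ, 0} :=
        sup_le_sup_left (Ideal.span_mono (by simp)) _
      have hpg : p * g ∈ forms (r + 1) (n - 1 + m + 1) := by
        have := mul_mem_forms hp hgf
        rwa [show m + n = n - 1 + m + 1 by omega] at this
      obtain ⟨i, hi, q, hq, q', -, e⟩ := hI.exists_of_mem_sup hℓ (zero_mem _) hpg (hle hmem)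
      rw [zero_mul, add_zero] at e
      refine ⟨q, hq, ?_⟩
      have hi0 : δ i = 0 := by
        rw [h.zero_iff (n - 1 + m + 1) i]
        · exact hi
        · rw [eq_sub_of_add_eq e.symm]
          refine sub_mem hpg ?_
          rw [add_comm (n - 1 + m) 1]
          exact mul_mem_forms hℓ hq
      have e' := congrArg δ e
      rw [map_mul, map_add, hi0, zero_add, map_mul] at e'
      simp only [AlgHom.toLinearMap_apply]
      field_simp
      linear_combination -e'
    have hγM := tilde_pow_mono h1 (show n - 1 ≤ M by omega) hγ
    rw [htilde] at hγM
    refine (hmul a (-(δ g / δ ℓ)) (neg_mem hγM) ?_).1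
    rw [← hδg, mul_neg, mul_div_cancel₀ _ hℓ0, add_neg_cancel]
  rw [← finrank_map_eq_hilb (J := sect IC ℓ) (Ideal.Quotient.mkₐ ℂ (sect IC ℓ)).toLinearMap n
    fun p _ => Ideal.Quotient.eq_zero_iff_mem]
  let v : Fin N → ↥((forms (r + 1) n).map (Ideal.Quotient.mkₐ ℂ (sect IC ℓ)).toLinearMap) :=
    fun j => ⟨_, f j, hf j, rfl⟩
  have hv : LinearIndependent ℂ v := by
    rw [Fintype.linearIndependent_iff]
    intro a ha j
    refine congrFun (hli a (Ideal.Quotient.eq_zero_iff_mem.1 ?_)) j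
    have := congrArg Subtype.val ha
    simp only [Submodule.coe_sum, Submodule.coe_smul, v, ZeroMemClass.coe_zero] at this
    rw [map_sum, ← this]
    rfl
  have := hv.fintype_card_le_finrank
  rw [Fintype.card_fin] at this
  exact_mod_cast this

end Specialization

section Final

theorem hF_le_hilbZ_sect_general (r : ℕ) (d s π pa g : ℤ) (hr : 4 ≤ r)
    (hs1 : (r : ℤ) - 1 ≤ s) (hs2 : s ≤ 2 * (r : ℤ) - 4) (hd : s * (s - 1) ≤ d)
    (IC IS : Ideal (MPoly (r + 1)))
    (hcurve : IsCurve IC) (hnd : Nondeg IC) (hinv : CurveInv IC d g)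
    (hsurf : IsSurface IS) (hsinv : SurfInv IS s π pa) (hsub : IS ≤ IC) :
    GenericForms (r + 1) 1 fun L => ∀ i : ℤ, 1 ≤ i → hF r d s π i ≤ hilbZ (sect IC (L 0)) i := by
  have hr' : (4 : ℤ) ≤ r := by exact_mod_cast hr
  have hs : 0 < s := by linarith
  obtain ⟨F₀, L₀, _, _, _, _, δS, δC, y, z, hδ, hy, hz, hG⟩ :=
    exists_geomData hr hs hcurve hnd hinv hsurf hsinv hsub
  let k₀ := FractionRing (MvPolynomial (Fin 2) ℂ)
  let x : Fin 2 → k₀ := fun i => algebraMap (MvPolynomial (Fin 2) ℂ) k₀ (X i)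
  have hx : RatExt ℂ x := ratExt_of_isFractionRing
  obtain ⟨F, _, _, _, _, _, _, hFx⟩ := exists_ratExt (k := ℂ) (σ := Fin 2) (E := F₀) (k₀ := k₀)
  obtain ⟨L, _, _, _, _, _, _, hLx⟩ := exists_ratExt (k := ℂ) (σ := Fin 2) (E := L₀) (k₀ := k₀)
  obtain ⟨i, -, hbd⟩ := generic_bound hG hx hFx hLx hr hs1 hs2 hd
  have eL : ((forms (r + 1) 1).map (δS.prod δC).toLinearMap).map (AlgHom.snd ℂ F₀ L₀).toLinearMap =
      (forms (r + 1) 1).map δC.toLinearMap := by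
    rw [← Submodule.map_comp]; rfl
  rw [eL] at hbd
  have hsat := hG.satL 0
  have h1 := hG.oneL
  rw [eL] at hsat h1
  obtain ⟨n₁, hn₁⟩ := hsat.tilde_eq h1
  have key : ∀ n : ℕ, ∃ Q : MvPolynomial (Fin (r + 1)) ℂ, Q ≠ 0 ∧ (1 ≤ n →
      ∀ c : Fin (r + 1) → ℂ, eval c Q ≠ 0 →
        hF r d s π n ≤ hilbZ (sect IC (∑ l, C (c l) * X l)) n) := by
    intro n
    by_cases hn : 1 ≤ n
    · obtain ⟨N, w, hN, hw, hind⟩ := hbd n hn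
      obtain ⟨Q, hQ, hQc⟩ := exists_generic_no_multiple (M := n + n₁) hδ.X0 hx hLx i (hy i) hz w
        (fun j => pow_mono_of_one h1 (by omega) (hw j)) hind
      refine ⟨Q, hQ, fun _ c hc => hN.trans ?_⟩
      refine hδ.le_hilbZ_sect hcurve.1 hn (M := n + n₁) (by omega) (hn₁ _ (by omega)) hw ?_ (hQc c hc)
      refine sum_mem fun l _ => ?_
      rw [← smul_eq_C_mul]
      exact Submodule.smul_mem _ _ (isHomogeneous_X ℂ l)
    · exact ⟨1, one_ne_zero, fun h => absurd h hn⟩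
  choose Q hQ hQc using key
  have hd0 : 1 ≤ d := by nlinarith
  have hm0 : 0 ≤ (d - 1) / s := Int.ediv_nonneg (by omega) hs.le
  obtain ⟨m, hm⟩ := Int.eq_ofNat_of_zero_le hm0
  refine ⟨rename (fun j => (0, j)) (∏ n ∈ Finset.range (m + 3), Q n), ?_, fun c hc i hi => ?_⟩
  · rw [Ne, map_eq_zero_iff _ (rename_injective _ fun a b h => (Prod.ext_iff.1 h).2)]
    exact Finset.prod_ne_zero_iff.2 fun n _ => hQ n
  · rw [eval_rename, map_prod, Finset.prod_ne_zero_iff] at hc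
    have hc' : ∀ n : ℕ, 1 ≤ n → n ≤ m + 2 →
        hF r d s π n ≤ hilbZ (sect IC (∑ l, C (c 0 l) * X l)) n := fun n h1 h2 =>
      hQc n h1 (c 0) (hc n (Finset.mem_range.2 (by omega)))
    obtain ⟨n, rfl⟩ := Int.eq_ofNat_of_zero_le (by omega : 0 ≤ i)
    by_cases hn : n ≤ m + 2
    · exact hc' n (by omega) hn
    · -- beyond degree `m + 2` the bound is the constant `d`
      have e : ∀ l : ℤ, (m : ℤ) + 2 ≤ l → hF r d s π l = d := by
        intro l hl
        rw [hF, hm, if_neg (by omega), if_neg (by omega), if_pos (by omega)]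
      have h2 := hc' (m + 2) (by omega) le_rfl
      rw [e _ (by push_cast; omega)] at h2 ⊢
      exact h2.trans (hilbZ_satIdeal_mono _ (by omega))

end Final

end

/-- Lemma 3.3.  Let `C ⊆ ℙ^r` be an integral nondegenerate curve of degree
`d ≥ s(s-1)`, with `r ≥ 4` and `r-1 ≤ s ≤ 2r-4`, contained in an integral surface
`S ⊆ ℙ^r` of degree `s` and sectional genus `π`.  Then the Hilbert function of the general
hyperplane section `Γ` of `C` satisfies `h_Γ(i) ≥ h_{r,d,s,π}(i)` for all `i ≥ 1`. -/
theorem statement_11 (r : ℕ) (d s π pa g : ℤ) (hr : 4 ≤ r)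
    (hs1 : (r : ℤ) - 1 ≤ s) (hs2 : s ≤ 2 * (r : ℤ) - 4)
    (hd : s * (s - 1) ≤ d)
    (IC IS : Ideal (MPoly (r + 1)))
    (hcurve : IsCurve IC) (hnd : Nondeg IC) (hinv : CurveInv IC d g)
    (hsurf : IsSurface IS) (hsinv : SurfInv IS s π pa)
    (hsub : IS ≤ IC) :
    GenericForms (r + 1) 1 fun L =>
      ∀ i : ℤ, 1 ≤ i → hF (r : ℤ) d s π i ≤ hilbZ (sect IC (L 0)) i := by
  exact hF_le_hilbZ_sect_general r d s π pa g hr hs1 hs2 hd IC IS hcurve hnd hinv hsurf hsinv hsub
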